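/- arXiv:1610.07680 — 2 statements merged into one kernel-verified Lean document; each statement's English description precedes it below -/
import Mathlib

section
/- Let $R \subseteq \mathbb{Q}$ be finite and let $N, d, t \in \mathbb{N}$ with $N > |R|^d + 3d$. Let $x \in R^N$ be a sequence whose space of $d$-windows $V$ satisfies $\dim(V) = t < d$. Then the restricted sequence $x' = (x(n))_{n=d}^{N-d}$ can be written as $x' = x_1 + \cdots + x_t$ where each $x_i \in \mathbb{C}^{[d, N-d]}$ is periodic with period at most $16 t \log\log(t+3)$. -/
/-
A sequence whose `d`-windows span a space of dimension at most `t < d` satisfies a linear recurrence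
of order at most `t`, with rational coefficients because the values are rational; let `p` be its
characteristic polynomial and `S` the shift. The sequence is long enough for two of its windows of
length `deg p` to coincide, so its infinite continuation `z` is annihilated not only by `p` but also
by some `X ^ i * (X ^ P - 1)`. Hence `S ^ deg p` maps `z` into the kernel of the product of the
cyclotomic polynomials `Φ_m` that divide both `p` and `X ^ P - 1`. That kernel is the sum of the
kernels of the `Φ_m`, which consist of `m`-periodic sequences. Since `∑ φ(m) ≤ deg p ≤ t`, there are
at most `t` summands, and `φ(m) ≤ t` bounds each period `m`: the primes dividing `m` contribute
`O(log log m)` to `m / φ(m)` by Mertens' estimate for `∑ log p / p`.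
-/

section TotientBound

open scoped Nat in
lemma div_le_factorization_factorial {p : ℕ} (hp : p.Prime) (n : ℕ) :
    n / p ≤ (n !).factorization p := by
  calc n / p ≤ ((p * (n / p))!).factorization p := by
        rw [Nat.factorization_factorial_mul hp]
        exact Nat.le_add_left _ _
    _ ≤ (n !).factorization p :=
        (Nat.factorization_le_iff_dvd (Nat.factorial_ne_zero _) (Nat.factorial_ne_zero _)).2
          (Nat.factorial_dvd_factorial (Nat.mul_div_le n p)) p

lemma sum_div_mul_log_le_log_factorial (n : ℕ) :
    ∑ p ∈ Nat.primesLE n, ((n / p : ℕ) : ℝ) * Real.log p ≤ Real.log n.factorial := by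
  have hsupp : n.factorial.factorization.support ⊆ Nat.primesLE n := fun p hp => by
    have hpn := Nat.prime_of_mem_primeFactors hp
    exact Nat.mem_primesLE.2 ⟨hpn.dvd_factorial.1 (Nat.dvd_of_mem_primeFactors hp), hpn⟩
  rw [Real.log_nat_eq_sum_factorization, Finsupp.sum_of_support_subset _ hsupp _ (by simp)]
  refine Finset.sum_le_sum fun p hp => ?_
  gcongr
  exact div_le_factorization_factorial (Nat.mem_primesLE.1 hp).2 n

/-- The upper half of Mertens' first theorem. -/
theorem sum_log_div_primesLE_le (n : ℕ) :
    ∑ p ∈ Nat.primesLE n, Real.log p / p ≤ Real.log n + Real.log 4 := by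
  rcases n.eq_zero_or_pos with rfl | hn
  · simp [Real.log_nonneg]
  have hterm (p : ℕ) : n * (Real.log p / p) ≤ ((n / p : ℕ) : ℝ) * Real.log p + Real.log p := by
    have hfloor : (n : ℝ) / p ≤ ((n / p : ℕ) : ℝ) + 1 := by
      simpa only [Nat.floor_div_eq_div] using (Nat.lt_floor_add_one ((n : ℝ) / p)).le
    calc n * (Real.log p / p) = n / p * Real.log p := by ring
      _ ≤ (((n / p : ℕ) : ℝ) + 1) * Real.log p := by gcongr
      _ = _ := by ring
  have htheta : ∑ p ∈ Nat.primesLE n, Real.log p ≤ Real.log 4 * n := by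
    rw [← Chebyshev.theta_eq_sum_primesLE_log]
    exact Chebyshev.theta_le_log4_mul_x n.cast_nonneg
  have hfactorial : Real.log n.factorial ≤ n * Real.log n := by
    rw [← Real.log_pow]
    exact Real.log_le_log (by positivity) (mod_cast Nat.factorial_le_pow n)
  refine le_of_mul_le_mul_left ?_ (Nat.cast_pos.2 hn : (0 : ℝ) < n)
  calc n * ∑ p ∈ Nat.primesLE n, Real.log p / p
      ≤ ∑ p ∈ Nat.primesLE n, (((n / p : ℕ) : ℝ) * Real.log p + Real.log p) := by
        rw [Finset.mul_sum]
        exact Finset.sum_le_sum fun p _ => hterm p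
    _ ≤ n * (Real.log n + Real.log 4) := by
        rw [Finset.sum_add_distrib]
        linarith [sum_div_mul_log_le_log_factorial n]

lemma tsum_nat_rpow_neg_le {s : ℝ} (hs : 1 < s) : ∑' n : ℕ, (n : ℝ) ^ (-s) ≤ 1 + 1 / (s - 1) := by
  have hsum : Summable fun n : ℕ => (n : ℝ) ^ (-s) := Real.summable_nat_rpow.2 (by linarith)
  have hshift : ∑' n : ℕ, (n : ℝ) ^ (-s) = ∑' n : ℕ, 1 / ((n : ℝ) + 1) ^ s := by
    rw [hsum.tsum_eq_zero_add, Nat.cast_zero, Real.zero_rpow (by linarith), zero_add]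
    refine tsum_congr fun n => ?_
    rw [Real.rpow_neg (by positivity), one_div, Nat.cast_succ]
  have hnonneg : 0 ≤ s * ZetaAsymptotics.termTSum s :=
    mul_nonneg (by linarith) (tsum_nonneg fun n => ZetaAsymptotics.term_nonneg _ _)
  linarith [ZetaAsymptotics.zeta_limit_aux1 hs]

lemma prod_one_sub_rpow_neg_inv_le {P : Finset ℕ} (hP : ∀ p ∈ P, p.Prime) {s : ℝ} (hs : 1 < s) :
    ∏ p ∈ P, (1 - (p : ℝ) ^ (-s))⁻¹ ≤ 1 + 1 / (s - 1) := by
  let f : ℕ →* ℝ :=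
    { toFun n := (n : ℝ) ^ (-s)
      map_one' := by simp
      map_mul' a b := by rw [Nat.cast_mul, Real.mul_rpow a.cast_nonneg b.cast_nonneg] }
  have hsum : Summable f := Real.summable_nat_rpow.2 (by linarith)
  calc ∏ p ∈ P, (1 - (p : ℝ) ^ (-s))⁻¹ = ∑' m : Nat.factoredNumbers P, f m := by
        rw [← EulerProduct.prod_filter_prime_geometric_eq_tsum_factoredNumbers hsum P,
          Finset.filter_true_of_mem hP]
        rfl
    _ ≤ ∑' n, f n := hsum.tsum_subtype_le f _ fun n => Real.rpow_nonneg n.cast_nonneg _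
    _ ≤ 1 + 1 / (s - 1) := tsum_nat_rpow_neg_le hs

lemma one_sub_inv_inv_le_mul_exp {x δ : ℝ} (hx : 1 < x) (hδ : 0 ≤ δ) :
    (1 - x⁻¹)⁻¹ ≤ (1 - x ^ (-(1 + δ)))⁻¹ * Real.exp (δ * (Real.log x / (x - 1))) := by
  have hx0 : 0 < x := by linarith
  have hx1 : 0 < x - 1 := by linarith
  have hpos : 0 < 1 - x ^ (-(1 + δ)) :=
    sub_pos.2 (Real.rpow_lt_one_of_one_lt_of_neg hx (by linarith))
  have hrpow : x ^ (-(1 + δ)) = x⁻¹ * Real.exp (-(δ * Real.log x)) := by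
    rw [neg_add, Real.rpow_add hx0, Real.rpow_neg_one, Real.rpow_def_of_pos hx0]
    congr 2
    ring
  rw [inv_mul_eq_div, le_div_iff₀ hpos]
  calc (1 - x⁻¹)⁻¹ * (1 - x ^ (-(1 + δ))) = (x - Real.exp (-(δ * Real.log x))) / (x - 1) := by
        rw [hrpow]
        field_simp
    _ ≤ (δ * Real.log x + (x - 1)) / (x - 1) := by
        gcongr
        linarith [Real.add_one_le_exp (-(δ * Real.log x))]
    _ = δ * (Real.log x / (x - 1)) + 1 := by field_simp
    _ ≤ Real.exp (δ * (Real.log x / (x - 1))) := Real.add_one_le_exp _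

-- Rankin's trick: compare with the Euler product at `1 + δ`, the optimal choice being `δ = A⁻¹`.
lemma prod_one_sub_inv_inv_le {P : Finset ℕ} (hP : ∀ p ∈ P, p.Prime) {A : ℝ} (hA : 0 < A)
    (hPA : ∑ p ∈ P, Real.log p / ((p : ℝ) - 1) ≤ A) :
    ∏ p ∈ P, (1 - (p : ℝ)⁻¹)⁻¹ ≤ (1 + A) * Real.exp 1 := by
  have hone {p : ℕ} (hp : p ∈ P) : (1 : ℝ) < p := mod_cast (hP p hp).one_lt
  have hδ : 0 < A⁻¹ := inv_pos.2 hA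
  calc ∏ p ∈ P, (1 - (p : ℝ)⁻¹)⁻¹
      ≤ ∏ p ∈ P, ((1 - (p : ℝ) ^ (-(1 + A⁻¹)))⁻¹ *
          Real.exp (A⁻¹ * (Real.log p / ((p : ℝ) - 1)))) :=
        Finset.prod_le_prod
          (fun p hp => inv_nonneg.2 (sub_nonneg.2 (inv_le_one_of_one_le₀ (hone hp).le)))
          fun p hp => one_sub_inv_inv_le_mul_exp (hone hp) hδ.le
    _ = (∏ p ∈ P, (1 - (p : ℝ) ^ (-(1 + A⁻¹)))⁻¹) *
          Real.exp (A⁻¹ * ∑ p ∈ P, Real.log p / ((p : ℝ) - 1)) := by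
        rw [Finset.prod_mul_distrib, ← Real.exp_sum, Finset.mul_sum]
    _ ≤ (1 + A) * Real.exp 1 := by
        gcongr
        · simpa using prod_one_sub_rpow_neg_inv_le hP (lt_add_of_pos_right 1 hδ)
        · rwa [inv_mul_le_iff₀ hA, mul_one]

lemma sum_log_primeFactors_le_log (m : ℕ) : ∑ p ∈ m.primeFactors, Real.log p ≤ Real.log m := by
  rw [Real.log_nat_eq_sum_factorization, Finsupp.sum, Nat.support_factorization]
  refine Finset.sum_le_sum fun p hp => ?_
  have hpos : 0 < m.factorization p := Nat.pos_of_ne_zero (Finsupp.mem_support_iff.1 hp)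
  exact le_mul_of_one_le_left (Real.log_natCast_nonneg p) (mod_cast hpos)

lemma sum_primeFactors_log_div_sub_one_le (m : ℕ) {n : ℕ} (hn : n ≠ 0) :
    ∑ p ∈ m.primeFactors, Real.log p / ((p : ℝ) - 1) ≤
      2 * (Real.log n + Real.log 4) + Real.log m / n := by
  have htwo {p : ℕ} (hp : p ∈ m.primeFactors) : (2 : ℝ) ≤ p :=
    mod_cast (Nat.prime_of_mem_primeFactors hp).two_le
  have hlog (p : ℕ) : 0 ≤ Real.log p := Real.log_natCast_nonneg p
  have hsmall : ∑ p ∈ m.primeFactors with p ≤ n, Real.log p / ((p : ℝ) - 1) ≤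
      2 * (Real.log n + Real.log 4) := by
    calc _ ≤ ∑ p ∈ m.primeFactors with p ≤ n, 2 * (Real.log p / p) := by
          refine Finset.sum_le_sum fun p hp => ?_
          have hp2 := htwo (Finset.mem_filter.1 hp).1
          rw [← mul_div_assoc, div_le_div_iff₀ (by linarith) (by linarith)]
          nlinarith [hlog p]
      _ ≤ ∑ p ∈ Nat.primesLE n, 2 * (Real.log p / p) := by
          refine Finset.sum_le_sum_of_subset_of_nonneg (fun p hp => ?_) fun p _ _ => by positivity
          obtain ⟨hpm, hpn⟩ := Finset.mem_filter.1 hp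
          exact Nat.mem_primesLE.2 ⟨hpn, Nat.prime_of_mem_primeFactors hpm⟩
      _ ≤ _ := by
          rw [← Finset.mul_sum]
          gcongr
          exact sum_log_div_primesLE_le n
  have hlarge : ∑ p ∈ m.primeFactors with ¬ p ≤ n, Real.log p / ((p : ℝ) - 1) ≤
      Real.log m / n := by
    have : (0 : ℝ) < n := mod_cast Nat.pos_of_ne_zero hn
    calc _ ≤ ∑ p ∈ m.primeFactors with ¬ p ≤ n, Real.log p / n := by
          refine Finset.sum_le_sum fun p hp => ?_
          have hnp : (n : ℝ) + 1 ≤ p := mod_cast not_le.1 (Finset.mem_filter.1 hp).2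
          gcongr
          linarith
      _ ≤ ∑ p ∈ m.primeFactors, Real.log p / n :=
          Finset.sum_le_sum_of_subset_of_nonneg (Finset.filter_subset _ _) fun p _ _ => by
            positivity
      _ ≤ Real.log m / n := by
          rw [← Finset.sum_div]
          gcongr
          exact sum_log_primeFactors_le_log m
  rw [← Finset.sum_filter_add_sum_filter_not _ (· ≤ n)]
  exact add_le_add hsmall hlarge

lemma natCast_eq_totient_mul_prod (m : ℕ) :
    (m : ℝ) = m.totient * ∏ p ∈ m.primeFactors, (1 - (p : ℝ)⁻¹)⁻¹ := by
  have htotient : (m.totient : ℝ) = m * ∏ p ∈ m.primeFactors, (1 - (p : ℝ)⁻¹) := by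
    simpa using congrArg (Rat.cast : ℚ → ℝ) (Nat.totient_eq_mul_prod_factors m)
  have hne : ∏ p ∈ m.primeFactors, (1 - (p : ℝ)⁻¹) ≠ 0 := Finset.prod_ne_zero_iff.2 fun p hp =>
    (sub_pos.2 (inv_lt_one_of_one_lt₀
      (mod_cast (Nat.prime_of_mem_primeFactors hp).one_lt))).ne'
  rw [htotient, Finset.prod_inv_distrib, mul_inv_cancel_right₀ hne]

theorem natCast_le_totient_mul_log_log (m : ℕ) :
    (m : ℝ) ≤ m.totient *
      (Real.exp 1 * (2 * Real.log (Real.log m + 1) + 4 * Real.log 2 + 2)) := by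
  have hlogm : 0 ≤ Real.log m := Real.log_natCast_nonneg m
  set n := ⌊Real.log m⌋₊ + 1 with hn
  have hn1 : (1 : ℝ) ≤ n := mod_cast Nat.le_add_left 1 _
  have hle : (n : ℝ) ≤ Real.log m + 1 := by
    rw [hn, Nat.cast_succ]
    gcongr
    exact Nat.floor_le hlogm
  have hsum : ∑ p ∈ m.primeFactors, Real.log p / ((p : ℝ) - 1) ≤
      2 * (Real.log n + Real.log 4) + 1 := by
    refine (sum_primeFactors_log_div_sub_one_le m (n := n) (Nat.succ_ne_zero _)).trans ?_
    gcongr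
    exact (div_le_one (zero_lt_one.trans_le hn1)).2
      (by simpa [hn] using (Nat.lt_floor_add_one (Real.log m)).le)
  have hlog4 : Real.log 4 = 2 * Real.log 2 := by
    rw [show (4 : ℝ) = 2 ^ 2 by norm_num, Real.log_pow, Nat.cast_ofNat]
  have hlog : Real.log n ≤ Real.log (Real.log m + 1) := Real.log_le_log (by linarith) hle
  have hA : 0 < 2 * Real.log (Real.log m + 1) + 4 * Real.log 2 + 1 := by
    have := Real.log_nonneg (x := Real.log m + 1) (by linarith)
    positivity
  have hprod := prod_one_sub_inv_inv_le (fun p hp => Nat.prime_of_mem_primeFactors hp)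
    hA (hsum.trans (by linarith))
  conv_lhs => rw [natCast_eq_totient_mul_prod m]
  gcongr
  linarith

lemma le_totient_sq_of_odd {m : ℕ} (hm : Odd m) : m ≤ m.totient ^ 2 := by
  induction m using Nat.recOnPosPrimePosCoprime with
  | zero => simp
  | one => simp
  | prime_pow p n hp hn =>
    obtain ⟨k, rfl⟩ := Nat.exists_eq_add_of_lt hn
    have hp3 : 3 ≤ p := by
      have hodd : Odd p := (Nat.odd_pow_iff (by omega)).1 hm
      have := hp.two_le
      grind
    obtain ⟨q, rfl⟩ := Nat.exists_eq_add_of_le' hp.one_le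
    rw [zero_add, Nat.totient_prime_pow_succ hp, pow_succ, mul_pow, Nat.add_sub_cancel]
    exact Nat.mul_le_mul (Nat.le_self_pow two_ne_zero _) (by nlinarith)
  | coprime a b _ _ hab iha ihb =>
    rw [Nat.odd_mul] at hm
    rw [Nat.totient_mul hab, mul_pow]
    exact Nat.mul_le_mul (iha hm.1) (ihb hm.2)

lemma le_two_mul_totient_sq (m : ℕ) : m ≤ 2 * m.totient ^ 2 := by
  rcases eq_or_ne m 0 with rfl | hm
  · simp
  obtain ⟨k, o, ho, rfl⟩ := Nat.exists_eq_two_pow_mul_odd hm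
  have htwo : 2 ^ k ≤ 2 * (2 ^ k).totient ^ 2 := by
    rcases k with _ | k
    · simp
    · rw [Nat.totient_prime_pow_succ Nat.prime_two, pow_succ']
      simpa using Nat.le_self_pow two_ne_zero (2 ^ k)
  rw [Nat.totient_mul (Nat.Coprime.pow_left k ho.coprime_two_left), mul_pow, ← mul_assoc]
  exact Nat.mul_le_mul htwo (le_totient_sq_of_odd ho)

lemma exp_one_mul_log_le_sixteen_mul_logb {u : ℝ} (hu : 3 ≤ u) :
    Real.exp 1 * (2 * Real.log (2 * u) + 4 * Real.log 2 + 2) ≤ 16 * Real.logb 2 u := by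
  have hlogu : 1 ≤ Real.log u := by
    rw [Real.le_log_iff_exp_le (by linarith)]
    linarith [Real.exp_one_lt_d9]
  have hlogb : 1.44 * Real.log u ≤ Real.logb 2 u := by
    rw [Real.logb, le_div_iff₀ (Real.log_pos one_lt_two)]
    nlinarith [Real.log_two_lt_d9]
  calc Real.exp 1 * (2 * Real.log (2 * u) + 4 * Real.log 2 + 2)
      = Real.exp 1 * (2 * Real.log u + 6 * Real.log 2 + 2) := by
        rw [Real.log_mul two_ne_zero (by linarith)]
        ring
    _ ≤ 2.72 * (2 * Real.log u + 6 * 0.6932 + 2) := by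
        have := Real.log_pos one_lt_two
        gcongr <;> linarith [Real.exp_one_lt_d9, Real.log_two_lt_d9]
    _ ≤ 16 * (1.44 * Real.log u) := by linarith
    _ ≤ 16 * Real.logb 2 u := by gcongr

theorem le_sixteen_mul_logb_logb_of_totient_le {m t : ℕ} (hm : m ≠ 0) (hmt : m.totient ≤ t) :
    (m : ℝ) ≤ 16 * t * Real.logb 2 (Real.logb 2 (t + 3)) := by
  have ht : (1 : ℝ) ≤ t := mod_cast (Nat.totient_pos.2 (Nat.pos_of_ne_zero hm)).trans_le hmt
  have hsq : (m : ℝ) ≤ 2 * t ^ 2 :=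
    mod_cast (le_two_mul_totient_sq m).trans (by gcongr)
  set u := Real.logb 2 (t + 3)
  rcases le_or_gt t 4 with ht4 | ht4
  · have hu2 : 2 ≤ u :=
      (Real.le_logb_iff_rpow_le one_lt_two (by linarith)).2 (by norm_num; linarith)
    have hlogb : 1 ≤ Real.logb 2 u :=
      (Real.le_logb_iff_rpow_le one_lt_two (by linarith)).2 (by simpa using hu2)
    have ht4' : (t : ℝ) ≤ 4 := mod_cast ht4
    nlinarith
  · have ht5 : (5 : ℝ) ≤ t := mod_cast ht4
    have hu3 : 3 ≤ u :=
      (Real.le_logb_iff_rpow_le one_lt_two (by linarith)).2 (by norm_num; linarith)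
    have hlogt : Real.log (t + 3) = u * Real.log 2 :=
      (div_mul_cancel₀ _ (Real.log_pos one_lt_two).ne').symm
    have hlogm : Real.log m + 1 ≤ 2 * u := by
      have : (0 : ℝ) < m := mod_cast Nat.pos_of_ne_zero hm
      calc Real.log m + 1 ≤ Real.log (2 * (t + 3) ^ 2) + 1 := by
            gcongr
            nlinarith
        _ = Real.log 2 + 2 * (u * Real.log 2) + 1 := by
            rw [Real.log_mul two_ne_zero (by positivity), Real.log_pow, hlogt, Nat.cast_ofNat]
        _ ≤ 2 * u := by nlinarith [Real.log_two_lt_d9]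
    have hlogm0 := Real.log_natCast_nonneg m
    calc (m : ℝ) ≤ m.totient *
          (Real.exp 1 * (2 * Real.log (Real.log m + 1) + 4 * Real.log 2 + 2)) :=
          natCast_le_totient_mul_log_log m
      _ ≤ t * (Real.exp 1 * (2 * Real.log (2 * u) + 4 * Real.log 2 + 2)) := by
          have := Real.log_nonneg (x := Real.log m + 1) (by linarith)
          gcongr
      _ ≤ t * (16 * Real.logb 2 u) :=
          mul_le_mul_of_nonneg_left (exp_one_mul_log_le_sixteen_mul_logb hu3) (by positivity)
      _ = 16 * t * Real.logb 2 u := by ring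

end TotientBound

section ShiftPolynomials

open Polynomial

variable {F : Type*}

lemma aeval_apply_eq_zero_of_dvd {A M : Type*} [CommSemiring A] [AddCommMonoid M] [Module A M]
    {f : Module.End A M} {p q : A[X]} (hpq : p ∣ q) {z : M} (hz : aeval f p z = 0) :
    aeval f q z = 0 := by
  obtain ⟨r, rfl⟩ := hpq
  rw [mul_comm, map_mul, Module.End.mul_apply, hz, map_zero]

/-- The shift `u ↦ (n ↦ u (n + 1))` on sequences. A polynomial `p` acts on sequences through
`aeval (seqShift F) p`, and the sequences it annihilates are the solutions of the linear recurrence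
with characteristic polynomial `p`. -/
def seqShift (F : Type*) [CommSemiring F] : Module.End F (ℕ → F) :=
  LinearMap.funLeft F F (· + 1)

lemma seqShift_pow_apply [CommSemiring F] (k : ℕ) (u : ℕ → F) (n : ℕ) :
    (seqShift F ^ k) u n = u (n + k) := by
  induction k generalizing n with
  | zero => simp
  | succ k ih =>
    rw [pow_succ', Module.End.mul_apply, seqShift, LinearMap.funLeft_apply, ← seqShift, ih]
    congr 1
    ring

lemma aeval_seqShift_apply [CommSemiring F] (p : F[X]) (u : ℕ → F) (n : ℕ) :
    aeval (seqShift F) p u n = ∑ j ∈ Finset.range (p.natDegree + 1), p.coeff j * u (n + j) := by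
  simp only [aeval_eq_sum_range, LinearMap.sum_apply, LinearMap.smul_apply, Finset.sum_apply,
    Pi.smul_apply, seqShift_pow_apply, smul_eq_mul]

/-- The linear recurrence of order `p.natDegree` with characteristic polynomial `p`, normalised to
be monic. -/
noncomputable def polynomialRecurrence [Field F] (p : F[X]) : LinearRecurrence F where
  order := p.natDegree
  coeffs i := -(p.coeff i / p.leadingCoeff)

variable [Field F] {p : F[X]}

lemma aeval_seqShift_apply_eq_zero_iff (hp : p ≠ 0) {u : ℕ → F} {n : ℕ} :
    aeval (seqShift F) p u n = 0 ↔
      u (n + p.natDegree) = ∑ i, (polynomialRecurrence p).coeffs i * u (n + i) := by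
  have hlead : p.leadingCoeff ≠ 0 := leadingCoeff_ne_zero.2 hp
  have hsum : ∑ i, (polynomialRecurrence p).coeffs i * u (n + i) =
      -(∑ j ∈ Finset.range p.natDegree, p.coeff j * u (n + j)) / p.leadingCoeff := by
    rw [Finset.sum_range, ← Finset.sum_neg_distrib, Finset.sum_div]
    refine Finset.sum_congr rfl fun i _ => ?_
    simp only [polynomialRecurrence]
    ring
  rw [aeval_seqShift_apply, Finset.sum_range_succ, coeff_natDegree, hsum, eq_div_iff hlead,
    mul_comm (u _), eq_neg_iff_add_eq_zero, add_comm]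

lemma isSolution_polynomialRecurrence_iff (hp : p ≠ 0) {u : ℕ → F} :
    (polynomialRecurrence p).IsSolution u ↔ aeval (seqShift F) p u = 0 := by
  simp only [LinearRecurrence.IsSolution, funext_iff, Pi.zero_apply,
    aeval_seqShift_apply_eq_zero_iff hp]
  rfl

lemma eq_of_aeval_seqShift_eq_zero (hp : p ≠ 0) {u v : ℕ → F}
    (hu : aeval (seqShift F) p u = 0) (hv : aeval (seqShift F) p v = 0)
    (h : ∀ n < p.natDegree, u n = v n) : u = v :=
  ((polynomialRecurrence p).eq_iff_eqOn_range_order u v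
    ((isSolution_polynomialRecurrence_iff hp).2 hu)
    ((isSolution_polynomialRecurrence_iff hp).2 hv)).2
    fun n hn => h n (Finset.mem_range.1 (Finset.mem_coe.1 hn))

lemma exists_aeval_seqShift_eq_zero_extending (hp : p ≠ 0) {u : ℕ → F} {M : ℕ}
    (hu : ∀ n < M, aeval (seqShift F) p u n = 0) :
    ∃ z : ℕ → F, aeval (seqShift F) p z = 0 ∧ ∀ n < M + p.natDegree, z n = u n := by
  let E := polynomialRecurrence p
  have hz : aeval (seqShift F) p (E.mkSol fun i => u i) = 0 :=
    (isSolution_polynomialRecurrence_iff hp).1 (E.is_sol_mkSol _)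
  refine ⟨_, hz, fun n => ?_⟩
  induction n using Nat.strong_induction_on with
  | _ n ih =>
    intro hn
    rcases lt_or_ge n p.natDegree with hlt | hge
    · exact E.mkSol_eq_init _ ⟨n, hlt⟩
    obtain ⟨r, rfl⟩ := Nat.exists_eq_add_of_le' hge
    rw [(aeval_seqShift_apply_eq_zero_iff hp).1 (congrFun hz r),
      (aeval_seqShift_apply_eq_zero_iff hp).1 (hu r (by omega))]
    refine Finset.sum_congr rfl fun i _ => ?_
    have hi : (i : ℕ) < p.natDegree := i.2
    rw [ih (r + i) (by omega) (by omega)]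

end ShiftPolynomials

section FinitelyManyValues

open Polynomial

lemma exists_lt_forall_add_eq_of_mem_finset {α : Type*} {z : ℕ → α} {R : Finset α} {k : ℕ}
    (hz : ∀ n < R.card ^ k + k, z n ∈ R) :
    ∃ i j, i < j ∧ ∀ l < k, z (i + l) = z (j + l) := by
  let window : Fin (R.card ^ k + 1) → Fin k → R := fun i l => ⟨z (i + l), hz _ (by omega)⟩
  have hcard : Fintype.card (Fin k → R) < Fintype.card (Fin (R.card ^ k + 1)) := by simp
  obtain ⟨i, j, hne, heq⟩ := Fintype.exists_ne_map_eq_of_card_lt window hcard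
  have hij : ∀ l < k, z (i + l) = z (j + l) := fun l hl =>
    congrArg Subtype.val (congrFun heq ⟨l, hl⟩)
  rcases lt_or_gt_of_ne hne with h | h
  · exact ⟨i, j, h, hij⟩
  · exact ⟨j, i, h, fun l hl => (hij l hl).symm⟩

lemma exists_aeval_X_pow_mul_X_pow_sub_one_eq_zero {F : Type*} [Field F] {p : F[X]} (hp : p ≠ 0)
    {z : ℕ → F} (hz : aeval (seqShift F) p z = 0) {R : Finset F}
    (hR : ∀ n < R.card ^ p.natDegree + p.natDegree, z n ∈ R) :
    ∃ i P : ℕ, 0 < P ∧ aeval (seqShift F) (X ^ i * (X ^ P - 1) : F[X]) z = 0 := by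
  obtain ⟨i, j, hij, heq⟩ := exists_lt_forall_add_eq_of_mem_finset hR
  have hshift (k : ℕ) : aeval (seqShift F) p ((seqShift F ^ k) z) = 0 := by
    simpa only [map_mul, aeval_X_pow, Module.End.mul_apply] using
      aeval_apply_eq_zero_of_dvd (dvd_mul_right p (X ^ k)) hz
  have hshifts : (seqShift F ^ i) z = (seqShift F ^ j) z :=
    eq_of_aeval_seqShift_eq_zero hp (hshift i) (hshift j) fun n hn => by
      rw [seqShift_pow_apply, seqShift_pow_apply, add_comm n, add_comm n, heq n hn]
  refine ⟨i, j - i, Nat.sub_pos_of_lt hij, ?_⟩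
  rw [mul_sub, ← pow_add, Nat.add_sub_cancel' hij.le, mul_one, map_sub, LinearMap.sub_apply,
    aeval_X_pow, aeval_X_pow, hshifts, sub_self]

end FinitelyManyValues

section CyclotomicFactors

open Polynomial

lemma prod_cyclotomic_dvd {p : ℚ[X]} {D : Finset ℕ} (hD : ∀ m ∈ D, cyclotomic m ℚ ∣ p) :
    ∏ m ∈ D, cyclotomic m ℚ ∣ p :=
  Finset.prod_dvd_of_coprime (fun _ _ _ _ hne => cyclotomic.isCoprime_rat hne) hD

lemma sum_totient_le_natDegree {p : ℚ[X]} (hp : p ≠ 0) {D : Finset ℕ}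
    (hD : ∀ m ∈ D, cyclotomic m ℚ ∣ p) : ∑ m ∈ D, m.totient ≤ p.natDegree := by
  simpa only [natDegree_prod _ _ fun m _ => cyclotomic_ne_zero m ℚ, natDegree_cyclotomic] using
    natDegree_le_of_dvd (prod_cyclotomic_dvd hD) hp

lemma exists_X_pow_mul_prod_cyclotomic_mem_span {p : ℚ[X]} (hp : p ≠ 0) (i : ℕ) {P : ℕ}
    (hP : 0 < P) :
    ∃ D : Finset ℕ, (∀ m ∈ D, m ≠ 0 ∧ cyclotomic m ℚ ∣ p) ∧
      X ^ p.natDegree * ∏ m ∈ D, cyclotomic m ℚ ∈ Ideal.span {p, X ^ i * (X ^ P - 1)} := by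
  classical
  set A := ∏ m ∈ P.divisors with cyclotomic m ℚ ∣ p, cyclotomic m ℚ
  set B := ∏ m ∈ P.divisors with ¬ cyclotomic m ℚ ∣ p, cyclotomic m ℚ
  have hAB : A * B = X ^ P - 1 := by
    rw [Finset.prod_filter_mul_prod_filter_not, prod_cyclotomic_eq_X_pow_sub_one hP]
  obtain ⟨a, q, hXq, hpq⟩ := WfDvdMonoid.max_power_factor hp irreducible_X
  have hXcop : IsCoprime q (X ^ i) :=
    ((irreducible_X.coprime_iff_not_dvd.2 hXq).symm).pow_right
  have hBcop : IsCoprime q B := IsCoprime.prod_right fun m hm => by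
    obtain ⟨hmP, hmp⟩ := Finset.mem_filter.1 hm
    refine ((cyclotomic.irreducible_rat (Nat.pos_of_mem_divisors hmP)).coprime_iff_not_dvd.2
      fun hmq => hmp ?_).symm
    exact hpq ▸ hmq.mul_left _
  have ha : a ≤ p.natDegree := by
    simpa only [natDegree_X_pow] using natDegree_le_of_dvd ⟨q, hpq⟩ hp
  obtain ⟨u, v, huv⟩ := hXcop.mul_right hBcop
  obtain ⟨b, hb⟩ := Nat.exists_eq_add_of_le' ha
  -- Multiply Bézout's identity for `q` and `X ^ i * B` by `X ^ p.natDegree * A`.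
  refine ⟨{m ∈ P.divisors | cyclotomic m ℚ ∣ p}, fun m hm => ?_,
    Ideal.mem_span_pair.2 ⟨X ^ b * A * u, X ^ b * X ^ a * v, ?_⟩⟩
  · obtain ⟨hmP, hmp⟩ := Finset.mem_filter.1 hm
    exact ⟨(Nat.pos_of_mem_divisors hmP).ne', hmp⟩
  change _ = X ^ p.natDegree * A
  rw [hb, pow_add, ← hAB]
  linear_combination X ^ b * X ^ a * A * huv + X ^ b * A * u * hpq

end CyclotomicFactors

section PeriodicDecomposition

open Polynomial

lemma exists_sum_of_aeval_prod_eq_zero {ι A M : Type*} [CommRing A] [AddCommGroup M] [Module A M]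
    (f : Module.End A M) {q : ι → A[X]} {D : Finset ι}
    (hq : (D : Set ι).Pairwise (Function.onFun IsCoprime q)) {z : M}
    (hz : aeval f (∏ i ∈ D, q i) z = 0) :
    ∃ y : ι → M, (∀ i ∈ D, aeval f (q i) (y i) = 0) ∧ z = ∑ i ∈ D, y i := by
  classical
  induction D using Finset.induction_on generalizing z with
  | empty => exact ⟨0, by simp, by simpa using hz⟩
  | insert a D ha ih =>
    have hcop : IsCoprime (q a) (∏ i ∈ D, q i) := IsCoprime.prod_right fun i hi =>
      hq (by simp) (by simp [hi]) (ne_of_mem_of_not_mem hi ha).symm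
    rw [Finset.prod_insert ha, ← LinearMap.mem_ker,
      ← sup_ker_aeval_eq_ker_aeval_mul_of_coprime f hcop, Submodule.mem_sup] at hz
    obtain ⟨u, hu, v, hv, rfl⟩ := hz
    obtain ⟨y, hy, rfl⟩ := ih (hq.mono (by simp)) hv
    have hne {i} (hi : i ∈ D) : i ≠ a := ne_of_mem_of_not_mem hi ha
    refine ⟨Function.update y a u, (Finset.forall_mem_insert _ _ _).2 ⟨?_, fun i hi => ?_⟩, ?_⟩
    · rwa [Function.update_self]
    · rw [Function.update_of_ne (hne hi)]
      exact hy i hi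
    · rw [Finset.sum_insert ha, Function.update_self]
      congr 1
      exact Finset.sum_congr rfl fun i hi => (Function.update_of_ne (hne hi) _ _).symm

lemma periodic_of_aeval_cyclotomic_eq_zero {F : Type*} [CommRing F] {m : ℕ} {u : ℕ → F}
    (hu : aeval (seqShift F) (cyclotomic m F) u = 0) : Function.Periodic u m := by
  have h := aeval_apply_eq_zero_of_dvd (cyclotomic.dvd_X_pow_sub_one m F) hu
  intro n
  simpa only [map_sub, aeval_X_pow, map_one, LinearMap.sub_apply, Module.End.one_apply,
    Pi.sub_apply, seqShift_pow_apply, Pi.zero_apply, sub_eq_zero] using congrFun h n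

lemma exists_fin_sum_eq_sum {ι M : Type*} [AddCommMonoid M] {D : Finset ι} {t : ℕ}
    (hD : D.card ≤ t) (f : ι → M) :
    ∃ g : Fin t → M, (∀ i, g i = 0 ∨ ∃ m ∈ D, g i = f m) ∧ ∑ i, g i = ∑ m ∈ D, f m := by
  obtain ⟨e⟩ : Nonempty (D ↪ Fin t) := Function.Embedding.nonempty_of_card_le (by simpa using hD)
  refine ⟨Function.extend e (fun m => f m) 0, fun i => ?_, ?_⟩
  · by_cases hi : ∃ m, e m = i
    · obtain ⟨m, rfl⟩ := hi
      exact .inr ⟨m, m.2, e.injective.extend_apply _ _ _⟩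
    · exact .inl (Function.extend_apply' _ _ _ hi)
  · rw [← Finset.sum_coe_sort D]
    exact (Fintype.sum_of_injective e e.injective (fun m : D => f m)
      (Function.extend e (fun m => f m) 0) (fun i hi => Function.extend_apply' _ _ _ hi)
      fun m => (e.injective.extend_apply (fun m : D => f m) 0 m).symm).symm

lemma exists_fin_periodic_sum_eq {p : ℚ[X]} (hp : p ≠ 0) {t : ℕ} (hpt : p.natDegree ≤ t)
    {D : Finset ℕ} {y : ℕ → ℕ → ℚ}
    (hD : ∀ m ∈ D, m ≠ 0 ∧ cyclotomic m ℚ ∣ p ∧ Function.Periodic (y m) m) :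
    ∃ w : Fin t → ℕ → ℚ, (∀ i, ∃ q, q ≠ 0 ∧ q.totient ≤ t ∧ Function.Periodic (w i) q) ∧
      ∑ i, w i = ∑ m ∈ D, y m := by
  have hsum : ∑ m ∈ D, m.totient ≤ t :=
    (sum_totient_le_natDegree hp fun m hm => (hD m hm).2.1).trans hpt
  have hcard : D.card ≤ t := by
    rw [Finset.card_eq_sum_ones]
    refine (Finset.sum_le_sum fun m hm => ?_).trans hsum
    exact Nat.totient_pos.2 (Nat.pos_of_ne_zero (hD m hm).1)
  obtain ⟨w, hw, hwy⟩ := exists_fin_sum_eq_sum hcard y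
  refine ⟨w, fun i => ?_, hwy⟩
  rcases hw i with h0 | ⟨m, hm, hwm⟩
  · exact ⟨1, one_ne_zero, by rw [Nat.totient_one]; exact Fin.pos i, fun n => by rw [h0]; rfl⟩
  · exact ⟨m, (hD m hm).1, (Finset.single_le_sum (f := Nat.totient) (fun _ _ => Nat.zero_le _)
      hm).trans hsum, hwm ▸ (hD m hm).2.2⟩

theorem exists_periodic_sum_of_recurrence {p : ℚ[X]} (hp : p ≠ 0) {u : ℕ → ℚ} {M : ℕ}
    (hu : ∀ n < M, aeval (seqShift ℚ) p u n = 0) {R : Finset ℚ}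
    (hR : ∀ n < M + p.natDegree, u n ∈ R) (hM : R.card ^ p.natDegree ≤ M) :
    ∃ (D : Finset ℕ) (y : ℕ → ℕ → ℚ),
      (∀ m ∈ D, m ≠ 0 ∧ cyclotomic m ℚ ∣ p ∧ Function.Periodic (y m) m) ∧
        ∀ n < M, u (n + p.natDegree) = ∑ m ∈ D, y m n := by
  obtain ⟨z, hz, hzu⟩ := exists_aeval_seqShift_eq_zero_extending hp hu
  obtain ⟨i, P, hP, hiP⟩ := exists_aeval_X_pow_mul_X_pow_sub_one_eq_zero hp hz (R := R)
    fun n hn => hzu n (by omega) ▸ hR n (by omega)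
  obtain ⟨D, hDp, hspan⟩ := exists_X_pow_mul_prod_cyclotomic_mem_span hp i hP
  have hD : aeval (seqShift ℚ) (∏ m ∈ D, cyclotomic m ℚ) ((seqShift ℚ ^ p.natDegree) z) = 0 := by
    obtain ⟨a, b, hab⟩ := Ideal.mem_span_pair.1 hspan
    rw [← aeval_X_pow (R := ℚ), ← Module.End.mul_apply, ← map_mul, mul_comm, ← hab, map_add,
      LinearMap.add_apply, aeval_apply_eq_zero_of_dvd (dvd_mul_left p a) hz,
      aeval_apply_eq_zero_of_dvd (dvd_mul_left _ b) hiP, add_zero]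
  obtain ⟨y, hy, hzy⟩ := exists_sum_of_aeval_prod_eq_zero (seqShift ℚ)
    (fun _ _ _ _ hne => cyclotomic.isCoprime_rat hne) hD
  refine ⟨D, y, fun m hm => ⟨(hDp m hm).1, (hDp m hm).2,
    periodic_of_aeval_cyclotomic_eq_zero (hy m hm)⟩, fun n hn => ?_⟩
  rw [← hzu _ (by omega), ← seqShift_pow_apply p.natDegree z, hzy, Finset.sum_apply]

lemma exists_fin_periodic_sum_of_recurrence {p : ℚ[X]} (hp : p ≠ 0) {t : ℕ}
    (hpt : p.natDegree ≤ t) {u : ℕ → ℚ} {M : ℕ} (hu : ∀ n < M, aeval (seqShift ℚ) p u n = 0)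
    {R : Finset ℚ} (hR : ∀ n < M + p.natDegree, u n ∈ R) (hM : R.card ^ p.natDegree ≤ M) :
    ∃ w : Fin t → ℕ → ℚ, (∀ i, ∃ q, q ≠ 0 ∧ q.totient ≤ t ∧ Function.Periodic (w i) q) ∧
      ∀ n < M, u (n + p.natDegree) = ∑ i, w i n := by
  obtain ⟨D, y, hD, huy⟩ := exists_periodic_sum_of_recurrence hp hu hR hM
  obtain ⟨w, hw, hwy⟩ := exists_fin_periodic_sum_eq hp hpt hD
  refine ⟨w, hw, fun n hn => ?_⟩
  rw [huy n hn, ← Finset.sum_apply, ← hwy, Finset.sum_apply]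

end PeriodicDecomposition

section Windows

open Polynomial

lemma exists_forall_sum_castLE_mul_eq_zero {K : Type*} [Field K] {t d : ℕ} (htd : t < d)
    {V : Submodule K (Fin d → K)} (hV : Module.finrank K V ≤ t) :
    ∃ c : Fin (t + 1) → K, c ≠ 0 ∧ ∀ w ∈ V, ∑ j, c j * w (Fin.castLE htd j) = 0 := by
  let W := V.map (LinearMap.funLeft K K (Fin.castLE htd))
  have hW : W < ⊤ := Submodule.lt_top_of_finrank_lt_finrank <| by
    rw [Module.finrank_fin_fun]
    exact Nat.lt_succ_of_le ((Submodule.finrank_map_le _ V).trans hV)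
  obtain ⟨φ, hφ, hWφ⟩ := W.exists_le_ker_of_lt_top hW
  obtain ⟨c, rfl⟩ := (dotProductEquiv K (Fin (t + 1))).surjective φ
  exact ⟨c, fun hc => hφ (hc ▸ map_zero _), fun w hw => hWφ (Submodule.mem_map_of_mem hw)⟩

lemma exists_ne_zero_forall_sum_mul_eq_zero_of_algebraMap {k K ι : Type*} [Field k] [Ring K]
    [Algebra k K] [Fintype ι] {c : ι → K} (hc : c ≠ 0) :
    ∃ a : ι → k, a ≠ 0 ∧
      ∀ u : ι → k, ∑ j, c j * algebraMap k K (u j) = 0 → ∑ j, a j * u j = 0 := by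
  obtain ⟨i, hi⟩ := Function.ne_iff.1 hc
  obtain ⟨l, hl⟩ := Module.Projective.exists_dual_ne_zero k hi
  refine ⟨fun j => l (c j), fun h => hl (congrFun h i), fun u hu => ?_⟩
  rw [← map_zero l, ← hu, map_sum]
  refine Finset.sum_congr rfl fun j _ => ?_
  rw [← Algebra.commutes, ← Algebra.smul_def, map_smul, smul_eq_mul, mul_comm]

lemma exists_polynomial_aeval_seqShift_eq_zero {k K : Type*} [Field k] [Field K] [Algebra k K]
    {N d t : ℕ} (htd : t < d) {v : ℕ → K} {u : ℕ → k}
    (hu : ∀ n < N, v n = algebraMap k K (u n))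
    {V : Submodule K (Fin d → K)} (hV : Module.finrank K V ≤ t)
    (hvV : ∀ n, n + d ≤ N → (fun j : Fin d => v (n + (j : ℕ))) ∈ V) :
    ∃ p : k[X], p ≠ 0 ∧ p.natDegree ≤ t ∧ ∀ n, n + d ≤ N → aeval (seqShift k) p u n = 0 := by
  obtain ⟨c, hc, hcV⟩ := exists_forall_sum_castLE_mul_eq_zero htd hV
  obtain ⟨a, ha, hau⟩ := exists_ne_zero_forall_sum_mul_eq_zero_of_algebraMap (k := k) hc
  refine ⟨∑ j : Fin (t + 1), monomial j (a j), fun h => ha ?_, ?_, fun n hn => ?_⟩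
  · exact (degreeLTEquiv k (t + 1)).symm.map_eq_zero_iff.1 (Subtype.ext h)
  · exact natDegree_sum_le_of_forall_le _ _ fun j _ =>
      (natDegree_monomial_le _).trans (Nat.lt_succ_iff.1 j.2)
  · have hv : ∑ j, c j * algebraMap k K (u (n + (j : ℕ))) = 0 := by
      rw [← hcV _ (hvV n hn)]
      exact Finset.sum_congr rfl fun j _ => by rw [← hu _ (by omega), Fin.val_castLE]
    rw [← hau _ hv]
    simp only [map_sum, aeval_monomial, LinearMap.sum_apply, Finset.sum_apply, Module.End.mul_apply,
      Module.algebraMap_end_apply, Pi.smul_apply, smul_eq_mul, seqShift_pow_apply]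

end Windows

lemma exists_finset_lift {ι α β : Type*} [Nonempty α] {f : α → β} (hf : Function.Injective f)
    {R : Finset β} {s : Set ι} {x : ι → β} (hx : ∀ n ∈ s, x n ∈ R ∧ x n ∈ Set.range f) :
    ∃ (S : Finset α) (u : ι → α), S.card ≤ R.card ∧ ∀ n ∈ s, u n ∈ S ∧ x n = f (u n) := by
  refine ⟨R.preimage f hf.injOn, fun n => Function.invFun f (x n), ?_, fun n hn => ?_⟩
  · exact Finset.card_le_card_of_injOn f (fun a ha => Finset.mem_preimage.1 ha) hf.injOn
  · have hfx := Function.invFun_eq (hx n hn).2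
    exact ⟨Finset.mem_preimage.2 (hfx ▸ (hx n hn).1), hfx.symm⟩

theorem stmt10_general {K : Type*} [Field K] [CharZero K] {N d t : ℕ} (htd : t < d)
    {R : Finset K} (hRrat : ∀ z ∈ R, ∃ q : ℚ, z = (q : K)) {x : ℕ → K}
    (hx : ∀ n, 1 ≤ n → n ≤ N → x n ∈ R) (hN : R.card ^ t + d ≤ N)
    (hdim : Module.finrank K (Submodule.span K
      {w : Fin d → K | ∃ r, r + d ≤ N ∧ w = fun j : Fin d => x (1 + r + (j : ℕ))}) ≤ t) :
    ∃ y : Fin t → ℕ → K,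
      (∀ i, ∃ q : ℕ, 1 ≤ q ∧ (q : ℝ) ≤ 16 * t * Real.logb 2 (Real.logb 2 (t + 3)) ∧
        ∀ n, t < n → y i (n + q) = y i n) ∧
      (∀ n, t < n → n + d ≤ N + 1 → x n = ∑ i, y i n) := by
  have hmem (n : ℕ) (hn : n < N) : x (1 + n) ∈ R := hx _ (by omega) (by omega)
  obtain ⟨S, u, hSR, hu⟩ := exists_finset_lift (s := Set.Iio N) (x := fun n => x (1 + n))
    (algebraMap ℚ K).injective
    fun n hn => ⟨hmem n hn, (hRrat _ (hmem n hn)).imp fun q hq => by simp [hq]⟩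
  obtain ⟨p, hp, hpt, hpu⟩ := exists_polynomial_aeval_seqShift_eq_zero htd
    (v := fun n => x (1 + n)) (fun n hn => (hu n hn).2) hdim
    fun n hn => Submodule.subset_span ⟨n, hn, by simp only [add_assoc]⟩
  have hcard : S.card ^ p.natDegree ≤ R.card ^ t := by
    have hRpos : 0 < R.card := Finset.card_pos.2 ⟨_, hmem 0 (by omega)⟩
    gcongr
  obtain ⟨w, hw, hwu⟩ := exists_fin_periodic_sum_of_recurrence hp hpt (M := N + 1 - d)
    (fun n hn => hpu n (by omega)) (fun n hn => (hu n (Set.mem_Iio.2 (by omega))).1) (by omega)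
  refine ⟨fun i n => algebraMap ℚ K (w i (n - (p.natDegree + 1))), fun i => ?_,
    fun n hn hnN => ?_⟩
  · obtain ⟨q, hq0, hqt, hq⟩ := hw i
    refine ⟨q, Nat.one_le_iff_ne_zero.2 hq0, le_sixteen_mul_logb_logb_of_totient_le hq0 hqt,
      fun n hn => ?_⟩
    simp only [Nat.sub_add_comm (Nat.succ_le_of_lt (hpt.trans_lt hn)), hq _]
  · obtain ⟨m, rfl⟩ := Nat.exists_eq_add_of_le (show 1 + p.natDegree ≤ n by omega)
    rw [← map_sum, add_comm _ 1, Nat.add_sub_cancel_left, ← hwu m (by omega), add_comm m,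
      ← (hu _ (Set.mem_Iio.2 (by omega))).2, add_assoc]

theorem stmt10 (N d t : ℕ) (hd : 1 ≤ d) (htd : t < d)
    (R : Finset ℂ) (hRrat : ∀ z ∈ R, ∃ q : ℚ, z = (q : ℂ))
    (x : ℕ → ℂ) (hx : ∀ n, 1 ≤ n → n ≤ N → x n ∈ R)
    (hN : R.card ^ d + 3 * d < N)
    (hdim : Module.finrank ℂ (Submodule.span ℂ
      {w : Fin d → ℂ | ∃ r, r + d ≤ N ∧ w = fun j : Fin d => x (1 + r + (j : ℕ))}) = t) :
    ∃ y : Fin t → ℕ → ℂ,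
      (∀ i, ∃ q : ℕ, 1 ≤ q ∧ (q : ℝ) ≤ 16 * t * Real.logb 2 (Real.logb 2 (t + 3)) ∧
        ∀ n, d ≤ n → n + q ≤ N - d → y i (n + q) = y i n) ∧
      (∀ n, d ≤ n → n ≤ N - d → x n = ∑ i, y i n) := by
  have hcard : R.card ^ t ≤ R.card ^ d :=
    Nat.pow_le_pow_right (Finset.card_pos.2 ⟨x 1, hx 1 le_rfl (by omega)⟩) htd.le
  obtain ⟨y, hper, hsum⟩ := stmt10_general htd hRrat hx (by omega) hdim.le
  exact ⟨y, fun i => (hper i).imp fun q hq => ⟨hq.1, hq.2.1, fun n hn _ => hq.2.2 n (by omega)⟩,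
    fun n h1 h2 => hsum n (by omega) (by omega)⟩
end

section
/- For every finite set $A \subseteq \mathbb{N} \cup \{0\}$ with $|A|$ sufficiently large, the cosine polynomial $f_A(\theta) = \sum_{a \in A} \cos(a\theta)$ has at least $(\log\log\log |A|)^{1/4}$ distinct roots in $[0, 2\pi]$. -/
/-!
If `cosSum A` has few zeros, then a monic polynomial `q` of small degree, a product of quadratic
factors vanishing at the sign changes, makes `∫ |cosSum A| * |q (exp (iθ))|` small. By the
McGehee–Pigno–Smith lower bound for the `L¹` norm, multiplication by `q` and by `exp (ipθ) - 1` then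
leaves few coefficients that are not tiny, and integrality turns a long run of tiny ones into an
exact linear recurrence: the indicator function of `A` is `p`-periodic apart from a number of jumps
bounded in terms of the number of zeros. Now integrate the sine sum of the symmetric differences of
this function against `dt / t` over a range of scales near `0` on which `cosSum A` keeps its sign
and which no distance between jumps meets. The differences within each cluster of jumps must
cancel, so `A` lies close to the jumps and has bounded size.
-/

open Polynomial hiding funext
open Finset Real MeasureTheory
open scoped Nat ComplexConjugate

/-! ### Integer vectors close to a hyperplane -/

section HyperplaneOfSmallPairing

variable {ι : Type*} [Fintype ι]

lemma abs_adjugate_apply_le [DecidableEq ι] {M : Matrix ι ι ℤ} {b : ℤ} (hb : 1 ≤ b)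
    (hM : ∀ i j, |M i j| ≤ b) (i j : ι) :
    |M.adjugate i j| ≤ (Fintype.card ι)! * b ^ Fintype.card ι := by
  rw [Matrix.adjugate_apply, ← nsmul_eq_mul]
  refine Matrix.det_le (abv := AbsoluteValue.abs) fun k l => ?_
  simp only [Matrix.updateRow_apply, Pi.single_apply, AbsoluteValue.abs_apply]
  split_ifs
  · simpa using hb
  · simpa using zero_le_one.trans hb
  · exact hM k l

/-- An integer bounding the `ℓ¹` norm of each row of the adjugate of an `n × n` integer matrix with
entries in `[-b, b]`. By Cramer's rule, integer vectors in this box whose pairings with a vector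
having a coordinate `1` are below its inverse are linearly dependent. -/
def cramerBound (n b : ℕ) : ℕ := n * (n ! * b ^ n)

lemma cramerBound_pos {n b : ℕ} (hn : 0 < n) (hb : 1 ≤ b) : 0 < cramerBound n b := by
  unfold cramerBound
  positivity

lemma det_eq_zero_of_abs_sum_lt [DecidableEq ι] {M : Matrix ι ι ℤ} {b : ℕ} (hb : 1 ≤ b)
    (hM : ∀ i j, |M i j| ≤ b) {q : ι → ℝ} {i₀ : ι} (hq : q i₀ = 1)
    (hs : ∀ i, |∑ j, M i j * q j| < 1 / cramerBound (Fintype.card ι) b) : M.det = 0 := by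
  have : Nonempty ι := ⟨i₀⟩
  have hC : (0 : ℝ) < cramerBound (Fintype.card ι) b :=
    mod_cast cramerBound_pos Fintype.card_pos hb
  have cramer : (M.det : ℝ) = ∑ i, (M.adjugate i₀ i : ℝ) * ∑ j, M i j * q j := by
    have h := congrFun (congrArg (Matrix.mulVec · q)
      (Matrix.adjugate_mul ((Int.castRingHom ℝ).mapMatrix M))) i₀
    rw [← RingHom.map_adjugate, ← RingHom.map_det, ← Matrix.mulVec_mulVec, Matrix.smul_mulVec,
      Matrix.one_mulVec] at h
    simpa [Matrix.mulVec, dotProduct, hq] using h.symm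
  have hlt : |(M.det : ℝ)| < 1 := calc
    |(M.det : ℝ)| ≤ ∑ i, |(M.adjugate i₀ i : ℝ) * ∑ j, M i j * q j| := by
        rw [cramer]
        exact abs_sum_le_sum_abs _ _
    _ < ∑ _i : ι, ((Fintype.card ι)! * b ^ Fintype.card ι : ℝ) *
          (1 / cramerBound (Fintype.card ι) b) := by
        refine sum_lt_sum_of_nonempty univ_nonempty fun i _ => ?_
        have hadj : |(M.adjugate i₀ i : ℝ)| ≤ (Fintype.card ι)! * b ^ Fintype.card ι := by
          exact_mod_cast abs_adjugate_apply_le (mod_cast hb) hM i₀ i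
        rw [abs_mul]
        exact (mul_le_mul_of_nonneg_right hadj (abs_nonneg _)).trans_lt
          (mul_lt_mul_of_pos_left (hs i) (by positivity))
    _ = 1 := by
        rw [sum_const, card_univ, nsmul_eq_mul, ← mul_assoc, mul_one_div,
          div_eq_one_iff_eq hC.ne']
        push_cast [cramerBound]
        rfl
  exact Int.abs_lt_one_iff.1 (by exact_mod_cast hlt)

lemma exists_ne_zero_forall_sum_eq_zero {q : ι → ℝ} {i₀ : ι} (hq : q i₀ = 1) {b : ℕ}
    (hb : 1 ≤ b) :
    ∃ Q : ι → ℚ, Q ≠ 0 ∧ ∀ v : ι → ℤ, (∀ i, |v i| ≤ b) →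
      |∑ i, v i * q i| < 1 / cramerBound (Fintype.card ι) b → ∑ i, v i * Q i = 0 := by
  classical
  set D : Set (ι → ℚ) := {w | ∃ v : ι → ℤ, (∀ i, |v i| ≤ b) ∧
    |∑ i, v i * q i| < 1 / cramerBound (Fintype.card ι) b ∧ w = fun i => (v i : ℚ)}
  have hspan : Submodule.span ℚ D < ⊤ := by
    refine lt_top_iff_ne_top.2 fun htop => ?_
    let B := Module.Basis.ofSpan htop.ge
    let B' := B.reindex (B.indexEquiv (Pi.basisFun ℚ ι))
    have hB' : ∀ i, B' i ∈ D := fun i => by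
      rw [Module.Basis.reindex_apply]
      exact Module.Basis.ofSpan_subset htop.ge (Set.mem_range_self _)
    choose v hv_le hv_lt hv_eq using hB'
    have hdet : (Matrix.of v).det = 0 := det_eq_zero_of_abs_sum_lt hb hv_le hq hv_lt
    have hunit : IsUnit ((Matrix.of v).map (Int.cast : ℤ → ℚ)) := by
      rw [← Matrix.linearIndependent_rows_iff_isUnit]
      have hB' := B'.linearIndependent
      rwa [show ⇑B' = _ from funext hv_eq] at hB'
    rw [Matrix.isUnit_iff_isUnit_det, ← Int.cast_det, hdet, Int.cast_zero] at hunit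
    exact not_isUnit_zero hunit
  obtain ⟨f, hf, hle⟩ := Submodule.exists_le_ker_of_lt_top _ hspan
  refine ⟨fun i => f (fun j => if i = j then 1 else 0), fun h => hf ?_, fun v hv_le hv_lt => ?_⟩
  · refine LinearMap.ext fun w => ?_
    rw [LinearMap.pi_apply_eq_sum_univ f w]
    exact sum_eq_zero fun i _ => by rw [congrFun h i, Pi.zero_apply, smul_zero]
  · have hker : f (fun i => (v i : ℚ)) = 0 := hle (Submodule.subset_span ⟨v, hv_le, hv_lt, rfl⟩)
    simpa [LinearMap.pi_apply_eq_sum_univ f fun i => (v i : ℚ)] using hker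

end HyperplaneOfSmallPairing

lemma exists_rat_polynomial_sum_eq_zero_of_monic {q : ℝ[X]} (hq : q.Monic) {b : ℕ} (hb : 1 ≤ b) :
    ∃ Q : ℚ[X], Q ≠ 0 ∧ Q.natDegree ≤ q.natDegree ∧ ∀ v : ℕ → ℤ, (∀ i, |v i| ≤ b) →
      |q.sum fun i a => a * v i| < 1 / cramerBound (q.natDegree + 1) b →
      (Q.sum fun i a => a * v i) = 0 := by
  set n := q.natDegree + 1
  obtain ⟨Q, hQ0, hQ⟩ := exists_ne_zero_forall_sum_eq_zero (ι := Fin n)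
    (q := fun i => q.coeff i) (i₀ := Fin.last _) hq.coeff_natDegree hb
  set R := (degreeLTEquiv ℚ n).symm Q
  have hR : ∀ i : Fin n, (R : ℚ[X]).coeff i = Q i :=
    congrFun ((degreeLTEquiv ℚ n).apply_symm_apply Q)
  have hRdeg : (R : ℚ[X]).natDegree ≤ q.natDegree :=
    natDegree_le_iff_degree_le.2 (mem_degreeLE.1 (degreeLT_succ_eq_degreeLE (R := ℚ) ▸ R.2))
  refine ⟨R, by simpa [R] using hQ0, hRdeg, fun v hv_le hv_lt => ?_⟩
  rw [sum_over_range' _ (by simp) n (Nat.lt_succ_of_le hRdeg),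
    ← Fin.sum_univ_eq_sum_range (fun i => (R : ℚ[X]).coeff i * (v i : ℚ))]
  rw [sum_over_range _ (fun _ => zero_mul _),
    ← Fin.sum_univ_eq_sum_range (fun i => q.coeff i * (v i : ℝ))] at hv_lt
  simp only [hR, mul_comm (Q _)]
  simp only [mul_comm (q.coeff _)] at hv_lt
  exact hQ (fun i => v i) (fun i => hv_le i) (by rwa [Fintype.card_fin])

/-! ### Periodicity of bounded integer sequences with a linear recurrence -/

lemma dvd_factorial_of_totient_le {d m : ℕ} (hd : 0 < d) (h : φ d ≤ m) : d ∣ (2 * m)! := by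
  rw [Nat.dvd_iff_prime_pow_dvd_dvd]
  intro p e hp hpe
  rcases e.eq_zero_or_pos with rfl | he
  · simp
  refine Nat.dvd_factorial (pow_pos hp.pos _) ?_
  have hle : φ (p ^ e) ≤ m :=
    (Nat.le_of_dvd (Nat.totient_pos.2 hd) (Nat.totient_dvd_of_dvd hpe)).trans h
  rw [Nat.totient_prime_pow hp he] at hle
  calc p ^ e = p ^ (e - 1) * p := (pow_sub_one_mul he.ne' p).symm
    _ ≤ p ^ (e - 1) * (2 * (p - 1)) := by
        gcongr
        have := hp.two_le
        lia
    _ = 2 * (p ^ (e - 1) * (p - 1)) := by ring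
    _ ≤ 2 * m := by gcongr

-- Only the cyclotomic factors `Φ_d` of `X ^ r - 1` dividing `Q` matter, and those have
-- `φ d ≤ natDegree Q`.
lemma X_pow_factorial_sub_one_mem_span {Q : ℚ[X]} (hQ : Q ≠ 0) {r : ℕ} (hr : 0 < r) :
    X ^ (2 * Q.natDegree)! - 1 ∈ Ideal.span {Q, X ^ r - 1} := by
  classical
  set a : ℚ[X] := ∏ d ∈ r.divisors with cyclotomic d ℚ ∣ Q, cyclotomic d ℚ
  set b : ℚ[X] := ∏ d ∈ r.divisors with ¬ cyclotomic d ℚ ∣ Q, cyclotomic d ℚ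
  have hab : a * b = X ^ r - 1 := by
    rw [prod_filter_mul_prod_filter_not, prod_cyclotomic_eq_X_pow_sub_one hr]
  have hcop : IsCoprime b Q := IsCoprime.prod_left fun d hd =>
    (cyclotomic.irreducible_rat (Nat.pos_of_mem_divisors (mem_filter.1 hd).1)).coprime_iff_not_dvd.2
      (mem_filter.1 hd).2
  have hdvd : a ∣ X ^ (2 * Q.natDegree)! - 1 := by
    rw [← prod_cyclotomic_eq_X_pow_sub_one (Nat.factorial_pos _)]
    refine prod_dvd_prod_of_subset _ _ _ fun d hd => ?_
    obtain ⟨hdr, hdQ⟩ := mem_filter.1 hd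
    have hdeg := natDegree_le_of_dvd hdQ hQ
    rw [natDegree_cyclotomic] at hdeg
    exact Nat.mem_divisors.2 ⟨dvd_factorial_of_totient_le (Nat.pos_of_mem_divisors hdr) hdeg,
      Nat.factorial_ne_zero _⟩
  obtain ⟨s, t, hst⟩ := hcop
  refine Ideal.mem_of_dvd _ hdvd (Ideal.mem_span_pair.2 ⟨t * a, s, ?_⟩)
  rw [← hab]
  linear_combination a * hst

lemma pow_apply_eq_self_of_aeval_apply_eq_zero {V : Type*} [AddCommGroup V] [Module ℚ V]
    {f : Module.End ℚ V} {v : V} {Q : ℚ[X]} (hQ : Q ≠ 0) (hQv : aeval f Q v = 0) {r : ℕ}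
    (hr : 0 < r) (hrv : (f ^ r) v = v) {p : ℕ} (hp : (2 * Q.natDegree)! ∣ p) : (f ^ p) v = v := by
  obtain ⟨s, t, hst⟩ := Ideal.mem_span_pair.1 (X_pow_factorial_sub_one_mem_span hQ hr)
  have hfix : (f ^ (2 * Q.natDegree)!) v = v := by
    have h := congrArg (fun R => aeval f R v) hst
    simp only [map_add, map_mul, map_sub, map_pow, aeval_X, map_one, LinearMap.add_apply,
      Module.End.mul_apply, LinearMap.sub_apply, Module.End.one_apply, hQv, hrv, sub_self,
      map_zero, add_zero] at h
    exact (sub_eq_zero.1 h.symm)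
  obtain ⟨c, rfl⟩ := hp
  rw [pow_mul, Module.End.pow_apply]
  exact Function.iterate_fixed hfix c

/-- The left shift on rational sequences, through which recurrences are read as polynomial
relations. -/
def leftShift : Module.End ℚ (ℕ → ℚ) := LinearMap.funLeft ℚ ℚ Nat.succ

lemma leftShift_pow_apply (n : ℕ) (y : ℕ → ℚ) (j : ℕ) : (leftShift ^ n) y j = y (j + n) := by
  induction n generalizing j with
  | zero => simp
  | succ n ih =>
    rw [pow_succ', Module.End.mul_apply]
    exact (ih (j + 1)).trans (congrArg y (by ring))

lemma aeval_leftShift_apply (Q : ℚ[X]) (y : ℕ → ℚ) (j : ℕ) :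
    aeval leftShift Q y j = Q.sum fun i a => a * y (j + i) := by
  rw [aeval_eq_sum_range, sum_over_range _ fun _ => zero_mul _]
  simp [leftShift_pow_apply]

lemma exists_lt_forall_add_eq_of_abs_le {y : ℕ → ℤ} {b : ℕ} (hy : ∀ j, |y j| ≤ b) (n : ℕ) :
    ∃ s t, s < t ∧ t ≤ (2 * b + 1) ^ n ∧ ∀ i < n, y (t + i) = y (s + i) := by
  set windows := Fintype.piFinset fun _ : Fin n => Icc (-b : ℤ) b
  have hcard : #windows = (2 * b + 1) ^ n := by
    rw [Fintype.card_piFinset_const, Int.card_Icc]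
    congr 1
    lia
  obtain ⟨s, hs, t, ht, hst, heq⟩ := exists_ne_map_eq_of_card_lt_of_maps_to
    (s := range ((2 * b + 1) ^ n + 1)) (t := windows) (f := fun j i => y (j + i))
    (by rw [hcard, card_range]; lia)
    fun j _ => Fintype.mem_piFinset.2 fun i => mem_Icc.2 (abs_le.1 (hy _))
  have heq' : ∀ i < n, y (s + i) = y (t + i) := fun i hi => congrFun heq ⟨i, hi⟩
  rw [mem_range, Nat.lt_succ_iff] at hs ht
  rcases lt_or_gt_of_ne hst with h | h
  · exact ⟨s, t, h, ht, fun i hi => (heq' i hi).symm⟩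
  · exact ⟨t, s, h, hs, heq'⟩

lemma apply_mod_eq_of_lt_add {α : Type*} {y : ℕ → α} {r n : ℕ} (hr : 0 < r)
    (hy : ∀ i < n, y (r + i) = y i) {j : ℕ} (hj : j < r + n) : y (j % r) = y j := by
  induction j using Nat.strong_induction_on with
  | _ j ih =>
    rcases lt_or_ge j r with h | h
    · rw [Nat.mod_eq_of_lt h]
    · rw [Nat.mod_eq_sub_mod h, ih (j - r) (by lia) (by lia), ← hy (j - r) (by lia),
        Nat.add_sub_cancel' h]

lemma eq_zero_of_recurrence {Q : ℚ[X]} (hQ : Q ≠ 0) {z : ℕ → ℚ} {N : ℕ}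
    (hrec : ∀ j < N, (Q.sum fun i a => a * z (j + i)) = 0) (hz : ∀ i < Q.natDegree, z i = 0)
    {j : ℕ} (hj : j < N + Q.natDegree) : z j = 0 := by
  induction j using Nat.strong_induction_on with
  | _ j ih =>
    rcases lt_or_ge j Q.natDegree with h | h
    · exact hz j h
    have hlead := hrec (j - Q.natDegree) (by lia)
    rw [sum_over_range _ fun _ => zero_mul _, sum_range_succ, Nat.sub_add_cancel h,
      sum_eq_zero, zero_add, coeff_natDegree] at hlead
    · exact (mul_eq_zero.1 hlead).resolve_left (leadingCoeff_ne_zero.2 hQ)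
    · intro i hi
      have := mem_range.1 hi
      rw [ih (j - Q.natDegree + i) (by lia) (by lia), mul_zero]

-- The `r`-periodic continuation of `y` satisfies the recurrence for ever, so it is also
-- `p`-periodic; by uniqueness `y` agrees with it as long as `y` satisfies the recurrence.
lemma apply_add_eq_of_recurrence {Q : ℚ[X]} (hQ : Q ≠ 0) {y : ℕ → ℚ} {r N : ℕ} (hr : 0 < r)
    (hrN : r ≤ N) (hrec : ∀ j < N, (Q.sum fun i a => a * y (j + i)) = 0)
    (hy : ∀ i < Q.natDegree + 1, y (r + i) = y i) {p : ℕ} (hp : (2 * Q.natDegree)! ∣ p) {j : ℕ}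
    (hj : j + p < N) : y (j + p) = y j := by
  set Y : ℕ → ℚ := fun j => y (j % r)
  have hYrec : ∀ j, (Q.sum fun i a => a * Y (j + i)) = 0 := fun j => by
    have hlt := Nat.mod_lt j hr
    rw [← hrec (j % r) (hlt.trans_le hrN), sum_over_range _ fun _ => zero_mul _,
      sum_over_range _ fun _ => zero_mul _]
    refine sum_congr rfl fun i hi => ?_
    rw [← apply_mod_eq_of_lt_add hr hy (j := j % r + i) (by have := mem_range.1 hi; lia)]
    simp only [Y, Nat.mod_add_mod]
  have hYp : (leftShift ^ p) Y = Y := by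
    refine pow_apply_eq_self_of_aeval_apply_eq_zero hQ (funext fun j => ?_) hr
      (funext fun j => ?_) hp
    · rw [aeval_leftShift_apply]
      exact hYrec j
    · simp [leftShift_pow_apply, Y]
  have hagree : ∀ j < N, Y j = y j := fun j hjN => sub_eq_zero.1 <|
    eq_zero_of_recurrence (z := Y - y) (N := N) hQ (fun j hj => by
      have h := congrArg₂ (· - ·) (hYrec j) (hrec j hj)
      simpa [sum_def, ← sum_sub_distrib, mul_sub] using h)
      (fun i hi => sub_eq_zero.2 (apply_mod_eq_of_lt_add hr hy (by lia)))
      (by lia)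
  rw [← hagree j (by lia), ← hagree (j + p) hj, ← leftShift_pow_apply p Y, hYp]

lemma apply_add_eq_of_recurrence_sub {Q : ℚ[X]} (hQ : Q ≠ 0) {u : ℕ → ℤ} {b p N : ℕ}
    (hu : ∀ j, 0 ≤ u j ∧ u j ≤ b) (hp : (2 * Q.natDegree)! ∣ p)
    (hrec : ∀ j < N, (Q.sum fun i a => a * ((u (j + i + p) - u (j + i) : ℤ) : ℚ)) = 0)
    {j : ℕ} (hj : (2 * b + 1) ^ (Q.natDegree + 1) ≤ j) (hjN : j + b * p < N) : u (j + p) = u j := by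
  set y : ℕ → ℤ := fun j => u (j + p) - u j
  have hy : ∀ j, |y j| ≤ b := fun j => by
    have := hu j
    have := hu (j + p)
    exact abs_le.2 ⟨by lia, by lia⟩
  obtain ⟨s, t, hst, ht, hwin⟩ := exists_lt_forall_add_eq_of_abs_le hy (Q.natDegree + 1)
  have hper : ∀ i, i + p < N - s → y (s + (i + p)) = y (s + i) := fun i hi => by
    have := apply_add_eq_of_recurrence hQ (y := fun i => (y (s + i) : ℚ)) (r := t - s)
      (N := N - s) (by lia) (by lia)
      (fun j hj => by simpa [y, add_assoc] using hrec (s + j) (by lia))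
      (fun i hi => by rw [← add_assoc, Nat.add_sub_cancel' hst.le, hwin i hi]) hp hi
    exact_mod_cast this
  have hconst : ∀ k ≤ b, y (j + k * p) = y j := fun k => by
    induction k with
    | zero => simp
    | succ k ih =>
      intro hk
      have hle : (k + 1) * p ≤ b * p := Nat.mul_le_mul_right p hk
      have := hper (j - s + k * p) (by rw [add_mul, one_mul] at hle; lia)
      rw [← ih (by lia)]
      convert this using 2 <;> lia
  have htel : (b + 1) * y j = u (j + (b + 1) * p) - u j := by
    have := sum_range_sub (fun k => u (j + k * p)) (b + 1)
    simp only [zero_mul, add_zero] at this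
    rw [← this, sum_congr rfl fun k hk => (?_ : _ = y j), sum_const, card_range, nsmul_eq_mul]
    · push_cast
      rfl
    · rw [← hconst k (Nat.lt_succ_iff.1 (mem_range.1 hk)), add_mul, one_mul, ← add_assoc]
  have := hu j
  have := hu (j + (b + 1) * p)
  have hyj : y j = 0 := by
    by_contra h
    have := Int.one_le_abs h
    rcases abs_cases (y j) with h' | h' <;> nlinarith
  exact sub_eq_zero.1 hyj

/-! ### Trigonometric polynomials -/

/-- The character `θ ↦ exp (i n θ)` of the circle `ℝ / 2πℤ`. -/
noncomputable def expI (n : ℤ) (θ : ℝ) : ℂ := Complex.exp (n * θ * Complex.I)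

lemma expI_eq_exp_ofReal (n : ℤ) (θ : ℝ) : expI n θ = Complex.exp ((n * θ : ℝ) * Complex.I) := by
  simp [expI]

@[simp]
lemma expI_zero (θ : ℝ) : expI 0 θ = 1 := by simp [expI]

lemma expI_add (m n : ℤ) (θ : ℝ) : expI (m + n) θ = expI m θ * expI n θ := by
  simp only [expI, ← Complex.exp_add, Int.cast_add, add_mul]

lemma expI_one_pow (n : ℕ) (θ : ℝ) : expI 1 θ ^ n = expI n θ := by
  simp [expI, ← Complex.exp_nat_mul, mul_assoc]

@[simp]
lemma norm_expI (n : ℤ) (θ : ℝ) : ‖expI n θ‖ = 1 := by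
  rw [expI_eq_exp_ofReal, Complex.norm_exp_ofReal_mul_I]

lemma expI_re (n : ℤ) (θ : ℝ) : (expI n θ).re = cos (n * θ) := by
  rw [expI_eq_exp_ofReal, Complex.exp_ofReal_mul_I_re]

lemma expI_im (n : ℤ) (θ : ℝ) : (expI n θ).im = sin (n * θ) := by
  rw [expI_eq_exp_ofReal, Complex.exp_ofReal_mul_I_im]

lemma conj_expI (n : ℤ) (θ : ℝ) : conj (expI n θ) = expI (-n) θ := by
  apply Complex.ext <;> simp [expI_re, expI_im]

lemma expI_add_expI_neg (n : ℤ) (θ : ℝ) : expI n θ + expI (-n) θ = 2 * cos (n * θ) := by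
  rw [← conj_expI, Complex.add_conj, expI_re]
  push_cast
  rfl

@[fun_prop]
lemma continuous_expI (n : ℤ) : Continuous (expI n) := by
  unfold expI
  fun_prop

lemma integral_expI (n : ℤ) : ∫ θ in 0..2 * π, expI n θ = if n = 0 then 2 * (π : ℂ) else 0 := by
  split_ifs with h
  · simp [h]
  · have hc : (n * Complex.I : ℂ) ≠ 0 := by simp [h]
    have hper : Complex.exp (n * Complex.I * (2 * π : ℝ)) = 1 :=
      Complex.exp_eq_one_iff.2 ⟨n, by push_cast; ring⟩
    have heq : ∀ θ : ℝ, expI n θ = Complex.exp (n * Complex.I * θ) := fun θ =>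
      congrArg Complex.exp (mul_right_comm _ _ _)
    simp only [heq, integral_exp_mul_complex hc, hper, Complex.ofReal_zero, mul_zero,
      Complex.exp_zero, sub_self, zero_div]

lemma integral_sum_of_continuous {ι E : Type*} [NormedAddCommGroup E] [NormedSpace ℝ E]
    {s : Finset ι} {f : ι → ℝ → E} (hf : ∀ i ∈ s, Continuous (f i)) (a b : ℝ) :
    ∫ θ in a..b, ∑ i ∈ s, f i θ = ∑ i ∈ s, ∫ θ in a..b, f i θ :=
  intervalIntegral.integral_finsetSum fun i hi => (hf i hi).intervalIntegrable _ _

lemma norm_sq_sum_mul_expI (W : Finset ℤ) (c : ℤ → ℂ) (σ : ℤ → ℤ) (θ : ℝ) :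
    ((‖∑ w ∈ W, c w * expI (σ w) θ‖ ^ 2 : ℝ) : ℂ) =
      ∑ w ∈ W, ∑ v ∈ W, c w * conj (c v) * expI (σ w - σ v) θ := by
  push_cast
  rw [← Complex.mul_conj', map_sum, sum_mul_sum]
  refine sum_congr rfl fun w _ => sum_congr rfl fun v _ => ?_
  rw [map_mul, conj_expI, sub_eq_add_neg, expI_add]
  ring

lemma integral_norm_sq_sum_mul_expI {W : Finset ℤ} (c : ℤ → ℂ) {σ : ℤ → ℤ}
    (hσ : Set.InjOn σ W) :
    ∫ θ in 0..2 * π, ‖∑ w ∈ W, c w * expI (σ w) θ‖ ^ 2 = 2 * π * ∑ w ∈ W, ‖c w‖ ^ 2 := by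
  suffices h : ((∫ θ in 0..2 * π, ‖∑ w ∈ W, c w * expI (σ w) θ‖ ^ 2 : ℝ) : ℂ) =
      ((2 * π * ∑ w ∈ W, ‖c w‖ ^ 2 : ℝ) : ℂ) from Complex.ofReal_injective h
  simp_rw [← intervalIntegral.integral_ofReal, norm_sq_sum_mul_expI]
  rw [integral_sum_of_continuous (fun w _ => by fun_prop)]
  push_cast
  rw [mul_sum]
  refine sum_congr rfl fun w hw => ?_
  rw [integral_sum_of_continuous (fun v _ => by fun_prop), sum_eq_single_of_mem w hw]
  · simp [Complex.mul_conj', mul_comm]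
  · intro v hv hvw
    rw [intervalIntegral.integral_const_mul, integral_expI,
      if_neg (sub_ne_zero.2 fun h => hvw (hσ hv hw h.symm)), mul_zero]

/-- The trigonometric polynomial `∑ w ∈ W, c w * exp (-i w θ)`; with this sign convention, `2π c w`
is its integral against the character of frequency `w`. -/
noncomputable def trigPoly (W : Finset ℤ) (c : ℤ → ℂ) (θ : ℝ) : ℂ := ∑ w ∈ W, c w * expI (-w) θ

@[fun_prop]
lemma continuous_trigPoly (W : Finset ℤ) (c : ℤ → ℂ) : Continuous (trigPoly W c) := by
  unfold trigPoly
  fun_prop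

lemma trigPoly_mul_expI (W : Finset ℤ) (c : ℤ → ℂ) (x : ℤ) (θ : ℝ) :
    trigPoly W c θ * expI x θ = ∑ w ∈ W, c w * expI (x - w) θ := by
  rw [trigPoly, sum_mul]
  refine sum_congr rfl fun w _ => ?_
  rw [sub_eq_neg_add, expI_add, mul_assoc]

lemma integral_trigPoly_mul_expI {W : Finset ℤ} (c : ℤ → ℂ) {x : ℤ} (hx : x ∈ W) :
    ∫ θ in 0..2 * π, trigPoly W c θ * expI x θ = 2 * π * c x := by
  simp_rw [trigPoly_mul_expI]
  rw [integral_sum_of_continuous (fun w _ => by fun_prop), sum_eq_single_of_mem x hx]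
  · simp [mul_comm]
  · intro w _ hwx
    rw [intervalIntegral.integral_const_mul, integral_expI, if_neg (sub_ne_zero.2 hwx.symm),
      mul_zero]

lemma integral_expI_mul_eq_zero {F : ℂ → ℂ} (hF : Differentiable ℂ F) {k : ℤ} (hk : 0 < k) :
    ∫ θ in 0..2 * π, expI k θ * F (expI 1 θ) = 0 := by
  lift k to ℕ using hk.le
  have hk0 : k ≠ 0 := by exact_mod_cast hk.ne'
  have hmean := DiffContOnCl.circleAverage (f := fun z => z ^ k * F z) (c := 0) (R := 1)
    (Differentiable.diffContOnCl (by fun_prop))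
  simp only [circleAverage_def, zero_pow hk0, zero_mul] at hmean
  rw [← (smul_eq_zero.1 hmean).resolve_left (by positivity)]
  refine intervalIntegral.integral_congr fun θ _ => ?_
  have hcircle : circleMap 0 1 θ = expI 1 θ := by simp [circleMap, expI]
  simp only [hcircle, expI_one_pow]

-- Frequencies below `x` do not see an entire function of `exp (iθ)`, by the mean value property.
lemma integral_trigPoly_mul_expI_mul_eq {F : ℂ → ℂ} (hF : Differentiable ℂ F) (W : Finset ℤ)
    (c : ℤ → ℂ) (x : ℤ) :
    ∫ θ in 0..2 * π, trigPoly W c θ * (expI x θ * F (expI 1 θ)) =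
      ∫ θ in 0..2 * π, trigPoly {w ∈ W | x ≤ w} c θ * (expI x θ * F (expI 1 θ)) := by
  have hFc : Continuous F := hF.continuous
  have hsum : ∀ V : Finset ℤ, ∫ θ in 0..2 * π, trigPoly V c θ * (expI x θ * F (expI 1 θ)) =
      ∑ w ∈ V, c w * ∫ θ in 0..2 * π, expI (x - w) θ * F (expI 1 θ) := fun V => by
    simp_rw [← mul_assoc, trigPoly_mul_expI, sum_mul]
    rw [integral_sum_of_continuous (fun w _ => by fun_prop)]
    simp_rw [mul_assoc, intervalIntegral.integral_const_mul]
  rw [hsum, hsum]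
  refine (sum_subset (filter_subset _ _) fun w hw hwx => ?_).symm
  have hlt : w < x := by simpa [hw] using hwx
  rw [integral_expI_mul_eq_zero hF (sub_pos.2 hlt), mul_zero]

lemma norm_integral_mul_le_of_sq_le {f g : ℝ → ℂ} (hf : Continuous f) (hg : Continuous g)
    {a b α β γ : ℝ} (hab : a ≤ b) (hα : 0 < α) (hfα : ∫ θ in a..b, ‖f θ‖ ^ 2 ≤ α)
    (hgβ : ∫ θ in a..b, ‖g θ‖ ^ 2 ≤ β) (hγ : 0 < γ) (h : α * β ≤ γ ^ 2) :
    ‖∫ θ in a..b, f θ * g θ‖ ≤ γ := by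
  have hamgm : ∀ θ, ‖f θ * g θ‖ ≤ γ / (2 * α) * ‖f θ‖ ^ 2 + α / (2 * γ) * ‖g θ‖ ^ 2 := fun θ => by
    have hsq : γ / (2 * α) * ‖f θ‖ ^ 2 + α / (2 * γ) * ‖g θ‖ ^ 2 - ‖f θ‖ * ‖g θ‖ =
        (γ * ‖f θ‖ - α * ‖g θ‖) ^ 2 / (2 * α * γ) := by
      field_simp
      ring
    rw [norm_mul, ← sub_nonneg, hsq]
    positivity
  calc ‖∫ θ in a..b, f θ * g θ‖ ≤ ∫ θ in a..b, ‖f θ * g θ‖ :=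
        intervalIntegral.norm_integral_le_integral_norm hab
    _ ≤ ∫ θ in a..b, (γ / (2 * α) * ‖f θ‖ ^ 2 + α / (2 * γ) * ‖g θ‖ ^ 2) :=
        intervalIntegral.integral_mono_on hab (Continuous.intervalIntegrable (by fun_prop) _ _)
          (Continuous.intervalIntegrable (by fun_prop) _ _) fun θ _ => hamgm θ
    _ = γ / (2 * α) * (∫ θ in a..b, ‖f θ‖ ^ 2) + α / (2 * γ) * ∫ θ in a..b, ‖g θ‖ ^ 2 := by
        rw [intervalIntegral.integral_add (Continuous.intervalIntegrable (by fun_prop) _ _)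
          (Continuous.intervalIntegrable (by fun_prop) _ _), intervalIntegral.integral_const_mul,
          intervalIntegral.integral_const_mul]
    _ ≤ γ / (2 * α) * α + α / (2 * γ) * β := by gcongr
    _ ≤ γ := by
        have : α / (2 * γ) * β ≤ γ / 2 := by
          rw [div_mul_eq_mul_div, div_le_div_iff₀ (by positivity) two_pos]
          nlinarith
        have : γ / (2 * α) * α = γ / 2 := by field_simp
        linarith

/-! ### A lower bound for the `L¹` norm of a trigonometric polynomial -/

lemma integral_norm_sq_sum_le {ι : Type*} {s : Finset ι} {f : ι → ℝ → ℂ}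
    (hf : ∀ i ∈ s, Continuous (f i)) {a b C : ℝ} (hab : a ≤ b)
    (hC : ∀ i ∈ s, ∫ θ in a..b, ‖f i θ‖ ^ 2 ≤ C) :
    ∫ θ in a..b, ‖∑ i ∈ s, f i θ‖ ^ 2 ≤ #s ^ 2 * C := by
  have hsq : ∀ i ∈ s, Continuous fun θ => ‖f i θ‖ ^ 2 := fun i hi => (hf i hi).norm.pow 2
  calc ∫ θ in a..b, ‖∑ i ∈ s, f i θ‖ ^ 2
      ≤ ∫ θ in a..b, #s * ∑ i ∈ s, ‖f i θ‖ ^ 2 := by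
        refine intervalIntegral.integral_mono_on hab
          ((continuous_finsetSum s hf).norm.pow 2 |>.intervalIntegrable _ _)
          ((continuous_finsetSum s hsq).const_mul _ |>.intervalIntegrable _ _) fun θ _ => ?_
        exact (pow_le_pow_left₀ (norm_nonneg _) (norm_sum_le _ _) 2).trans
          sq_sum_le_card_mul_sum_sq
    _ = #s * ∑ i ∈ s, ∫ θ in a..b, ‖f i θ‖ ^ 2 := by
        rw [intervalIntegral.integral_const_mul, integral_sum_of_continuous hsq]
    _ ≤ #s * (#s * C) := by
        rw [← nsmul_eq_mul (#s) C]
        gcongr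
        exact sum_le_card_nsmul _ _ _ hC
    _ = #s ^ 2 * C := by ring

lemma norm_exp_neg_sub_one_le {z : ℂ} (hz : 0 ≤ z.re) : ‖Complex.exp (-z) - 1‖ ≤ ‖z‖ := by
  have h := (convex_halfSpace_re_le 0).norm_image_sub_le_of_norm_deriv_le (f := Complex.exp)
    (C := 1) (x := 0) (y := -z) (fun _ _ => Complex.differentiableAt_exp)
    (fun w hw => by
      rw [Complex.deriv_exp, Complex.norm_exp]
      exact exp_le_one_iff.2 hw)
    (by simp) (by simpa using hz)
  simpa using h

lemma exp_neg_sq_sq_le {u : ℝ} (hu : u ^ 2 ≤ 1) : rexp (-u ^ 2) ^ 2 ≤ 1 - 2 / 3 * u ^ 2 :=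
  calc rexp (-u ^ 2) ^ 2 = (rexp (2 * u ^ 2))⁻¹ := by
        rw [← exp_nat_mul, ← exp_neg]
        congr 1
        push_cast
        ring
    _ ≤ (1 + 2 * u ^ 2)⁻¹ := by
        gcongr
        linarith [add_one_le_exp (2 * u ^ 2)]
    _ ≤ 1 - 2 / 3 * u ^ 2 := by
        rw [inv_le_iff_one_le_mul₀ (by positivity)]
        nlinarith [sq_nonneg u]

lemma sq_mul_exp_neg_sq_add_le {a u : ℝ} (ha : 0 ≤ a) (hu : 0 ≤ u) (hu1 : u ≤ 1) :
    (a * rexp (-u ^ 2) + u) ^ 2 ≤ a ^ 2 + 3 := by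
  have hE : rexp (-u ^ 2) ≤ 1 := exp_le_one_iff.2 (by nlinarith)
  have hsq : a ^ 2 * rexp (-u ^ 2) ^ 2 ≤ a ^ 2 * (1 - 2 / 3 * u ^ 2) := by
    gcongr
    exact exp_neg_sq_sq_le (pow_le_one₀ hu hu1)
  have hcross : a * rexp (-u ^ 2) * u ≤ a * u := by
    gcongr
    exact mul_le_of_le_one_right ha hE
  nlinarith [sq_nonneg (a * u - 3 / 2)]

lemma norm_sum_mul_exp_neg_sq_le (J : ℕ) {f h : ℕ → ℂ} (hf : ∀ j, ‖f j‖ ≤ 1)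
    (hh : ∀ j, (h j).re = ‖f j‖ ^ 2) :
    ‖∑ j ∈ range J, f j * Complex.exp (-∑ i ∈ Ico (j + 1) J, h i)‖ ^ 2 ≤ 3 * J := by
  induction J with
  | zero => simp
  | succ J ih =>
    set S := ∑ j ∈ range J, f j * Complex.exp (-∑ i ∈ Ico (j + 1) J, h i) with hS
    have hrec : ∑ j ∈ range (J + 1), f j * Complex.exp (-∑ i ∈ Ico (j + 1) (J + 1), h i) =
        S * Complex.exp (-h J) + f J := by
      rw [sum_range_succ, Ico_self, sum_empty, neg_zero, Complex.exp_zero, mul_one, hS, sum_mul]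
      congr 1
      refine sum_congr rfl fun j hj => ?_
      rw [sum_Ico_succ_top (mem_range.1 hj), neg_add, Complex.exp_add, mul_assoc]
    calc ‖∑ j ∈ range (J + 1), f j * Complex.exp (-∑ i ∈ Ico (j + 1) (J + 1), h i)‖ ^ 2
        ≤ (‖S‖ * rexp (-‖f J‖ ^ 2) + ‖f J‖) ^ 2 := by
          rw [hrec]
          gcongr
          refine (norm_add_le _ _).trans_eq ?_
          rw [norm_mul, Complex.norm_exp, Complex.neg_re, hh]
      _ ≤ ‖S‖ ^ 2 + 3 := sq_mul_exp_neg_sq_add_le (norm_nonneg _) (norm_nonneg _) (hf J)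
      _ ≤ 3 * (J + 1 : ℕ) := by
          push_cast
          linarith

/-- The average over the block of frequencies `X` of the characters, weighted by `s`. -/
noncomputable def blockMean (X : Finset ℤ) (s : ℤ → ℂ) (θ : ℝ) : ℂ :=
  (#X : ℂ)⁻¹ * ∑ x ∈ X, s x * expI x θ

/-- The polynomial whose real part on the unit circle is `‖blockMean X s‖ ^ 2`: the analytic half
of the Fourier expansion of that square. The weight `1 + (x - y).sign` doubles the positive
frequencies `x - y`, keeps the constant term, and kills the negative ones, for which `toNat` is a
junk value. -/
noncomputable def analyticSq (X : Finset ℤ) (s : ℤ → ℂ) (z : ℂ) : ℂ :=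
  (#X : ℂ)⁻¹ ^ 2 * ∑ y ∈ X, conj (s y) * ∑ x ∈ X, (1 + (x - y).sign : ℤ) * s x * z ^ (x - y).toNat

@[fun_prop]
lemma continuous_blockMean (X : Finset ℤ) (s : ℤ → ℂ) : Continuous (blockMean X s) := by
  unfold blockMean
  fun_prop

@[fun_prop]
lemma differentiable_analyticSq (X : Finset ℤ) (s : ℤ → ℂ) : Differentiable ℂ (analyticSq X s) := by
  unfold analyticSq
  fun_prop

@[fun_prop]
lemma continuous_analyticSq (X : Finset ℤ) (s : ℤ → ℂ) : Continuous (analyticSq X s) :=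
  (differentiable_analyticSq X s).continuous

lemma norm_blockMean_le_one (X : Finset ℤ) {s : ℤ → ℂ} (hs : ∀ x, ‖s x‖ ≤ 1) (θ : ℝ) :
    ‖blockMean X s θ‖ ≤ 1 := by
  have hsum : ‖∑ x ∈ X, s x * expI x θ‖ ≤ #X := by
    simpa using norm_sum_le_of_le X (f := fun x => s x * expI x θ) (n := fun _ => 1)
      fun x _ => by simpa using hs x
  rw [blockMean, norm_mul, norm_inv, Complex.norm_natCast, inv_mul_eq_div]
  exact div_le_one_of_le₀ hsum (Nat.cast_nonneg _)

lemma sum_analyticSq_expI (X : Finset ℤ) (s : ℤ → ℂ) (y : ℤ) (θ : ℝ) :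
    ∑ x ∈ X, (1 + (x - y).sign : ℤ) * s x * expI 1 θ ^ (x - y).toNat =
      ∑ x ∈ X, (1 + (x - y).sign : ℤ) * s x * expI (x - y) θ := by
  refine sum_congr rfl fun x _ => ?_
  rcases lt_or_ge (x - y) 0 with h | h
  · simp [Int.sign_eq_neg_one_of_neg h]
  · rw [expI_one_pow, Int.toNat_of_nonneg h]

lemma sum_sum_one_add_sign_mul {X : Finset ℤ} {a : ℤ → ℤ → ℝ} (ha : ∀ x y, a x y = a y x) :
    ∑ y ∈ X, ∑ x ∈ X, (1 + (x - y).sign : ℤ) * a x y = ∑ y ∈ X, ∑ x ∈ X, a x y := by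
  have hanti : ∑ y ∈ X, ∑ x ∈ X, ((x - y).sign : ℝ) * a x y = 0 := by
    refine self_eq_neg.1 ?_
    rw [← sum_neg_distrib, sum_comm]
    refine sum_congr rfl fun x _ => ?_
    rw [← sum_neg_distrib]
    refine sum_congr rfl fun y _ => ?_
    rw [← neg_sub, Int.sign_neg, ha]
    push_cast
    ring
  push_cast
  simp_rw [add_mul, one_mul, sum_add_distrib]
  rw [hanti, add_zero]

lemma analyticSq_expI_re (X : Finset ℤ) (s : ℤ → ℂ) (θ : ℝ) :
    (analyticSq X s (expI 1 θ)).re = ‖blockMean X s θ‖ ^ 2 := by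
  set a : ℤ → ℤ → ℂ := fun x y => s x * conj (s y) * expI (x - y) θ with ha
  have hsymm : ∀ x y, (a x y).re = (a y x).re := fun x y => by
    rw [← Complex.conj_re (a y x)]
    simp only [ha, map_mul, Complex.conj_conj, conj_expI, neg_sub, mul_comm (s x)]
  have hsq : ‖∑ x ∈ X, s x * expI x θ‖ ^ 2 = ∑ y ∈ X, ∑ x ∈ X, (a x y).re := by
    have h := congrArg Complex.re (norm_sq_sum_mul_expI X s id θ)
    rw [sum_comm]
    simpa only [id_eq, ha, Complex.ofReal_re, Complex.re_sum] using h
  have hcast : ((#X : ℂ)⁻¹ ^ 2) = (((#X : ℝ)⁻¹ ^ 2 : ℝ) : ℂ) := by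
    push_cast
    rfl
  rw [analyticSq, hcast, Complex.re_ofReal_mul, blockMean, norm_mul, mul_pow, norm_inv,
    Complex.norm_natCast, hsq, ← sum_sum_one_add_sign_mul hsymm, Complex.re_sum]
  congr 1
  refine sum_congr rfl fun y _ => ?_
  rw [sum_analyticSq_expI, mul_sum, Complex.re_sum]
  refine sum_congr rfl fun x _ => ?_
  rw [← Complex.ofReal_intCast, ← Complex.re_ofReal_mul]
  simp only [ha]
  ring_nf

lemma norm_one_add_sign_mul_le (n : ℤ) {z : ℂ} (hz : ‖z‖ ≤ 1) :
    ‖((1 + n.sign : ℤ) : ℂ) * z‖ ≤ 2 := by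
  have hn : |1 + n.sign| ≤ 2 := by
    rcases Int.sign_trichotomy n with h | h | h <;> simp [h]
  have hn' : ‖((1 + n.sign : ℤ) : ℂ)‖ ≤ 2 := by
    rw [Complex.norm_intCast]
    exact_mod_cast hn
  calc ‖((1 + n.sign : ℤ) : ℂ) * z‖ ≤ 2 * 1 := by
        rw [norm_mul]
        gcongr
    _ = 2 := mul_one 2

lemma integral_norm_sq_analyticSq_le (X : Finset ℤ) {s : ℤ → ℂ} (hs : ∀ x, ‖s x‖ ≤ 1) :
    ∫ θ in 0..2 * π, ‖analyticSq X s (expI 1 θ)‖ ^ 2 ≤ 2 * π * (4 / #X) := by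
  set R : ℤ → ℝ → ℂ := fun y θ =>
    conj (s y) * ∑ x ∈ X, (1 + (x - y).sign : ℤ) * s x * expI (x - y) θ with hR
  have hRint : ∀ y, ∫ θ in 0..2 * π, ‖R y θ‖ ^ 2 ≤ 2 * π * (4 * #X) := fun y => by
    simp only [hR, norm_mul (conj (s y)), mul_pow]
    rw [intervalIntegral.integral_const_mul, integral_norm_sq_sum_mul_expI _
      (sub_left_injective.injOn)]
    calc _ ≤ 1 ^ 2 * (2 * π * ∑ _x ∈ X, (2 : ℝ) ^ 2) := by
          gcongr
          · simpa using hs y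
          · exact norm_one_add_sign_mul_le _ (hs _)
      _ = 2 * π * (4 * #X) := by
          simp only [sum_const, nsmul_eq_mul]
          ring
  calc ∫ θ in 0..2 * π, ‖analyticSq X s (expI 1 θ)‖ ^ 2
      = ((#X : ℝ)⁻¹ ^ 2) ^ 2 * ∫ θ in 0..2 * π, ‖∑ y ∈ X, R y θ‖ ^ 2 := by
        simp only [hR, analyticSq, sum_analyticSq_expI, norm_mul ((#X : ℂ)⁻¹ ^ 2), norm_pow,
          norm_inv, Complex.norm_natCast, mul_pow, intervalIntegral.integral_const_mul]
    _ ≤ ((#X : ℝ)⁻¹ ^ 2) ^ 2 * (#X ^ 2 * (2 * π * (4 * #X))) := by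
        gcongr
        exact integral_norm_sq_sum_le (fun y _ => by fun_prop) two_pi_pos.le fun y _ => hRint y
    _ = 2 * π * (4 / #X) := by
        field_simp

lemma exists_subset_card_eq_forall_mem_of_le {α : Type*} [LinearOrder α] (B : Finset α) {n : ℕ}
    (hn : n ≤ #B) : ∃ X ⊆ B, #X = n ∧ ∀ x ∈ X, ∀ b ∈ B, x ≤ b → b ∈ X := by
  induction n with
  | zero => exact ⟨∅, by simp⟩
  | succ n ih =>
    obtain ⟨X, hXB, hcard, hupper⟩ := ih (Nat.le_of_succ_le hn)
    have hne : (B \ X).Nonempty := by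
      rw [← card_pos, card_sdiff_of_subset hXB]
      omega
    obtain ⟨hmB, hmX⟩ := mem_sdiff.1 ((B \ X).max'_mem hne)
    refine ⟨insert ((B \ X).max' hne) X, insert_subset hmB hXB,
      by rw [card_insert_of_notMem hmX, hcard], fun x hx b hb hxb => ?_⟩
    by_contra hbX
    rw [mem_insert, not_or] at hbX
    have hbm := le_max' (B \ X) b (mem_sdiff.2 ⟨hb, hbX.2⟩)
    rcases mem_insert.1 hx with rfl | hx
    · exact hbX.1 (le_antisymm hbm hxb)
    · exact hbX.2 (hupper x hx b hb hxb)

/-- The factor correcting the block mean of `X j` so that the sum over all the blocks `X 0, …,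
X (J - 1)` stays bounded by `√(3 J)`; it has only nonnegative frequencies and is close to `1`. -/
noncomputable def damping (X : ℕ → Finset ℤ) (s : ℤ → ℂ) (J j : ℕ) (z : ℂ) : ℂ :=
  Complex.exp (-∑ i ∈ Ico (j + 1) J, analyticSq (X i) s z)

@[fun_prop]
lemma differentiable_damping (X : ℕ → Finset ℤ) (s : ℤ → ℂ) (J j : ℕ) :
    Differentiable ℂ (damping X s J j) := by
  unfold damping
  fun_prop

@[fun_prop]
lemma continuous_damping (X : ℕ → Finset ℤ) (s : ℤ → ℂ) (J j : ℕ) :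
    Continuous (damping X s J j) :=
  (differentiable_damping X s J j).continuous

/-- The test function of the duality argument: a sum of damped block means. -/
noncomputable def testFunction (X : ℕ → Finset ℤ) (s : ℤ → ℂ) (J : ℕ) (θ : ℝ) : ℂ :=
  ∑ j ∈ range J, blockMean (X j) s θ * damping X s J j (expI 1 θ)

section TestFunction

variable {X : ℕ → Finset ℤ} {s : ℤ → ℂ} {lam J : ℕ}

lemma norm_testFunction_sq_le (hs : ∀ x, ‖s x‖ ≤ 1) (θ : ℝ) :
    ‖testFunction X s J θ‖ ^ 2 ≤ 3 * J :=
  norm_sum_mul_exp_neg_sq_le J (fun _ => norm_blockMean_le_one _ hs θ)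
    fun _ => analyticSq_expI_re _ s θ

lemma integral_norm_sq_damping_sub_one_le (hs : ∀ x, ‖s x‖ ≤ 1) (hlam : 0 < lam)
    (hX : ∀ j < J, #(X j) = lam ^ j) (j : ℕ) :
    ∫ θ in 0..2 * π, ‖damping X s J j (expI 1 θ) - 1‖ ^ 2 ≤
      2 * π * (4 * J ^ 2 / lam ^ (j + 1)) := by
  have hlam1 : (1 : ℝ) ≤ lam := by exact_mod_cast hlam
  have hblock : ∀ i ∈ Ico (j + 1) J, ∫ θ in 0..2 * π, ‖analyticSq (X i) s (expI 1 θ)‖ ^ 2 ≤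
      2 * π * (4 / lam ^ (j + 1)) := fun i hi => by
    rw [mem_Ico] at hi
    refine (integral_norm_sq_analyticSq_le (X i) hs).trans ?_
    rw [hX i hi.2, Nat.cast_pow]
    gcongr
    exact hi.1
  calc ∫ θ in 0..2 * π, ‖damping X s J j (expI 1 θ) - 1‖ ^ 2
      ≤ ∫ θ in 0..2 * π, ‖∑ i ∈ Ico (j + 1) J, analyticSq (X i) s (expI 1 θ)‖ ^ 2 := by
        refine intervalIntegral.integral_mono_on two_pi_pos.le
          (Continuous.intervalIntegrable (by fun_prop) _ _)
          (Continuous.intervalIntegrable (by fun_prop) _ _) fun θ _ => ?_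
        refine pow_le_pow_left₀ (norm_nonneg _) (norm_exp_neg_sub_one_le ?_) 2
        rw [Complex.re_sum]
        exact sum_nonneg fun i _ => by rw [analyticSq_expI_re]; positivity
    _ ≤ #(Ico (j + 1) J) ^ 2 * (2 * π * (4 / lam ^ (j + 1))) :=
        integral_norm_sq_sum_le (fun i _ => by fun_prop) two_pi_pos.le hblock
    _ ≤ J ^ 2 * (2 * π * (4 / lam ^ (j + 1))) := by
        gcongr
        rw [Nat.card_Ico]
        exact Nat.sub_le _ _
    _ = 2 * π * (4 * J ^ 2 / lam ^ (j + 1)) := by ring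

lemma le_re_mul_integral_trigPoly_mul {W : Finset ℤ} {c : ℤ → ℂ} {F : ℂ → ℂ}
    (hF : Differentiable ℂ F) {x : ℤ} (hx : x ∈ W) {ε : ℂ} (hε : ‖ε‖ ≤ 1) (hεc : ε * c x = ‖c x‖)
    {δ L η : ℝ} (hδ : 0 < δ) (hδc : δ ≤ ‖c x‖) (hL : 0 < L)
    (htail : ∑ w ∈ W with x ≤ w, ‖c w‖ ^ 2 ≤ L)
    (hFη : ∫ θ in 0..2 * π, ‖F (expI 1 θ) - 1‖ ^ 2 ≤ 2 * π * η) (hη : 4 * L * η ≤ δ ^ 2) :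
    π * δ ≤ (ε * ∫ θ in 0..2 * π, trigPoly W c θ * (expI x θ * F (expI 1 θ))).re := by
  have hFc : Continuous F := hF.continuous
  set I := ∫ θ in 0..2 * π, trigPoly W c θ * (expI x θ * (F (expI 1 θ) - 1)) with hI
  have hsplit : ∫ θ in 0..2 * π, trigPoly W c θ * (expI x θ * F (expI 1 θ)) =
      2 * π * c x + I := by
    rw [hI, ← integral_trigPoly_mul_expI c hx, ← intervalIntegral.integral_add
      (Continuous.intervalIntegrable (by fun_prop) _ _)
      (Continuous.intervalIntegrable (by fun_prop) _ _)]
    exact intervalIntegral.integral_congr fun θ _ => by ring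
  have hleak : ‖I‖ ≤ π * δ := by
    rw [hI, integral_trigPoly_mul_expI_mul_eq (F := fun z => F z - 1) (by fun_prop)]
    refine norm_integral_mul_le_of_sq_le (by fun_prop) (by fun_prop) two_pi_pos.le
      (α := 2 * π * L) (β := 2 * π * η) (by positivity) ?_ (by simpa using hFη) (by positivity) ?_
    · unfold trigPoly
      rw [integral_norm_sq_sum_mul_expI c neg_injective.injOn]
      gcongr
    · nlinarith [mul_le_mul_of_nonneg_left hη (sq_nonneg π)]
  have hεI : |(ε * I).re| ≤ π * δ := (Complex.abs_re_le_norm _).trans <| by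
    rw [norm_mul]
    exact (mul_le_of_le_one_left (norm_nonneg _) hε).trans hleak
  have hmain : (ε * (2 * π * c x)).re = 2 * π * ‖c x‖ := by
    rw [mul_left_comm, hεc]
    norm_cast
  rw [hsplit, mul_add, Complex.add_re, hmain]
  nlinarith [(abs_le.1 hεI).1, pi_pos]

lemma integral_mul_testFunction {G : ℝ → ℂ} (hG : Continuous G) :
    ∫ θ in 0..2 * π, G θ * testFunction X s J θ = ∑ j ∈ range J, (#(X j) : ℂ)⁻¹ *
      ∑ x ∈ X j, s x * ∫ θ in 0..2 * π, G θ * (expI x θ * damping X s J j (expI 1 θ)) := by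
  simp only [testFunction, mul_sum]
  rw [integral_sum_of_continuous fun j _ => by fun_prop]
  refine sum_congr rfl fun j _ => ?_
  have hexpand : ∀ θ, G θ * (blockMean (X j) s θ * damping X s J j (expI 1 θ)) =
      ∑ x ∈ X j, (#(X j) : ℂ)⁻¹ *
        (s x * (G θ * (expI x θ * damping X s J j (expI 1 θ)))) := fun θ => by
    rw [blockMean, ← mul_sum, mul_assoc, mul_left_comm, sum_mul, mul_sum]
    congr 1
    exact sum_congr rfl fun x _ => by ring
  simp_rw [hexpand]
  rw [integral_sum_of_continuous fun x _ => by fun_prop]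
  simp only [intervalIntegral.integral_const_mul]

lemma le_re_integral_mul_testFunction {G : ℝ → ℂ} (hG : Continuous G)
    (hX : ∀ j < J, (X j).Nonempty) {r : ℝ}
    (hr : ∀ j < J, ∀ x ∈ X j,
      r ≤ (s x * ∫ θ in 0..2 * π, G θ * (expI x θ * damping X s J j (expI 1 θ))).re) :
    J * r ≤ (∫ θ in 0..2 * π, G θ * testFunction X s J θ).re := by
  have hmean : ∀ j ∈ range J, r ≤ ((#(X j) : ℂ)⁻¹ * ∑ x ∈ X j,
      s x * ∫ θ in 0..2 * π, G θ * (expI x θ * damping X s J j (expI 1 θ))).re := fun j hj => by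
    rw [mem_range] at hj
    have hcard : (0 : ℝ) < #(X j) := by exact_mod_cast (hX j hj).card_pos
    rw [← Complex.ofReal_natCast, ← Complex.ofReal_inv, Complex.re_ofReal_mul, Complex.re_sum,
      le_inv_mul_iff₀ hcard, ← nsmul_eq_mul]
    exact card_nsmul_le_sum _ _ _ (hr j hj)
  rw [integral_mul_testFunction hG, Complex.re_sum]
  simpa using card_nsmul_le_sum (range J) _ r hmean

lemma re_integral_mul_testFunction_le {G : ℝ → ℂ} (hG : Continuous G) (hs : ∀ x, ‖s x‖ ≤ 1) :
    (∫ θ in 0..2 * π, G θ * testFunction X s J θ).re ≤ √(3 * J) * ∫ θ in 0..2 * π, ‖G θ‖ := by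
  have hφ : Continuous (testFunction X s J) := by
    unfold testFunction
    fun_prop
  refine (Complex.re_le_norm _).trans
    ((intervalIntegral.norm_integral_le_integral_norm two_pi_pos.le).trans ?_)
  rw [← intervalIntegral.integral_const_mul]
  refine intervalIntegral.integral_mono_on two_pi_pos.le
    (Continuous.intervalIntegrable (by fun_prop) _ _)
    (Continuous.intervalIntegrable (by fun_prop) _ _) fun θ _ => ?_
  rw [norm_mul, mul_comm]
  gcongr
  exact le_sqrt_of_sq_le (norm_testFunction_sq_le hs θ)

end TestFunction

lemma exists_norm_le_one_mul_eq_norm (z : ℂ) : ∃ ε : ℂ, ‖ε‖ ≤ 1 ∧ ε * z = ‖z‖ :=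
  ⟨conj z / ‖z‖, by simpa using div_self_le_one ‖z‖, by
    rw [div_mul_eq_mul_div, Complex.conj_mul', sq, mul_self_div_self]⟩

lemma sum_norm_sq_le_of_card_le {W B X : Finset ℤ} {c : ℤ → ℂ} {M K : ℝ} (hK : 0 ≤ K) {x : ℤ}
    (hc : ∀ w ∈ W, ‖c w‖ ≤ M) (hcount : (#{w ∈ W | x ≤ w} : ℝ) ≤ K * #{b ∈ B | x ≤ b})
    (hX : ∀ b ∈ B, x ≤ b → b ∈ X) : ∑ w ∈ W with x ≤ w, ‖c w‖ ^ 2 ≤ M ^ 2 * (K * #X) :=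
  calc ∑ w ∈ W with x ≤ w, ‖c w‖ ^ 2 ≤ #{w ∈ W | x ≤ w} • M ^ 2 :=
        sum_le_card_nsmul _ _ _ fun w hw => by
          gcongr
          exact hc w (mem_filter.1 hw).1
    _ = M ^ 2 * #{w ∈ W | x ≤ w} := by rw [nsmul_eq_mul, mul_comm]
    _ ≤ M ^ 2 * (K * #{b ∈ B | x ≤ b}) := by gcongr
    _ ≤ M ^ 2 * (K * #X) := by
        gcongr
        exact fun b hb => hX b (mem_filter.1 hb).1 (mem_filter.1 hb).2

-- The argument of McGehee, Pigno and Smith: pair `trigPoly W c` with a bounded test function built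
-- on upper sets `X 0, X 1, …` of `B` of sizes `1, lam, lam ^ 2, …`.
theorem mul_sq_le_sq_integral_norm_trigPoly {W B : Finset ℤ} {c : ℤ → ℂ} {M δ K : ℝ} {J lam : ℕ}
    (hM : 0 < M) (hδ : 0 < δ) (hK : 0 < K) (hlam : 0 < lam) (hBW : B ⊆ W)
    (hc : ∀ w ∈ W, ‖c w‖ ≤ M) (hB : ∀ b ∈ B, δ ≤ ‖c b‖)
    (hcount : ∀ x ∈ B, (#{w ∈ W | x ≤ w} : ℝ) ≤ K * #{b ∈ B | x ≤ b})
    (hlamJ : 16 * J ^ 2 * M ^ 2 * K ≤ lam * δ ^ 2) (hcard : lam ^ J ≤ #B) :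
    J * (π * δ) ^ 2 ≤ 3 * (∫ θ in 0..2 * π, ‖trigPoly W c θ‖) ^ 2 := by
  choose X hXB hXcard hXupper using fun j : ℕ =>
    exists_subset_card_eq_forall_mem_of_le B (min_le_right (lam ^ j) #B)
  have hX : ∀ j < J, #(X j) = lam ^ j := fun j hj => by
    rw [hXcard, min_eq_left ((Nat.pow_le_pow_right hlam hj.le).trans hcard)]
  choose s hs hsc using fun x => exists_norm_le_one_mul_eq_norm (c x)
  have hlow : J * (π * δ) ≤ (∫ θ in 0..2 * π, trigPoly W c θ * testFunction X s J θ).re := by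
    refine le_re_integral_mul_testFunction (by fun_prop)
      (fun j hj => card_pos.1 (by rw [hX j hj]; positivity)) fun j hj x hx => ?_
    have hxB := hXB j hx
    have htail := sum_norm_sq_le_of_card_le hK.le hc (hcount x hxB) (hXupper j x hx)
    rw [hX j hj] at htail
    refine le_re_mul_integral_trigPoly_mul (by fun_prop) (hBW hxB) (hs x) (hsc x) hδ (hB x hxB)
      (by positivity) htail (integral_norm_sq_damping_sub_one_le hs hlam hX j) ?_
    have hlam0 : (0 : ℝ) < lam := by exact_mod_cast hlam
    calc 4 * (M ^ 2 * (K * (lam ^ j : ℕ))) * (4 * (J : ℝ) ^ 2 / lam ^ (j + 1))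
        = 16 * J ^ 2 * M ^ 2 * K / lam := by
          push_cast
          field_simp
          ring
      _ ≤ δ ^ 2 := by
          rw [div_le_iff₀' hlam0]
          exact hlamJ
  set I := ∫ θ in 0..2 * π, ‖trigPoly W c θ‖
  have hsq : (J * (π * δ)) ^ 2 ≤ (√(3 * J) * I) ^ 2 := pow_le_pow_left₀ (by positivity)
    (hlow.trans (re_integral_mul_testFunction_le (by fun_prop) hs)) 2
  rw [mul_pow, mul_pow (√_), sq_sqrt (by positivity)] at hsq
  rcases J.eq_zero_or_pos with rfl | hJ
  · simp only [Nat.cast_zero, zero_mul]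
    positivity
  · have hJ0 : (0 : ℝ) < J := by exact_mod_cast hJ
    nlinarith

/-! ### Cosine sums and their Fourier coefficients -/

/-- The cosine polynomial with frequency set `A` and all coefficients equal to one. -/
noncomputable def cosSum (A : Finset ℕ) (θ : ℝ) : ℝ := ∑ a ∈ A, cos (a * θ)

/-- The Fourier coefficients of `2 * cosSum A`, that is, `1_A (n) + 1_A (-n)`. -/
def cosCoeff (A : Finset ℕ) (n : ℤ) : ℤ :=
  ∑ a ∈ A, ((if (a : ℤ) = n then 1 else 0) + (if -(a : ℤ) = n then 1 else 0))

@[fun_prop]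
lemma continuous_cosSum (A : Finset ℕ) : Continuous (cosSum A) := by
  unfold cosSum
  fun_prop

lemma cosCoeff_nonneg (A : Finset ℕ) (n : ℤ) : 0 ≤ cosCoeff A n :=
  sum_nonneg fun a _ => by split_ifs <;> norm_num

lemma cosCoeff_le_two (A : Finset ℕ) (n : ℤ) : cosCoeff A n ≤ 2 := by
  have hfiber : ∀ f : ℕ → ℤ, f.Injective → ∑ a ∈ A, (if f a = n then (1 : ℤ) else 0) ≤ 1 :=
    fun f hf => by
      rw [sum_boole, Nat.cast_le_one, card_le_one]
      exact fun a ha b hb => hf ((mem_filter.1 ha).2.trans (mem_filter.1 hb).2.symm)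
  have hpos := hfiber _ Nat.cast_injective
  have hneg := hfiber _ (neg_injective.comp Nat.cast_injective)
  rw [cosCoeff, sum_add_distrib]
  exact add_le_add hpos hneg

lemma cosCoeff_ne_zero_iff {A : Finset ℕ} {n : ℤ} : cosCoeff A n ≠ 0 ↔ n.natAbs ∈ A := by
  rw [cosCoeff, Ne, sum_eq_zero_iff_of_nonneg fun a _ => by split_ifs <;> norm_num]
  push Not
  constructor
  · rintro ⟨a, ha, hne⟩
    obtain rfl : n.natAbs = a := by
      split_ifs at hne <;> omega
    exact ha
  · refine fun hn => ⟨_, hn, ?_⟩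
    split_ifs <;> omega

lemma cosCoeff_neg (A : Finset ℕ) (n : ℤ) : cosCoeff A (-n) = cosCoeff A n :=
  sum_congr rfl fun a _ => by
    simp only [← neg_eq_iff_eq_neg, neg_neg]
    rw [add_comm]

lemma sum_cosCoeff_add_mul {R : Type*} [Ring R] {A : Finset ℕ} {s : ℤ} {I : Finset ℤ}
    (hI : ∀ n, cosCoeff A (n + s) ≠ 0 → n ∈ I) (F : ℤ → R) :
    ∑ n ∈ I, cosCoeff A (n + s) * F n = ∑ a ∈ A, (F (a - s) + F (-a - s)) := by
  have hpoint : ∀ m : ℤ, m.natAbs ∈ A →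
      ∑ n ∈ I, (if m = n + s then (1 : R) else 0) * F n = F (m - s) := fun m hm => by
    have hmI : m - s ∈ I := hI _ (by rwa [sub_add_cancel, cosCoeff_ne_zero_iff])
    simp only [← sub_eq_iff_eq_add, ite_mul, one_mul, zero_mul, sum_ite_eq, if_pos hmI]
  simp only [cosCoeff]
  push_cast
  simp only [sum_mul]
  rw [sum_comm]
  refine sum_congr rfl fun a ha => ?_
  rw [← hpoint a (by simpa using ha), ← hpoint (-a) (by simpa using ha), ← sum_add_distrib]
  simp only [add_mul]

lemma two_mul_cosSum (A : Finset ℕ) (θ : ℝ) :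
    2 * (cosSum A θ : ℂ) = ∑ a ∈ A, (expI a θ + expI (-a) θ) := by
  rw [cosSum, Complex.ofReal_sum, mul_sum]
  exact sum_congr rfl fun a _ => by rw [expI_add_expI_neg, Int.cast_natCast]

lemma integral_cosSum_mul_expI (A : Finset ℕ) (n : ℤ) :
    ∫ θ in 0..2 * π, (cosSum A θ : ℂ) * expI n θ = π * cosCoeff A n := by
  have hexpand : ∀ θ, (cosSum A θ : ℂ) * expI n θ =
      ∑ a ∈ A, (1 / 2 : ℂ) * (expI (-a + n) θ + expI (a + n) θ) := fun θ => by
    rw [← mul_sum, ← mul_right_inj' two_ne_zero, ← mul_assoc, two_mul_cosSum, sum_mul,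
      ← mul_assoc, mul_one_div_cancel two_ne_zero, one_mul]
    exact sum_congr rfl fun a _ => by rw [expI_add, expI_add]; ring
  simp_rw [hexpand]
  rw [integral_sum_of_continuous fun a _ => by fun_prop, cosCoeff]
  push_cast
  rw [mul_sum]
  refine sum_congr rfl fun a _ => ?_
  rw [intervalIntegral.integral_const_mul, intervalIntegral.integral_add
    (Continuous.intervalIntegrable (by fun_prop) _ _)
    (Continuous.intervalIntegrable (by fun_prop) _ _), integral_expI, integral_expI]
  have h₁ : (-(a : ℤ) + n = 0) ↔ ((a : ℤ) = n) := by omega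
  have h₂ : ((a : ℤ) + n = 0) ↔ (-(a : ℤ) = n) := by omega
  simp only [h₁, h₂]
  split_ifs <;> ring

lemma norm_integral_cosSum_mul_expI_le (A : Finset ℕ) (n : ℤ) :
    ‖∫ θ in 0..2 * π, (cosSum A θ : ℂ) * expI n θ‖ ≤ 2 * π := by
  have hn : |cosCoeff A n| ≤ 2 := by
    rw [abs_of_nonneg (cosCoeff_nonneg A n)]
    exact cosCoeff_le_two A n
  have hn' : (|(cosCoeff A n : ℝ)|) ≤ 2 := by exact_mod_cast hn
  rw [integral_cosSum_mul_expI, norm_mul, Complex.norm_intCast, Complex.norm_of_nonneg pi_pos.le,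
    mul_comm]
  gcongr

/-! ### Correcting the signs of a cosine sum -/

lemma exists_forall_abs_eq_mul {f : ℝ → ℝ} {a b : ℝ} (hab : a < b)
    (hf : ContinuousOn f (Set.Icc a b)) (h0 : ∀ x ∈ Set.Ioo a b, f x ≠ 0) :
    ∃ σ : ℝ, |σ| = 1 ∧ ∀ x ∈ Set.Icc a b, |f x| = σ * f x := by
  have hIoo : ContinuousOn f (Set.Ioo a b) := hf.mono Set.Ioo_subset_Icc_self
  have hsign : (∀ x ∈ Set.Ioo a b, 0 < f x) ∨ ∀ x ∈ Set.Ioo a b, f x < 0 := by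
    by_contra! ⟨⟨x, hx, hfx⟩, y, hy, hfy⟩
    obtain ⟨z, hz, hfz⟩ := isPreconnected_Ioo.intermediate_value hx hy hIoo ⟨hfx, hfy⟩
    exact h0 z hz hfz
  have hextend : ∀ σ : ℝ, Set.EqOn (fun x => |f x|) (fun x => σ * f x) (Set.Ioo a b) →
      ∀ x ∈ Set.Icc a b, |f x| = σ * f x := fun σ h =>
    h.of_subset_closure hf.abs (hf.const_mul σ) Set.Ioo_subset_Icc_self (closure_Ioo hab.ne).ge
  rcases hsign with hpos | hneg
  · exact ⟨1, abs_one, hextend 1 fun x hx => by simpa using (hpos x hx).le⟩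
  · exact ⟨-1, by simp, hextend (-1) fun x hx => by simpa using (hneg x hx).le⟩

lemma exists_roots_forall_abs_eval_mul_prod_eq {a b : ℝ} (hab : a < b) {P : ℝ[X]} (hP : P ≠ 0) :
    ∃ T : Finset ℝ, (∀ r ∈ T, r ∈ Set.Ioo a b ∧ P.IsRoot r) ∧ ∃ σ : ℝ, |σ| = 1 ∧
      ∀ x ∈ Set.Icc a b, |P.eval x * ∏ r ∈ T, (x - r)| = σ * (P.eval x * ∏ r ∈ T, (x - r)) := by
  induction hn : P.natDegree using Nat.strong_induction_on generalizing P with | _ n ih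
  by_cases hroot : ∃ r ∈ Set.Ioo a b, P.IsRoot r
  swap
  · push Not at hroot
    obtain ⟨σ, hσ, h⟩ := exists_forall_abs_eq_mul hab P.continuousOn hroot
    exact ⟨∅, by simp, σ, hσ, by simpa using h⟩
  obtain ⟨r, hr, hPr⟩ := hroot
  obtain ⟨Q, rfl⟩ := dvd_iff_isRoot.2 hPr
  have hQ : Q ≠ 0 := right_ne_zero_of_mul hP
  have hdeg : Q.natDegree < n := by
    rw [← hn, natDegree_mul (X_sub_C_ne_zero r) hQ, natDegree_X_sub_C]
    omega
  obtain ⟨T, hT, σ, hσ, hsign⟩ := ih _ hdeg hQ rfl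
  have hroots : ∀ t ∈ T, t ∈ Set.Ioo a b ∧ ((X - C r) * Q).IsRoot t := fun t ht =>
    ⟨(hT t ht).1, (hT t ht).2.dvd (dvd_mul_left _ _)⟩
  by_cases hrT : r ∈ T
  · refine ⟨T.erase r, fun t ht => hroots t (mem_of_mem_erase ht), σ, hσ, fun x hx => ?_⟩
    have hprod : ((X - C r) * Q).eval x * ∏ t ∈ T.erase r, (x - t) =
        Q.eval x * ∏ t ∈ T, (x - t) := by
      rw [← mul_prod_erase T _ hrT, eval_mul, eval_sub, eval_X, eval_C]
      ring
    rw [hprod, hsign x hx]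
  · refine ⟨insert r T, forall_mem_insert _ _ _ |>.2 ⟨⟨hr, hPr⟩, hroots⟩, σ, hσ, fun x hx => ?_⟩
    have hprod : ((X - C r) * Q).eval x * ∏ t ∈ insert r T, (x - t) =
        (x - r) ^ 2 * (Q.eval x * ∏ t ∈ T, (x - t)) := by
      rw [prod_insert hrT, eval_mul, eval_sub, eval_X, eval_C]
      ring
    rw [hprod, abs_mul, abs_sq, hsign x hx]
    ring

/-- The monic polynomial whose value at `exp (iθ)` is `∏ r ∈ T, 2 * (cos θ - r)`, up to a factor
of modulus one. -/
noncomputable def signPoly (T : Finset ℝ) : ℝ[X] := ∏ r ∈ T, (X ^ 2 - C (2 * r) * X + 1)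

lemma monic_signPoly (T : Finset ℝ) : (signPoly T).Monic :=
  monic_prod_of_monic _ _ fun r _ => by monicity!

lemma natDegree_signPoly (T : Finset ℝ) : (signPoly T).natDegree = 2 * #T := by
  have hdeg : ∀ r : ℝ, (X ^ 2 - C (2 * r) * X + 1 : ℝ[X]).natDegree = 2 := fun r => by
    compute_degree!
  rw [signPoly, natDegree_prod_of_monic _ _ fun r _ => by monicity!,
    sum_congr rfl fun r _ => hdeg r, sum_const, smul_eq_mul, mul_comm]

lemma aeval_expI_one (q : ℝ[X]) (θ : ℝ) :
    aeval (expI 1 θ) q = q.sum fun i a => (a : ℂ) * expI i θ := by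
  simp only [aeval_def, eval₂_eq_sum, expI_one_pow, Complex.coe_algebraMap]

lemma aeval_signPoly (T : Finset ℝ) (θ : ℝ) :
    aeval (expI 1 θ) (signPoly T) = expI #T θ * ∏ r ∈ T, ((2 * (cos θ - r) : ℝ) : ℂ) := by
  have hfactor : ∀ r : ℝ, aeval (expI 1 θ) (X ^ 2 - C (2 * r) * X + 1 : ℝ[X]) =
      expI 1 θ * ((2 * (cos θ - r) : ℝ) : ℂ) := fun r => by
    have hinv : expI 1 θ * expI (-1) θ = 1 := by rw [← expI_add]; simp
    have hcos := expI_add_expI_neg 1 θ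
    simp only [Int.cast_one, one_mul] at hcos
    simp only [map_add, map_sub, map_mul, map_pow, map_one, aeval_X, aeval_C,
      Complex.coe_algebraMap]
    push_cast at hcos ⊢
    linear_combination expI 1 θ * hcos - hinv
  rw [signPoly, map_prod, prod_congr rfl fun r _ => hfactor r, prod_mul_distrib, prod_const,
    expI_one_pow]

lemma abs_coeff_mul_le {p q P Q : ℝ[X]} (hp : ∀ n, |p.coeff n| ≤ P.coeff n)
    (hq : ∀ n, |q.coeff n| ≤ Q.coeff n) (n : ℕ) : |(p * q).coeff n| ≤ (P * Q).coeff n := by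
  rw [coeff_mul, coeff_mul]
  refine (abs_sum_le_sum_abs _ _).trans (sum_le_sum fun x _ => ?_)
  rw [abs_mul]
  exact mul_le_mul (hp _) (hq _) (abs_nonneg _) ((abs_nonneg _).trans (hp _))

lemma sum_abs_le_eval_one {p P : ℝ[X]} (hp : ∀ n, |p.coeff n| ≤ P.coeff n) :
    (p.sum fun _ a => |a|) ≤ P.eval 1 := by
  have hsupp : p.support ⊆ P.support := fun n hn => by
    rw [mem_support_iff] at hn ⊢
    exact ((abs_pos.2 hn).trans_le (hp n)).ne'
  rw [eval_eq_sum, sum_def, sum_def]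
  simp only [one_pow, mul_one]
  exact (sum_le_sum fun n _ => hp n).trans (sum_le_sum_of_subset_of_nonneg hsupp
    fun n _ _ => (abs_nonneg _).trans (hp n))

lemma abs_coeff_quadratic_le {r : ℝ} (hr : |r| ≤ 1) (n : ℕ) :
    |(X ^ 2 - C (2 * r) * X + 1 : ℝ[X]).coeff n| ≤ (X ^ 2 + C 2 * X + 1 : ℝ[X]).coeff n := by
  have hcoeff : ∀ c : ℝ, (X ^ 2 + C c * X + 1 : ℝ[X]).coeff n =
      (if n = 2 then 1 else 0) + c * (if 1 = n then 1 else 0) + if n = 0 then 1 else 0 :=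
    fun c => by rw [coeff_add, coeff_add, coeff_X_pow, coeff_C_mul, coeff_X, coeff_one]
  rw [sub_eq_add_neg, ← neg_mul, ← C_neg, hcoeff, hcoeff]
  rcases n with _ | _ | _ | n <;> simp [hr]

lemma abs_coeff_signPoly_le {T : Finset ℝ} (hT : ∀ r ∈ T, |r| ≤ 1) (n : ℕ) :
    |(signPoly T).coeff n| ≤ ((X ^ 2 + C 2 * X + 1 : ℝ[X]) ^ #T).coeff n := by
  induction T using Finset.induction_on generalizing n with
  | empty =>
    simp only [signPoly, prod_empty, card_empty, pow_zero, coeff_one]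
    split_ifs <;> simp
  | insert r T hrT ih =>
    rw [signPoly, prod_insert hrT, ← signPoly, card_insert_of_notMem hrT, pow_succ' _ #T]
    exact abs_coeff_mul_le (abs_coeff_quadratic_le (hT r (mem_insert_self r T)))
      (ih fun t ht => hT t (mem_insert_of_mem ht)) n

lemma sum_abs_signPoly_le {T : Finset ℝ} (hT : ∀ r ∈ T, |r| ≤ 1) :
    ((signPoly T).sum fun _ a => |a|) ≤ 4 ^ #T := by
  refine (sum_abs_le_eval_one (abs_coeff_signPoly_le hT)).trans_eq ?_
  simp only [eval_pow, eval_add, eval_mul, eval_X, eval_C, eval_one]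
  norm_num

lemma norm_integral_cosSum_mul_aeval_le (A : Finset ℕ) (q : ℝ[X]) (s : ℤ) :
    ‖∫ θ in 0..2 * π, (cosSum A θ : ℂ) * (expI s θ * aeval (expI 1 θ) q)‖ ≤
      2 * π * q.sum fun _ a => |a| := by
  have hexpand : ∀ θ, (cosSum A θ : ℂ) * (expI s θ * aeval (expI 1 θ) q) =
      ∑ i ∈ q.support, (q.coeff i : ℂ) * ((cosSum A θ : ℂ) * expI (s + i) θ) := fun θ => by
    rw [aeval_expI_one, sum_def, mul_sum, mul_sum]
    exact sum_congr rfl fun i _ => by rw [expI_add]; ring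
  simp_rw [hexpand]
  rw [integral_sum_of_continuous fun i _ => by fun_prop, sum_def, mul_sum]
  refine norm_sum_le_of_le _ fun i _ => ?_
  rw [intervalIntegral.integral_const_mul, norm_mul, Complex.norm_real, norm_eq_abs, mul_comm]
  gcongr
  exact norm_integral_cosSum_mul_expI_le A _

/-- The polynomial `P` with `P (cos θ) = cosSum A θ`. -/
noncomputable def chebyshevSum (A : Finset ℕ) : ℝ[X] := ∑ a ∈ A, Chebyshev.T ℝ a

lemma eval_cos_chebyshevSum (A : Finset ℕ) (θ : ℝ) :
    (chebyshevSum A).eval (cos θ) = cosSum A θ := by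
  rw [chebyshevSum, eval_finsetSum, cosSum]
  exact sum_congr rfl fun a _ => by rw [Chebyshev.T_real_cos, Int.cast_natCast]

lemma chebyshevSum_ne_zero {A : Finset ℕ} (hA : A.Nonempty) : chebyshevSum A ≠ 0 := by
  intro h
  have hone : (chebyshevSum A).eval 1 = #A := by
    simp [chebyshevSum, eval_finsetSum, Chebyshev.T_eval_one]
  rw [h, eval_zero] at hone
  exact hA.card_ne_zero (by exact_mod_cast hone.symm)

lemma finite_setOf_cosSum_eq_zero {A : Finset ℕ} (hA : A.Nonempty) :
    {θ ∈ Set.Ioo 0 π | cosSum A θ = 0}.Finite := by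
  refine Set.Finite.of_finite_image (f := cos) ?_
    (injOn_cos.mono fun θ hθ => Set.Ioo_subset_Icc_self hθ.1)
  refine (chebyshevSum A).roots.toFinset.finite_toSet.subset ?_
  rintro _ ⟨θ, hθ, rfl⟩
  rw [mem_coe, Multiset.mem_toFinset, mem_roots (chebyshevSum_ne_zero hA), IsRoot,
    eval_cos_chebyshevSum]
  exact hθ.2

lemma exists_signPoly_integral_abs_cosSum_mul_le {A : Finset ℕ} (hA : A.Nonempty) {Z : Finset ℝ}
    (hZ : ∀ θ ∈ Set.Ioo 0 π, cosSum A θ = 0 → θ ∈ Z) :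
    ∃ T : Finset ℝ, #T ≤ #Z ∧ (∀ r ∈ T, |r| ≤ 1) ∧
      ∫ θ in 0..2 * π, |cosSum A θ| * ‖aeval (expI 1 θ) (signPoly T)‖ ≤ 2 * π * 4 ^ #T := by
  obtain ⟨T, hT, σ, hσ, hsign⟩ := exists_roots_forall_abs_eval_mul_prod_eq
    (neg_lt_self one_pos) (chebyshevSum_ne_zero hA)
  have hT1 : ∀ r ∈ T, |r| ≤ 1 := fun r hr => abs_le.2 ⟨(hT r hr).1.1.le, (hT r hr).1.2.le⟩
  refine ⟨T, card_le_card_of_injOn arccos (fun r hr => ?_) (arccos_injOn.mono fun r hr =>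
    Set.Ioo_subset_Icc_self (hT r hr).1), hT1, ?_⟩
  · obtain ⟨⟨hr₁, hr₂⟩, hroot⟩ := hT r hr
    refine hZ _ ⟨arccos_pos.2 hr₂, arccos_lt_pi.2 hr₁⟩ ?_
    rwa [← eval_cos_chebyshevSum, cos_arccos hr₁.le hr₂.le]
  have habs : ∀ θ, |cosSum A θ * ∏ r ∈ T, (2 * (cos θ - r))| =
      σ * (cosSum A θ * ∏ r ∈ T, (2 * (cos θ - r))) := fun θ => by
    have h := hsign (cos θ) ⟨neg_one_le_cos θ, cos_le_one θ⟩
    rw [eval_cos_chebyshevSum] at h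
    rw [prod_mul_distrib, prod_const, mul_left_comm, abs_mul, h, abs_of_nonneg (by positivity)]
    ring
  have hintegrand : ∀ θ, ((|cosSum A θ| * ‖aeval (expI 1 θ) (signPoly T)‖ : ℝ) : ℂ) =
      σ * ((cosSum A θ : ℂ) * (expI (-#T) θ * aeval (expI 1 θ) (signPoly T))) := fun θ => by
    rw [aeval_signPoly, ← mul_assoc (expI _ _), ← expI_add, neg_add_cancel, expI_zero, one_mul,
      norm_mul, norm_expI, one_mul, ← Complex.ofReal_prod, Complex.norm_real, norm_eq_abs,
      ← abs_mul, habs]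
    push_cast
    ring
  calc ∫ θ in 0..2 * π, |cosSum A θ| * ‖aeval (expI 1 θ) (signPoly T)‖
      ≤ ‖((∫ θ in 0..2 * π, |cosSum A θ| * ‖aeval (expI 1 θ) (signPoly T)‖ : ℝ) : ℂ)‖ := by
        rw [Complex.norm_real]
        exact le_norm_self _
    _ = ‖∫ θ in 0..2 * π, (cosSum A θ : ℂ) * (expI (-#T) θ * aeval (expI 1 θ) (signPoly T))‖ := by
        rw [← intervalIntegral.integral_ofReal]
        simp_rw [hintegrand]
        rw [intervalIntegral.integral_const_mul, norm_mul, Complex.norm_real, norm_eq_abs, hσ,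
          one_mul]
    _ ≤ 2 * π * (signPoly T).sum fun _ a => |a| := norm_integral_cosSum_mul_aeval_le A _ _
    _ ≤ 2 * π * 4 ^ #T := by
        gcongr
        exact sum_abs_signPoly_le hT1

/-! ### Jumps of the coefficients along arithmetic progressions -/

lemma card_le_card_mul_of_forall_exists_mem_Icc {S B : Finset ℤ} {l r : ℕ}
    (h : ∀ w ∈ S, ∃ b ∈ B, b ∈ Icc (w - l) (w + r)) : #S ≤ #B * (l + r + 1) := by
  have hcover : S ⊆ B.biUnion fun b => Icc (b - r) (b + l) := fun w hw => by
    obtain ⟨b, hb, hbw⟩ := h w hw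
    rw [mem_Icc] at hbw
    exact mem_biUnion.2 ⟨b, hb, mem_Icc.2 ⟨by lia, by lia⟩⟩
  refine (card_le_card hcover).trans (card_biUnion_le_card_mul _ _ _ fun b _ => ?_)
  rw [Int.card_Icc]
  lia

lemma card_filter_ge_le_of_forall_exists_mem_Icc {W B : Finset ℤ} {l r : ℕ} {x : ℤ} (hx : x ∈ B)
    (h : ∀ w ∈ W, ∃ b ∈ B, b ∈ Icc (w - l) (w + r)) :
    #{w ∈ W | x ≤ w} ≤ #{b ∈ B | x ≤ b} * (l + r + 1) := by
  refine card_le_card_mul_of_forall_exists_mem_Icc fun w hw => ?_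
  obtain ⟨hwW, hxw⟩ := mem_filter.1 hw
  obtain ⟨b, hb, hbw⟩ := h w hwW
  obtain hxb | hbx := le_or_gt x b
  · exact ⟨b, mem_filter.2 ⟨hb, hxb⟩, hbw⟩
  · rw [mem_Icc] at hbw
    exact ⟨x, mem_filter.2 ⟨hx, le_rfl⟩, mem_Icc.2 ⟨by lia, by lia⟩⟩

/-- The positions at which the coefficients of `cosSum A` fail to be `p`-periodic, which all lie in
the interval of the definition. -/
noncomputable def jumps (A : Finset ℕ) (p : ℕ) : Finset ℤ :=
  {n ∈ Icc (-((A.sup id + p : ℕ) : ℤ)) (A.sup id + p : ℕ) | cosCoeff A (n + p) ≠ cosCoeff A n}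

/-- The coefficients, in the sign convention of `trigPoly`, of the product of `2 * cosSum A`,
`q (exp (iθ))` and `exp (ipθ) - 1`. -/
noncomputable def filteredDiff (q : ℝ[X]) (A : Finset ℕ) (p : ℕ) (b : ℤ) : ℝ :=
  q.sum fun i a => a * ((cosCoeff A (b + i + p) - cosCoeff A (b + i) : ℤ) : ℝ)

lemma mem_Icc_of_cosCoeff_add_ne_zero {A : Finset ℕ} {L s : ℕ} (hL : A.sup id + s ≤ L) {n : ℤ}
    (h : cosCoeff A (n + s) ≠ 0) : n ∈ Icc (-(L : ℤ)) L := by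
  have hle : (n + s).natAbs ≤ A.sup id := le_sup (f := id) (cosCoeff_ne_zero_iff.1 h)
  rw [mem_Icc]
  lia

lemma mem_Icc_of_cosCoeff_add_add_ne {A : Finset ℕ} {L i p : ℕ} (hL : A.sup id + i + p ≤ L) {n : ℤ}
    (h : cosCoeff A (n + i + p) ≠ cosCoeff A (n + i)) : n ∈ Icc (-(L : ℤ)) L := by
  by_cases h0 : cosCoeff A (n + i) = 0
  · rw [h0, add_assoc, ← Nat.cast_add] at h
    exact mem_Icc_of_cosCoeff_add_ne_zero (by lia) h
  · exact mem_Icc_of_cosCoeff_add_ne_zero (by lia) h0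

@[simp]
lemma mem_jumps {A : Finset ℕ} {p : ℕ} {n : ℤ} :
    n ∈ jumps A p ↔ cosCoeff A (n + p) ≠ cosCoeff A n := by
  rw [jumps, mem_filter, and_iff_right_iff_imp]
  intro h
  have h0 : cosCoeff A (n + (0 : ℕ) + p) ≠ cosCoeff A (n + (0 : ℕ)) := by
    rwa [Nat.cast_zero, add_zero]
  exact mem_Icc_of_cosCoeff_add_add_ne (by lia) h0

section FilteredDiff

variable {q : ℝ[X]} {A : Finset ℕ} {p : ℕ}

lemma exists_cosCoeff_ne_of_filteredDiff_ne_zero {b : ℤ} (h : filteredDiff q A p b ≠ 0) :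
    ∃ i ≤ q.natDegree, cosCoeff A (b + i + p) ≠ cosCoeff A (b + i) := by
  contrapose! h
  refine sum_eq_zero fun i hi => ?_
  simp only [h i (le_natDegree_of_mem_supp i hi), sub_self, Int.cast_zero, mul_zero]

lemma abs_filteredDiff_le (b : ℤ) : |filteredDiff q A p b| ≤ 2 * q.sum fun _ a => |a| := by
  rw [filteredDiff, sum_def, sum_def, mul_sum]
  refine (abs_sum_le_sum_abs _ _).trans (sum_le_sum fun i _ => ?_)
  have hdiff : |cosCoeff A (b + i + p) - cosCoeff A (b + i)| ≤ 2 :=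
    abs_sub_le_of_nonneg_of_le (cosCoeff_nonneg A _) (cosCoeff_le_two A _) (cosCoeff_nonneg A _)
      (cosCoeff_le_two A _)
  rw [abs_mul, mul_comm]
  gcongr
  exact_mod_cast hdiff

lemma finite_support_filteredDiff (q : ℝ[X]) (A : Finset ℕ) (p : ℕ) :
    (Function.support (filteredDiff q A p)).Finite := by
  refine (Icc (-((A.sup id + q.natDegree + p : ℕ) : ℤ))
    (A.sup id + q.natDegree + p : ℕ)).finite_toSet.subset fun b hb => ?_
  obtain ⟨i, hi, hne⟩ := exists_cosCoeff_ne_of_filteredDiff_ne_zero hb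
  exact mem_Icc_of_cosCoeff_add_add_ne (by lia) hne

lemma sum_cosCoeff_add_mul_expI {s : ℕ} {I : Finset ℤ}
    (hI : ∀ n, cosCoeff A (n + s) ≠ 0 → n ∈ I) (θ : ℝ) :
    ∑ n ∈ I, (cosCoeff A (n + s) : ℂ) * expI (-n) θ = expI s θ * (2 * cosSum A θ) := by
  rw [sum_cosCoeff_add_mul hI fun n => expI (-n) θ, two_mul_cosSum, mul_sum]
  refine sum_congr rfl fun a _ => ?_
  rw [neg_sub, neg_sub, sub_eq_add_neg, sub_neg_eq_add, expI_add, expI_add]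
  ring

lemma trigPoly_filteredDiff {W : Finset ℤ} (hW : ∀ w, filteredDiff q A p w ≠ 0 → w ∈ W) (θ : ℝ) :
    trigPoly W (fun w => filteredDiff q A p w) θ =
      2 * cosSum A θ * aeval (expI 1 θ) q * (expI p θ - 1) := by
  set L := A.sup id + q.natDegree + p
  have hextend : trigPoly W (fun w => filteredDiff q A p w) θ =
      trigPoly (W ∪ Icc (-(L : ℤ)) L) (fun w => filteredDiff q A p w) θ :=
    sum_subset subset_union_left fun w _ hw => by
      simp only [not_imp_comm.1 (hW w) hw, Complex.ofReal_zero, zero_mul]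
  rw [hextend, trigPoly, aeval_expI_one, sum_def, mul_sum, sum_mul]
  simp_rw [filteredDiff, sum_def, Complex.ofReal_sum, sum_mul]
  rw [sum_comm]
  refine sum_congr rfl fun i hi => ?_
  have hiq := le_natDegree_of_mem_supp i hi
  have hshift : ∀ s : ℕ, s ≤ q.natDegree + p → ∑ n ∈ W ∪ Icc (-(L : ℤ)) L,
      (cosCoeff A (n + s) : ℂ) * expI (-n) θ = expI s θ * (2 * cosSum A θ) := fun s hs =>
    sum_cosCoeff_add_mul_expI
      (fun n hn => mem_union_right _ (mem_Icc_of_cosCoeff_add_ne_zero (by lia) hn)) θ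
  have hip := hshift (i + p) (by lia)
  have hi0 := hshift i (by lia)
  calc _ = (q.coeff i : ℂ) * (∑ n ∈ W ∪ Icc (-(L : ℤ)) L,
          (cosCoeff A (n + (i + p : ℕ)) : ℂ) * expI (-n) θ -
        ∑ n ∈ W ∪ Icc (-(L : ℤ)) L, (cosCoeff A (n + i) : ℂ) * expI (-n) θ) := by
        rw [← sum_sub_distrib, mul_sum]
        refine sum_congr rfl fun n _ => ?_
        push_cast
        rw [add_assoc]
        ring
    _ = _ := by
        rw [hip, hi0]
        push_cast
        rw [expI_add]
        ring

lemma integral_norm_trigPoly_filteredDiff_le {W : Finset ℤ}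
    (hW : ∀ w, filteredDiff q A p w ≠ 0 → w ∈ W) :
    ∫ θ in 0..2 * π, ‖trigPoly W (fun w => filteredDiff q A p w) θ‖ ≤
      4 * ∫ θ in 0..2 * π, |cosSum A θ| * ‖aeval (expI 1 θ) q‖ := by
  rw [← intervalIntegral.integral_const_mul]
  refine intervalIntegral.integral_mono_on two_pi_pos.le
    (Continuous.intervalIntegrable (by fun_prop) _ _)
    (Continuous.intervalIntegrable (by fun_prop) _ _) fun θ _ => ?_
  have hexp : ‖expI p θ - 1‖ ≤ 2 := (norm_sub_le _ _).trans_eq (by norm_num)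
  calc _ = 2 * (|cosSum A θ| * ‖aeval (expI 1 θ) q‖) * ‖expI p θ - 1‖ := by
        rw [trigPoly_filteredDiff hW, norm_mul, norm_mul, norm_mul, Complex.norm_real, norm_eq_abs,
          Complex.norm_ofNat]
        ring
    _ ≤ 2 * (|cosSum A θ| * ‖aeval (expI 1 θ) q‖) * 2 := by gcongr
    _ = _ := by ring

lemma cosCoeff_add_eq_of_abs_filteredDiff_lt (hq : q.Monic) (hp : (2 * q.natDegree)! ∣ p) {w : ℤ}
    (hw : ∀ b ∈ Icc (w - 5 ^ (q.natDegree + 1)) (w + 2 * p),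
      |filteredDiff q A p b| < 1 / cramerBound (q.natDegree + 1) 2) :
    cosCoeff A (w + p) = cosCoeff A w := by
  obtain ⟨Q, hQ, hdeg, hQsum⟩ := exists_rat_polynomial_sum_eq_zero_of_monic hq one_le_two
  set s : ℕ := 5 ^ (q.natDegree + 1)
  have hrec : ∀ j < s + 2 * p + 1, (Q.sum fun i a => a * ((cosCoeff A (w - s + (j + i + p : ℕ)) -
      cosCoeff A (w - s + (j + i : ℕ)) : ℤ) : ℚ)) = 0 := fun j hj => by
    have hb := hw (w - s + j) (mem_Icc.2 ⟨by push_cast [s]; lia, by lia⟩)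
    convert hQsum (fun i => cosCoeff A (w - s + j + i + p) - cosCoeff A (w - s + j + i))
      (fun i => abs_sub_le_of_nonneg_of_le (cosCoeff_nonneg A _) (cosCoeff_le_two A _)
        (cosCoeff_nonneg A _) (cosCoeff_le_two A _)) hb using 6
    push_cast
    ring_nf
  have h := apply_add_eq_of_recurrence_sub hQ (u := fun j => cosCoeff A (w - s + j))
    (fun j => ⟨cosCoeff_nonneg A _, cosCoeff_le_two A _⟩)
    ((Nat.factorial_dvd_factorial (Nat.mul_le_mul_left 2 hdeg)).trans hp) hrec (j := s)
    (Nat.pow_le_pow_right (by norm_num) (by lia)) (by lia)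
  simpa [← add_assoc] using h

/-- The positions at which `filteredDiff` is too large for its integer factors to satisfy an exact
linear recurrence. -/
noncomputable def largeDiffs (q : ℝ[X]) (A : Finset ℕ) (p : ℕ) : Finset ℤ :=
  {b ∈ (finite_support_filteredDiff q A p).toFinset |
    1 / (cramerBound (q.natDegree + 1) 2 : ℝ) ≤ |filteredDiff q A p b|}

lemma mem_largeDiffs {b : ℤ} : b ∈ largeDiffs q A p ↔
    1 / (cramerBound (q.natDegree + 1) 2 : ℝ) ≤ |filteredDiff q A p b| := by
  rw [largeDiffs, mem_filter, Set.Finite.mem_toFinset, and_iff_right_iff_imp]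
  have hpos := cramerBound_pos q.natDegree.succ_pos one_le_two
  exact fun h => abs_pos.1 (lt_of_lt_of_le (by positivity) h)

lemma exists_mem_largeDiffs_of_cosCoeff_ne (hq : q.Monic) (hp : (2 * q.natDegree)! ∣ p) {w : ℤ}
    {i : ℕ} (hi : i ≤ q.natDegree) (hw : cosCoeff A (w + i + p) ≠ cosCoeff A (w + i)) :
    ∃ b ∈ largeDiffs q A p, b ∈
      Icc (w - (5 ^ (q.natDegree + 1) : ℕ)) (w + (q.natDegree + 2 * p : ℕ)) := by
  contrapose! hw
  refine cosCoeff_add_eq_of_abs_filteredDiff_lt hq hp fun b hb =>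
    not_le.1 fun h => hw b (mem_largeDiffs.2 h) ?_
  rw [mem_Icc] at hb ⊢
  exact ⟨by push_cast; lia, by lia⟩

lemma exists_mem_largeDiffs_of_filteredDiff_ne_zero (hq : q.Monic)
    (hp : (2 * q.natDegree)! ∣ p) {w : ℤ} (hw : filteredDiff q A p w ≠ 0) :
    ∃ b ∈ largeDiffs q A p, b ∈
      Icc (w - (5 ^ (q.natDegree + 1) : ℕ)) (w + (q.natDegree + 2 * p : ℕ)) := by
  obtain ⟨i, hi, hne⟩ := exists_cosCoeff_ne_of_filteredDiff_ne_zero hw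
  exact exists_mem_largeDiffs_of_cosCoeff_ne hq hp hi hne

end FilteredDiff

/-- The length of a window certain to contain an element of `largeDiffs q A p` when it is placed at
a zero of `filteredDiff q A p`, for `q` of degree `m`. -/
def windowLength (m p : ℕ) : ℕ := 5 ^ (m + 1) + m + 2 * p + 1

/-- The number of blocks with which the `L¹` lower bound for `filteredDiff q A p` becomes
contradictory, for `q` of degree `m` and `ℓ¹` norm at most `M`. -/
def blockCount (m M : ℕ) : ℕ := 192 * M ^ 2 * cramerBound (m + 1) 2 ^ 2 + 1

/-- The ratio of the cardinalities of consecutive blocks in the `L¹` lower bound. -/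
def blockRatio (m M p : ℕ) : ℕ :=
  64 * blockCount m M ^ 2 * M ^ 2 * windowLength m p * cramerBound (m + 1) 2 ^ 2

/-- The resulting bound for the number of jumps. -/
def jumpBound (m M p : ℕ) : ℕ := blockRatio m M p ^ blockCount m M * windowLength m p

section CardJumps

variable {q : ℝ[X]} {A : Finset ℕ} {p M : ℕ}

lemma blockCount_mul_sq_le_sq_integral (hq : q.Monic) (hp : (2 * q.natDegree)! ∣ p) (hM : 0 < M)
    (hqM : (q.sum fun _ a => |a|) ≤ M)
    (hlarge : blockRatio q.natDegree M p ^ blockCount q.natDegree M ≤ #(largeDiffs q A p)) :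
    blockCount q.natDegree M * (π * (1 / cramerBound (q.natDegree + 1) 2)) ^ 2 ≤
      3 * (∫ θ in 0..2 * π, ‖trigPoly (finite_support_filteredDiff q A p).toFinset
        (fun w => filteredDiff q A p w) θ‖) ^ 2 := by
  have hD : 0 < cramerBound (q.natDegree + 1) 2 := cramerBound_pos q.natDegree.succ_pos one_le_two
  have hratio : 0 < blockRatio q.natDegree M p := by
    unfold blockRatio blockCount windowLength
    positivity
  refine mul_sq_le_sq_integral_norm_trigPoly (B := largeDiffs q A p) (M := 2 * M)
    (K := windowLength q.natDegree p) (lam := blockRatio q.natDegree M p) (by positivity)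
    (by positivity) (by unfold windowLength; positivity) hratio (filter_subset _ _)
    (fun w _ => ?_) (fun b hb => ?_) (fun x hx => ?_) (le_of_eq ?_) hlarge
  · rw [Complex.norm_real]
    exact (abs_filteredDiff_le w).trans (by gcongr)
  · rw [Complex.norm_real]
    exact mem_largeDiffs.1 hb
  · have h := card_filter_ge_le_of_forall_exists_mem_Icc hx fun w hw =>
      exists_mem_largeDiffs_of_filteredDiff_ne_zero hq hp ((Set.Finite.mem_toFinset
        (finite_support_filteredDiff q A p)).1 hw)
    rw [mul_comm, ← add_assoc] at h
    exact_mod_cast h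
  · simp only [blockRatio]
    push_cast
    field_simp
    ring

lemma card_largeDiffs_le (hq : q.Monic) (hp : (2 * q.natDegree)! ∣ p) (hM : 0 < M)
    (hqM : (q.sum fun _ a => |a|) ≤ M)
    (hint : ∫ θ in 0..2 * π, |cosSum A θ| * ‖aeval (expI 1 θ) q‖ ≤ 2 * π * M) :
    #(largeDiffs q A p) ≤ blockRatio q.natDegree M p ^ blockCount q.natDegree M := by
  by_contra! hlarge
  set D := cramerBound (q.natDegree + 1) 2 with hD
  have hDpos : 0 < D := cramerBound_pos q.natDegree.succ_pos one_le_two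
  have hupper := (integral_norm_trigPoly_filteredDiff_le (q := q) (A := A) (p := p) fun w =>
    (finite_support_filteredDiff q A p).mem_toFinset.2).trans
      (mul_le_mul_of_nonneg_left hint zero_le_four)
  have hle : (blockCount q.natDegree M : ℝ) * (π * (1 / D)) ^ 2 ≤ 3 * (4 * (2 * π * M)) ^ 2 :=
    (blockCount_mul_sq_le_sq_integral hq hp hM hqM hlarge.le).trans (by
      gcongr
      exact intervalIntegral.integral_nonneg two_pi_pos.le fun _ _ => norm_nonneg _)
  have hcount : (blockCount q.natDegree M : ℝ) ≤ 192 * M ^ 2 * D ^ 2 := by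
    have hpi := pi_pos
    field_simp at hle
    linarith
  have hcount' : blockCount q.natDegree M ≤ 192 * M ^ 2 * D ^ 2 := by exact_mod_cast hcount
  rw [blockCount, ← hD] at hcount'
  lia

lemma card_jumps_le (hq : q.Monic) (hp : (2 * q.natDegree)! ∣ p) (hM : 0 < M)
    (hqM : (q.sum fun _ a => |a|) ≤ M)
    (hint : ∫ θ in 0..2 * π, |cosSum A θ| * ‖aeval (expI 1 θ) q‖ ≤ 2 * π * M) :
    #(jumps A p) ≤ jumpBound q.natDegree M p := by
  refine (card_le_card_mul_of_forall_exists_mem_Icc fun n hn =>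
    exists_mem_largeDiffs_of_cosCoeff_ne (A := A) hq hp (i := 0) (Nat.zero_le _) ?_).trans ?_
  · simpa using hn
  · rw [← add_assoc]
    exact Nat.mul_le_mul_right _ (card_largeDiffs_le hq hp hM hqM hint)

end CardJumps

/-! ### Logarithmic averages of sine sums -/

section LogAverage

variable {t₁ t₂ : ℝ}

lemma intervalIntegrable_div {f : ℝ → ℝ} (hf : Continuous f) (h₁ : 0 < t₁) (h₁₂ : t₁ ≤ t₂) :
    IntervalIntegrable (fun t => f t / t) volume t₁ t₂ := by
  refine (hf.continuousOn.div continuousOn_id fun t ht => ?_).intervalIntegrable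
  rw [Set.uIcc_of_le h₁₂] at ht
  exact (h₁.trans_le ht.1).ne'

lemma integral_sum_mul_div {ι : Type*} {s : Finset ι} {f : ι → ℝ → ℝ}
    (hf : ∀ i ∈ s, Continuous (f i)) (c : ι → ℝ) (h₁ : 0 < t₁) (h₁₂ : t₁ ≤ t₂) :
    ∫ t in t₁..t₂, (∑ i ∈ s, c i * f i t) / t = ∑ i ∈ s, c i * ∫ t in t₁..t₂, f i t / t := by
  simp_rw [sum_div, mul_div_assoc]
  rw [intervalIntegral.integral_finsetSum fun i hi =>
    (intervalIntegrable_div (hf i hi) h₁ h₁₂).const_mul _]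
  exact sum_congr rfl fun i _ => intervalIntegral.integral_const_mul _ _

lemma abs_integral_div_le {f : ℝ → ℝ} {C : ℝ} (h₁ : 0 < t₁) (h₁₂ : t₁ ≤ t₂)
    (hf : ∀ t ∈ Set.Ioc t₁ t₂, |f t| ≤ C * t) :
    |∫ t in t₁..t₂, f t / t| ≤ C * (t₂ - t₁) := by
  have hbound : ∀ t ∈ Set.uIoc t₁ t₂, ‖f t / t‖ ≤ C := fun t ht => by
    rw [Set.uIoc_of_le h₁₂] at ht
    have ht0 : 0 < t := h₁.trans ht.1
    rw [norm_eq_abs, abs_div, abs_of_pos ht0, div_le_iff₀ ht0]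
    exact hf t ht
  simpa only [norm_eq_abs, abs_of_nonneg (sub_nonneg.2 h₁₂)] using
    intervalIntegral.norm_integral_le_of_norm_le_const hbound

lemma abs_integral_cos_div_le {d : ℝ} (hd : d ≠ 0) (ψ : ℝ) (h₁ : 0 < t₁) (h₁₂ : t₁ ≤ t₂) :
    |∫ t in t₁..t₂, cos (d * t + ψ) / t| ≤ 2 / (|d| * t₁) := by
  have hpos : ∀ t ∈ Set.uIcc t₁ t₂, 0 < t := fun t ht => by
    rw [Set.uIcc_of_le h₁₂] at ht
    exact h₁.trans_le ht.1
  set v : ℝ → ℝ := fun t => sin (d * t + ψ) / d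
  have hv_le : ∀ t, |v t| ≤ |d|⁻¹ := fun t => by
    rw [abs_div, ← one_div]
    gcongr
    exact abs_sin_le_one _
  have hinv : ∀ t ∈ Set.uIcc t₁ t₂, HasDerivAt (fun t : ℝ => t⁻¹) (-(t ^ 2)⁻¹) t := fun t ht =>
    hasDerivAt_inv (hpos t ht).ne'
  have hv : ∀ t ∈ Set.uIcc t₁ t₂, HasDerivAt v (cos (d * t + ψ)) t := fun t _ => by
    refine ((((hasDerivAt_id t).const_mul d).add_const ψ).sin.div_const d).congr_deriv ?_
    simp only [id_eq]
    field_simp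
  have hinv_int : IntervalIntegrable (fun t : ℝ => -(t ^ 2)⁻¹) volume t₁ t₂ :=
    ((continuousOn_pow 2).inv₀ fun t ht => (pow_pos (hpos t ht) 2).ne').neg.intervalIntegrable
  have hparts := intervalIntegral.integral_mul_deriv_eq_deriv_mul hinv hv hinv_int
    (Continuous.intervalIntegrable (by fun_prop) _ _)
  have hrest : |∫ t in t₁..t₂, -(t ^ 2)⁻¹ * v t| ≤ (t₁⁻¹ - t₂⁻¹) * |d|⁻¹ := by
    have hval : ∫ t in t₁..t₂, -(-(t ^ 2)⁻¹) * |d|⁻¹ = (t₁⁻¹ - t₂⁻¹) * |d|⁻¹ := by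
      rw [intervalIntegral.integral_mul_const, intervalIntegral.integral_neg,
        intervalIntegral.integral_eq_sub_of_hasDerivAt hinv hinv_int, neg_sub]
    rw [← hval, ← norm_eq_abs]
    refine intervalIntegral.norm_integral_le_of_norm_le h₁₂ (.of_forall fun t _ => ?_)
      (hinv_int.neg.mul_const _)
    rw [norm_mul, norm_neg, norm_of_nonneg (by positivity : 0 ≤ (t ^ 2)⁻¹), neg_neg, norm_eq_abs]
    exact mul_le_mul_of_nonneg_left (hv_le t) (by positivity)
  have hbdry : ∀ t, 0 < t → |t⁻¹ * v t| ≤ t⁻¹ * |d|⁻¹ := fun t ht => by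
    rw [abs_mul, abs_of_pos (inv_pos.2 ht)]
    exact mul_le_mul_of_nonneg_left (hv_le t) (inv_pos.2 ht).le
  simp_rw [div_eq_inv_mul]
  rw [hparts]
  calc _ ≤ t₂⁻¹ * |d|⁻¹ + t₁⁻¹ * |d|⁻¹ + (t₁⁻¹ - t₂⁻¹) * |d|⁻¹ :=
        (abs_sub _ _).trans (add_le_add ((abs_sub _ _).trans
          (add_le_add (hbdry _ (h₁.trans_le h₁₂)) (hbdry _ h₁))) hrest)
    _ = (|d| * t₁)⁻¹ * 2 := by
        rw [mul_inv]
        ring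

lemma abs_integral_cos_div_le_two {d : ℝ} (h₁ : 0 < t₁) (h₁₂ : t₁ ≤ t₂) (hd : 1 ≤ |d| * t₁) :
    |∫ t in t₁..t₂, cos (d * t) / t| ≤ 2 := by
  have hd0 : d ≠ 0 := by
    rintro rfl
    norm_num at hd
  have h := abs_integral_cos_div_le hd0 0 h₁ h₁₂
  simp only [add_zero] at h
  exact h.trans (div_le_self zero_le_two hd)

lemma abs_integral_cos_div_sub_log_le_two {d : ℝ} (h₁ : 0 < t₁) (h₁₂ : t₁ ≤ t₂)
    (hd : |d| * t₂ ≤ 1) : |(∫ t in t₁..t₂, cos (d * t) / t) - log (t₂ / t₁)| ≤ 2 := by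
  have hbound : ∀ t ∈ Set.Ioc t₁ t₂, |cos (d * t) - 1| ≤ |d| * t := fun t ht => by
    have ht0 : 0 < t := h₁.trans ht.1
    have hdt : |d * t| ≤ 1 := by
      rw [abs_mul, abs_of_pos ht0]
      exact (mul_le_mul_of_nonneg_left ht.2 (abs_nonneg d)).trans hd
    have hcos := one_sub_sq_div_two_le_cos (x := d * t)
    have habs : |d| * t = |d * t| := by rw [abs_mul, abs_of_pos ht0]
    rw [habs, abs_sub_comm, abs_of_nonneg (sub_nonneg.2 (cos_le_one _))]
    rw [← sq_abs] at hcos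
    nlinarith [abs_nonneg (d * t)]
  rw [← integral_one_div_of_pos h₁ (h₁.trans_le h₁₂), ← intervalIntegral.integral_sub
    (intervalIntegrable_div (by fun_prop) h₁ h₁₂) (intervalIntegrable_div (by fun_prop) h₁ h₁₂)]
  simp_rw [← sub_div]
  refine (abs_integral_div_le h₁ h₁₂ hbound).trans ?_
  nlinarith [abs_nonneg d]

lemma abs_integral_sin_div_le_four {ν : ℝ} (h₁ : 0 < t₁) (h₁₂ : t₁ ≤ t₂)
    (hν : |2 * ν| * t₂ ≤ 1 ∨ 1 ≤ |2 * ν| * t₁) : |∫ t in t₁..t₂, sin (ν * t) / t| ≤ 4 := by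
  rw [abs_mul, abs_two] at hν
  obtain hν | hν := hν
  · have hbound : ∀ t ∈ Set.Ioc t₁ t₂, |sin (ν * t)| ≤ |ν| * t := fun t ht => by
      simpa only [abs_mul, abs_of_pos (h₁.trans ht.1)] using abs_sin_le_abs (x := ν * t)
    refine (abs_integral_div_le h₁ h₁₂ hbound).trans ?_
    nlinarith [abs_nonneg ν]
  · have hν0 : ν ≠ 0 := by
      rintro rfl
      norm_num at hν
    have h := abs_integral_cos_div_le hν0 (-(π / 2)) h₁ h₁₂
    simp only [← sub_eq_add_neg, cos_sub_pi_div_two] at h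
    refine h.trans ((div_le_iff₀ (by positivity)).2 ?_)
    linarith

end LogAverage

/-- The sine polynomial with frequencies in `T` and coefficients `Y`. -/
noncomputable def sinSum (T : Finset ℤ) (Y : ℤ → ℝ) (t : ℝ) : ℝ := ∑ n ∈ T, Y n * sin (n * t)

@[fun_prop]
lemma continuous_sinSum (T : Finset ℤ) (Y : ℤ → ℝ) : Continuous (sinSum T Y) := by
  unfold sinSum
  fun_prop

section SinSum

variable {T : Finset ℤ} {Y : ℤ → ℝ} {b t₁ t₂ : ℝ}

lemma abs_integral_sinSum_div_le (h₁ : 0 < t₁) (h₁₂ : t₁ ≤ t₂) (hb : ∀ n, |Y n| ≤ b)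
    (hgap : ∀ n ∈ T, |2 * (n : ℝ)| * t₂ ≤ 1 ∨ 1 ≤ |2 * (n : ℝ)| * t₁) :
    |∫ t in t₁..t₂, sinSum T Y t / t| ≤ 4 * b * #T := by
  have hb0 : 0 ≤ b := (abs_nonneg _).trans (hb 0)
  simp only [sinSum]
  rw [integral_sum_mul_div (fun n _ => by fun_prop) _ h₁ h₁₂]
  refine (abs_sum_le_sum_abs _ _).trans ((sum_le_card_nsmul _ _ (b * 4) fun n hn => ?_).trans_eq
    (by rw [nsmul_eq_mul]; ring))
  rw [abs_mul]
  exact mul_le_mul (hb n) (abs_integral_sin_div_le_four h₁ h₁₂ (hgap n hn)) (abs_nonneg _) hb0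

lemma sinSum_mul_sin (hneg : ∀ n ∈ T, -n ∈ T) (hodd : ∀ n, Y (-n) = -Y n) (m : ℤ) (t : ℝ) :
    sinSum T Y t * sin (m * t) = ∑ n ∈ T, Y n * cos (((n - m : ℤ) : ℝ) * t) := by
  have hreflect : ∑ n ∈ T, Y n * cos (((n + m : ℤ) : ℝ) * t) =
      -∑ n ∈ T, Y n * cos (((n - m : ℤ) : ℝ) * t) := by
    rw [← sum_neg_distrib]
    refine sum_nbij' (-·) (-·) hneg hneg (fun n _ => neg_neg n) (fun n _ => neg_neg n) fun n _ => ?_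
    rw [hodd, neg_mul, neg_neg, ← cos_neg (((-n - m : ℤ) : ℝ) * t)]
    push_cast
    ring_nf
  have hsin_mul_sin : sinSum T Y t * sin (m * t) = (∑ n ∈ T, Y n * cos (((n - m : ℤ) : ℝ) * t) -
      ∑ n ∈ T, Y n * cos (((n + m : ℤ) : ℝ) * t)) / 2 := by
    rw [sinSum, sum_mul, ← sum_sub_distrib, sum_div]
    refine sum_congr rfl fun n _ => ?_
    push_cast
    rw [sub_mul, add_mul, cos_sub, cos_add]
    ring
  rw [hsin_mul_sin, hreflect]
  ring

lemma abs_integral_sinSum_mul_sin_div_sub_le (h₁ : 0 < t₁) (h₁₂ : t₁ ≤ t₂) (hb : ∀ n, |Y n| ≤ b)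
    (hneg : ∀ n ∈ T, -n ∈ T) (hodd : ∀ n, Y (-n) = -Y n) {m : ℤ}
    (hgap : ∀ n ∈ T, |((n - m : ℤ) : ℝ)| * t₂ ≤ 1 ∨ 1 ≤ |((n - m : ℤ) : ℝ)| * t₁) :
    |(∫ t in t₁..t₂, sinSum T Y t * sin (m * t) / t) -
      log (t₂ / t₁) * ∑ n ∈ T with |((n - m : ℤ) : ℝ)| * t₂ ≤ 1, Y n| ≤ 2 * b * #T := by
  have hb0 : 0 ≤ b := (abs_nonneg _).trans (hb 0)
  simp_rw [sinSum_mul_sin hneg hodd]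
  rw [integral_sum_mul_div (fun n _ => by fun_prop) _ h₁ h₁₂, sum_filter, mul_sum,
    ← sum_sub_distrib]
  refine (abs_sum_le_sum_abs _ _).trans ((sum_le_card_nsmul _ _ (b * 2) fun n hn => ?_).trans_eq
    (by rw [nsmul_eq_mul]; ring))
  split_ifs with hnear
  · rw [mul_comm (log _), ← mul_sub, abs_mul]
    exact mul_le_mul (hb n) (abs_integral_cos_div_sub_log_le_two h₁ h₁₂ hnear) (abs_nonneg _) hb0
  · rw [mul_zero, sub_zero, abs_mul]
    exact mul_le_mul (hb n) (abs_integral_cos_div_le_two h₁ h₁₂ ((hgap n hn).resolve_left hnear))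
      (abs_nonneg _) hb0

lemma abs_integral_mul_sin_div_le_abs_integral_div {h : ℝ → ℝ} (hh : Continuous h) (h₁ : 0 < t₁)
    (h₁₂ : t₁ ≤ t₂) {σ : ℝ} (hσ : |σ| = 1) (hsign : ∀ t ∈ Set.Icc t₁ t₂, |h t| = σ * h t) (m : ℝ) :
    |∫ t in t₁..t₂, h t * sin (m * t) / t| ≤ |∫ t in t₁..t₂, h t / t| := by
  calc |∫ t in t₁..t₂, h t * sin (m * t) / t| ≤ ∫ t in t₁..t₂, σ * (h t / t) := by
        rw [← norm_eq_abs]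
        refine intervalIntegral.norm_integral_le_of_norm_le h₁₂ (.of_forall fun t ht => ?_)
          ((intervalIntegrable_div hh h₁ h₁₂).const_mul σ)
        have ht0 : 0 < t := h₁.trans ht.1
        rw [norm_eq_abs, abs_div, abs_mul, abs_of_pos ht0, ← mul_div_assoc,
          ← hsign t (Set.Ioc_subset_Icc_self ht)]
        gcongr
        exact mul_le_of_le_one_right (abs_nonneg _) (abs_sin_le_one _)
    _ = σ * ∫ t in t₁..t₂, h t / t := intervalIntegral.integral_const_mul _ _
    _ ≤ |∫ t in t₁..t₂, h t / t| := by
        rw [← one_mul |∫ t in t₁..t₂, h t / t|, ← hσ, ← abs_mul]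
        exact le_abs_self _

end SinSum

lemma sum_near_eq_zero_of_sinSum_sign {T : Finset ℤ} {Y : ℤ → ℤ} {b : ℕ} {t₁ t₂ σ : ℝ}
    (h₁ : 0 < t₁) (h₁₂ : t₁ ≤ t₂) (hb : ∀ n, |Y n| ≤ b) (hneg : ∀ n ∈ T, -n ∈ T)
    (hodd : ∀ n, Y (-n) = -Y n) (hgap : ∀ n ∈ T, ∀ m ∈ T,
      |((n - m : ℤ) : ℝ)| * t₂ ≤ 1 ∨ 1 ≤ |((n - m : ℤ) : ℝ)| * t₁)
    (hσ : |σ| = 1) (hsign : ∀ t ∈ Set.Icc t₁ t₂,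
      |sinSum T (fun n => Y n) t| = σ * sinSum T (fun n => Y n) t)
    (hlog : 6 * b * #T < log (t₂ / t₁)) {m : ℤ} (hm : m ∈ T) :
    ∑ n ∈ T with |((n - m : ℤ) : ℝ)| * t₂ ≤ 1, Y n = 0 := by
  set s := ∑ n ∈ T with |((n - m : ℤ) : ℝ)| * t₂ ≤ 1, Y n with hs
  have hbR : ∀ n, |(Y n : ℝ)| ≤ b := fun n => by exact_mod_cast hb n
  have hgap2 : ∀ n ∈ T, |2 * (n : ℝ)| * t₂ ≤ 1 ∨ 1 ≤ |2 * (n : ℝ)| * t₁ := fun n hn => by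
    have h := hgap n hn (-n) (hneg n hn)
    rwa [sub_neg_eq_add, ← two_mul, Int.cast_mul, Int.cast_two] at h
  have hupper := (abs_integral_mul_sin_div_le_abs_integral_div (continuous_sinSum T _) h₁ h₁₂ hσ
    hsign m).trans (abs_integral_sinSum_div_le h₁ h₁₂ hbR hgap2)
  have hmain := abs_integral_sinSum_mul_sin_div_sub_le h₁ h₁₂ hbR hneg
    (fun n => by rw [hodd, Int.cast_neg]) fun n hn => hgap n hn m hm
  rw [← Int.cast_sum, ← hs] at hmain
  have hlogpos : 0 < log (t₂ / t₁) := lt_of_le_of_lt (by positivity) hlog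
  have hlt : log (t₂ / t₁) * |(s : ℝ)| < log (t₂ / t₁) * 1 := by
    calc log (t₂ / t₁) * |(s : ℝ)| = |log (t₂ / t₁) * s| := by rw [abs_mul, abs_of_pos hlogpos]
      _ ≤ 2 * b * #T + 4 * b * #T := by
          rw [abs_sub_comm] at hmain
          linarith [abs_sub_abs_le_abs_sub (log (t₂ / t₁) * s)
            (∫ t in t₁..t₂, sinSum T (fun n => Y n) t * sin (m * t) / t)]
      _ < log (t₂ / t₁) * 1 := by linarith
  have hs1 : |(s : ℝ)| < 1 := lt_of_mul_lt_mul_left hlt hlogpos.le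
  exact Int.abs_lt_one_iff.1 (by exact_mod_cast hs1)

/-! ### Clusters of jumps -/

section CenteredDiff

variable {A : Finset ℕ} {s : ℕ} {n : ℤ}

/-- The symmetric difference of step `s` of the coefficients of `cosSum A`; up to sign these are
the sine coefficients of `cosSum A θ * sin (s * θ)`. -/
def centeredDiff (A : Finset ℕ) (s : ℕ) (n : ℤ) : ℤ := cosCoeff A (n + s) - cosCoeff A (n - s)

/-- The support of `centeredDiff A s`. -/
noncomputable def centeredSupport (A : Finset ℕ) (s : ℕ) : Finset ℤ :=
  (jumps A (2 * s)).image (· + (s : ℤ))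

lemma mem_centeredSupport : n ∈ centeredSupport A s ↔ centeredDiff A s n ≠ 0 := by
  have hshift : n - s + (2 * s : ℕ) = n + s := by
    push_cast
    ring
  simp only [centeredSupport, mem_image, ← eq_sub_iff_add_eq, exists_eq_right, mem_jumps, hshift,
    centeredDiff, sub_ne_zero]

lemma card_centeredSupport (A : Finset ℕ) (s : ℕ) : #(centeredSupport A s) = #(jumps A (2 * s)) :=
  card_image_of_injective _ (add_left_injective _)

lemma centeredDiff_neg (A : Finset ℕ) (s : ℕ) (n : ℤ) :
    centeredDiff A s (-n) = -centeredDiff A s n := by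
  rw [centeredDiff, centeredDiff, neg_sub, ← cosCoeff_neg A (n - s), ← cosCoeff_neg A (n + s),
    neg_sub, neg_add, ← sub_eq_add_neg, neg_add_eq_sub]

lemma abs_centeredDiff_le_two (A : Finset ℕ) (s : ℕ) (n : ℤ) : |centeredDiff A s n| ≤ 2 :=
  abs_sub_le_of_nonneg_of_le (cosCoeff_nonneg _ _) (cosCoeff_le_two _ _) (cosCoeff_nonneg _ _)
    (cosCoeff_le_two _ _)

lemma sum_centeredDiff_mul {R : Type*} [Ring R] (A : Finset ℕ) (s : ℕ) (F : ℤ → R) :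
    ∑ n ∈ centeredSupport A s, centeredDiff A s n * F n =
      ∑ a ∈ A, (F (a - s) + F (-a - s) - (F (a + s) + F (-a + s))) := by
  set L := A.sup id + s
  have hadd : ∀ n : ℤ, cosCoeff A (n + s) ≠ 0 → n ∈ Icc (-(L : ℤ)) L := fun n hn =>
    mem_Icc_of_cosCoeff_add_ne_zero le_rfl hn
  have hsub : ∀ n : ℤ, cosCoeff A (n + -s) ≠ 0 → n ∈ Icc (-(L : ℤ)) L := fun n hn => by
    rw [← cosCoeff_neg, neg_add, neg_neg] at hn
    have hmem := mem_Icc.1 (hadd _ hn)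
    exact mem_Icc.2 ⟨by omega, by omega⟩
  have hsupp : centeredSupport A s ⊆ Icc (-(L : ℤ)) L := fun n hn => by
    by_contra hout
    refine mem_centeredSupport.1 hn ?_
    rw [centeredDiff, sub_eq_add_neg n, not_ne_iff.1 (mt (hadd n) hout),
      not_ne_iff.1 (mt (hsub n) hout), sub_zero]
  calc ∑ n ∈ centeredSupport A s, (centeredDiff A s n : R) * F n
      = ∑ n ∈ Icc (-(L : ℤ)) L, (centeredDiff A s n : R) * F n :=
        sum_subset hsupp fun n _ hn => by
          rw [not_ne_iff.1 (mt mem_centeredSupport.2 hn), Int.cast_zero, zero_mul]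
    _ = ∑ n ∈ Icc (-(L : ℤ)) L, cosCoeff A (n + s) * F n -
          ∑ n ∈ Icc (-(L : ℤ)) L, cosCoeff A (n + -s) * F n := by
        rw [← sum_sub_distrib]
        exact sum_congr rfl fun n _ => by
          rw [← sub_mul, ← Int.cast_sub, ← sub_eq_add_neg, centeredDiff]
    _ = _ := by
        rw [sum_cosCoeff_add_mul hadd, sum_cosCoeff_add_mul hsub, ← sum_sub_distrib]
        simp only [sub_neg_eq_add]

lemma sinSum_centeredDiff (A : Finset ℕ) (s : ℕ) (t : ℝ) :
    sinSum (centeredSupport A s) (fun n => centeredDiff A s n) t =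
      -4 * cosSum A t * sin (s * t) := by
  rw [sinSum, sum_centeredDiff_mul A s fun n : ℤ => sin (n * t), cosSum, mul_sum, sum_mul]
  refine sum_congr rfl fun a _ => ?_
  push_cast
  simp only [sub_mul, add_mul, neg_mul, sin_add, sin_sub, cos_neg, sin_neg]
  ring

lemma sum_centeredDiff_lt_pos {a : ℕ} (ha : a ∈ A) (hs : 0 < s) :
    0 < ∑ n ∈ centeredSupport A s with n < (a : ℤ), centeredDiff A s n := by
  have hsum := sum_centeredDiff_mul A s fun n => if n < (a : ℤ) then (1 : ℤ) else 0
  simp only [Int.cast_id, mul_ite, mul_one, mul_zero, ← sum_filter] at hsum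
  rw [hsum]
  refine sum_pos' (fun b _ => ?_) ⟨a, ha, ?_⟩ <;> split_ifs <;> omega

end CenteredDiff

lemma sum_eq_zero_of_forall_sum_class_eq_zero {α M : Type*} [AddCommMonoid M]
    {r : α → α → Prop} [DecidableRel r] {T T' : Finset α} {Y : α → M} (hrefl : ∀ n ∈ T, r n n)
    (hsymm : ∀ n ∈ T, ∀ m ∈ T, r n m → r m n)
    (htrans : ∀ n ∈ T, ∀ m ∈ T, ∀ l ∈ T, r n m → r m l → r n l)
    (hz : ∀ m ∈ T, ∑ n ∈ T with r n m, Y n = 0) (hsub : T' ⊆ T)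
    (hclosed : ∀ n ∈ T, ∀ m ∈ T', r n m → n ∈ T') : ∑ n ∈ T', Y n = 0 := by
  classical
  let cls : α → Finset α := fun m => {n ∈ T | r n m}
  rw [← sum_fiberwise_of_maps_to (g := cls) (t := T'.image cls) fun n => mem_image_of_mem cls]
  refine sum_eq_zero fun C hC => ?_
  obtain ⟨m, hm, rfl⟩ := mem_image.1 hC
  suffices h : {n ∈ T' | cls n = cls m} = {n ∈ T | r n m} by rw [h, hz m (hsub hm)]
  ext n
  simp only [mem_filter, cls]
  refine ⟨fun ⟨hn, hnm⟩ => ?_, fun ⟨hn, hnm⟩ => ⟨hclosed n hn m hm hnm, ?_⟩⟩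
  · exact mem_filter.1 (Finset.ext_iff.1 hnm n |>.1 (mem_filter.2 ⟨hsub hn, hrefl n (hsub hn)⟩))
  · refine filter_congr fun l hl => ⟨fun h => htrans l hl n hn m (hsub hm) h hnm, fun h => ?_⟩
    exact htrans l hl m (hsub hm) n hn h (hsymm n hn m (hsub hm) hnm)

lemma card_le_of_sum_near_eq_zero {A : Finset ℕ} {s : ℕ} (hs : 0 < s) {t₁ t₂ : ℝ} (h₁ : 0 < t₁)
    (h₁₂ : 2 * t₁ < t₂) (hgap : ∀ n ∈ centeredSupport A s, ∀ m ∈ centeredSupport A s,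
      |((n - m : ℤ) : ℝ)| * t₂ ≤ 1 ∨ 1 ≤ |((n - m : ℤ) : ℝ)| * t₁)
    (hz : ∀ m ∈ centeredSupport A s,
      ∑ n ∈ centeredSupport A s with |((n - m : ℤ) : ℝ)| * t₂ ≤ 1, centeredDiff A s n = 0) :
    (#A : ℝ) ≤ #(centeredSupport A s) * (2 / t₂ + 1) := by
  have ht₂ : 0 < t₂ := by linarith
  have hnear : ∀ a ∈ A, ∃ n ∈ centeredSupport A s, |((n - a : ℤ) : ℝ)| * t₂ ≤ 1 := by
    intro a ha
    by_contra! hfar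
    refine (sum_centeredDiff_lt_pos ha hs).ne' ?_
    refine sum_eq_zero_of_forall_sum_class_eq_zero
      (r := fun n m : ℤ => |((n - m : ℤ) : ℝ)| * t₂ ≤ 1) (fun n _ => ?_) (fun n _ m _ h => ?_)
      (fun n hn m _ l hl hnm hml => ?_) hz (filter_subset _ _) fun n hn m hm hnm => ?_
    · simp
    · rwa [← abs_neg, ← Int.cast_neg, neg_sub]
    · refine (hgap n hn l hl).resolve_right fun hnl => ?_
      have htri := abs_sub_le (n : ℝ) m l
      have hpos := pos_of_mul_pos_left (zero_lt_one.trans_le hnl) h₁.le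
      push_cast at hnl hnm hml hpos
      nlinarith
    · rw [mem_filter] at hm ⊢
      refine ⟨hn, lt_of_not_ge fun han => (hfar n hn).not_ge (hnm.trans' ?_)⟩
      gcongr ?_ * t₂
      exact_mod_cast abs_le_abs_of_nonneg (sub_nonneg.2 han) (by omega)
  have hcard := card_le_card_mul_of_forall_exists_mem_Icc (S := A.map Nat.castEmbedding)
    (B := centeredSupport A s) (l := ⌊1 / t₂⌋₊) (r := ⌊1 / t₂⌋₊) fun w hw => by
      obtain ⟨a, ha, rfl⟩ := mem_map.1 hw
      obtain ⟨n, hn, hna⟩ := hnear a ha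
      rw [← le_div_iff₀ ht₂, ← Int.cast_abs, Int.abs_eq_natAbs, Int.cast_natCast] at hna
      have hfloor := Nat.le_floor hna
      rw [Nat.castEmbedding_apply]
      exact ⟨n, hn, mem_Icc.2 ⟨by omega, by omega⟩⟩
  rw [card_map] at hcard
  calc (#A : ℝ) ≤ #(centeredSupport A s) * (⌊1 / t₂⌋₊ + ⌊1 / t₂⌋₊ + 1) := by exact_mod_cast hcard
    _ ≤ #(centeredSupport A s) * (1 / t₂ + 1 / t₂ + 1) := by
        have hfloor := Nat.floor_le (one_div_pos.2 ht₂).le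
        gcongr
    _ = _ := by ring

lemma card_le_of_cosSum_ne_zero {A : Finset ℕ} {s : ℕ} (hs : 0 < s) {t₁ t₂ : ℝ} (h₁ : 0 < t₁)
    (h₁₂ : 2 * t₁ < t₂) (hst₂ : s * t₂ ≤ 1) (hA : ∀ t ∈ Set.Ioo t₁ t₂, cosSum A t ≠ 0)
    (hgap : ∀ n ∈ centeredSupport A s, ∀ m ∈ centeredSupport A s,
      |((n - m : ℤ) : ℝ)| * t₂ ≤ 1 ∨ 1 ≤ |((n - m : ℤ) : ℝ)| * t₁)
    (hlog : 12 * #(centeredSupport A s) < log (t₂ / t₁)) :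
    (#A : ℝ) ≤ #(centeredSupport A s) * (2 / t₂ + 1) := by
  have hne : ∀ t ∈ Set.Ioo t₁ t₂,
      sinSum (centeredSupport A s) (fun n => centeredDiff A s n) t ≠ 0 := fun t ht => by
    have ht0 : 0 < t := h₁.trans ht.1
    have hst : s * t < 1 := (mul_lt_mul_of_pos_left ht.2 (by positivity)).trans_le hst₂
    rw [sinSum_centeredDiff]
    exact mul_ne_zero (mul_ne_zero (by norm_num) (hA t ht))
      (sin_pos_of_pos_of_lt_pi (by positivity) (by linarith [pi_gt_three])).ne'
  obtain ⟨σ, hσ, hsign⟩ := exists_forall_abs_eq_mul (by linarith) (by fun_prop) hne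
  have hneg : ∀ n ∈ centeredSupport A s, -n ∈ centeredSupport A s := fun n hn => by
    rw [mem_centeredSupport, centeredDiff_neg]
    exact neg_ne_zero.2 (mem_centeredSupport.1 hn)
  refine card_le_of_sum_near_eq_zero hs h₁ h₁₂ hgap fun m hm =>
    sum_near_eq_zero_of_sinSum_sign (b := 2) h₁ (by linarith) (abs_centeredDiff_le_two A s) hneg
      (centeredDiff_neg A s) hgap hσ hsign ?_ hm
  norm_num [hlog]

lemma exists_le_card_forall_notMem_Ioo {α : Type*} [PartialOrder α] {x : ℕ → α} (hx : Antitone x)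
    (B : Finset α) : ∃ i ≤ #B, ∀ b ∈ B, b ∉ Set.Ioo (x (i + 1)) (x i) := by
  by_contra! hcon
  have hle := card_le_card_of_forall_subsingleton (s := range (#B + 1)) (t := B)
    (fun i b => b ∈ Set.Ioo (x (i + 1)) (x i))
    (fun i hi => hcon i (Nat.lt_succ_iff.1 (mem_range.1 hi)))
    fun b _ i hi j hj => by_contra fun hij =>
      Set.disjoint_left.1 (hx.pairwise_disjoint_on_Ioo_succ hij) hi.2 hj.2
  rw [card_range] at hle
  omega

lemma exists_scale_gap (Z : Finset ℝ) (T : Finset ℤ) {τ ρ : ℝ} (hτ : 0 < τ) (hρ : 1 ≤ ρ) :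
    ∃ i ≤ #Z + #T ^ 2, (∀ z ∈ Z, z ∉ Set.Ioo (τ / ρ ^ (i + 1)) (τ / ρ ^ i)) ∧
      ∀ n ∈ T, ∀ m ∈ T, |((n - m : ℤ) : ℝ)| * (τ / ρ ^ i) ≤ 1 ∨
        1 ≤ |((n - m : ℤ) : ℝ)| * (τ / ρ ^ (i + 1)) := by
  have : 0 < ρ := zero_lt_one.trans_le hρ
  have hx : Antitone fun i : ℕ => τ / ρ ^ i := fun i j hij => by
    dsimp only
    gcongr
  obtain ⟨i, hi, hfree⟩ := exists_le_card_forall_notMem_Ioo hx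
    (Z ∪ (T ×ˢ T).image fun x => 1 / |((x.1 - x.2 : ℤ) : ℝ)|)
  refine ⟨i, hi.trans ((card_union_le _ _).trans (add_le_add_right (card_image_le.trans_eq ?_) _)),
    fun z hz => hfree z (mem_union_left _ hz), fun n hn m hm => ?_⟩
  · rw [card_product, sq]
  · by_contra! hmid
    have hpos : 0 < |((n - m : ℤ) : ℝ)| :=
      pos_of_mul_pos_left (zero_lt_one.trans hmid.1) (by positivity)
    refine hfree _ (mem_union_right _ (mem_image_of_mem _ (mk_mem_product hn hm))) ⟨?_, ?_⟩
    · exact (lt_div_iff₀' hpos).2 hmid.2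
    · exact (div_lt_iff₀' hpos).2 hmid.1

theorem card_le_of_forall_zero_mem {A : Finset ℕ} {Z : Finset ℝ}
    (hZ : ∀ θ ∈ Set.Ioo 0 π, cosSum A θ = 0 → θ ∈ Z) {s : ℕ} (hs : 0 < s) :
    (#A : ℝ) ≤ #(jumps A (2 * s)) * (2 * s * rexp ((12 * #(jumps A (2 * s)) + 1) *
      (#Z + #(jumps A (2 * s)) ^ 2)) + 1) := by
  rw [← card_centeredSupport]
  set T := centeredSupport A s
  set ρ := rexp (12 * #T + 1) with hρ
  have hρ2 : 2 < ρ := by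
    have h := add_one_lt_exp (x := 12 * (#T : ℝ) + 1) (by positivity)
    linarith [(#T).cast_nonneg (α := ℝ)]
  have hsR : (1 : ℝ) ≤ s := by exact_mod_cast hs
  obtain ⟨i, hi, hfree, hgap⟩ := exists_scale_gap Z T (one_div_pos.2 (by positivity : 0 < (s : ℝ)))
    (one_le_two.trans hρ2.le)
  set t₂ := 1 / (s : ℝ) / ρ ^ i with ht₂
  set t₁ := 1 / (s : ℝ) / ρ ^ (i + 1) with ht₁
  have h₁ : 0 < t₁ := by positivity
  have hratio : t₂ = ρ * t₁ := by
    rw [ht₁, ht₂, pow_succ]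
    field_simp
  have hst₂ : s * t₂ ≤ 1 := by
    rw [ht₂, div_div, mul_one_div, div_le_one (by positivity)]
    exact le_mul_of_one_le_right (by positivity) (one_le_pow₀ (by linarith))
  have hA : ∀ t ∈ Set.Ioo t₁ t₂, cosSum A t ≠ 0 := fun t ht h0 => by
    have htπ : t < π := by nlinarith [pi_gt_three, h₁.trans ht.1, ht.2]
    exact hfree t (hZ t ⟨h₁.trans ht.1, htπ⟩ h0) ht
  have hlog : 12 * #T < log (t₂ / t₁) := by
    rw [hratio, mul_div_cancel_right₀ _ h₁.ne', hρ, log_exp]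
    exact lt_add_one _
  calc (#A : ℝ) ≤ #T * (2 / t₂ + 1) :=
        card_le_of_cosSum_ne_zero hs h₁ (by nlinarith) hst₂ hA hgap hlog
    _ = #T * (2 * s * ρ ^ i + 1) := by
        rw [ht₂]
        field_simp
    _ ≤ #T * (2 * s * rexp ((12 * #T + 1) * (#Z + #T ^ 2)) + 1) := by
        rw [hρ, ← exp_nat_mul, mul_comm (i : ℝ)]
        gcongr
        exact_mod_cast hi

/-! ### Numerical bounds -/

lemma factorial_le_two_pow (n : ℕ) : n ! ≤ 2 ^ (n * n) :=
  calc n ! ≤ n ^ n := n.factorial_le_pow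
    _ ≤ (2 ^ n) ^ n := Nat.pow_le_pow_left Nat.lt_two_pow_self.le n
    _ = 2 ^ (n * n) := (pow_mul ..).symm

lemma cramerBound_two_le (n : ℕ) : cramerBound n 2 ≤ 2 ^ (n + (n * n + n)) := by
  rw [cramerBound, pow_add, pow_add]
  gcongr
  · exact Nat.lt_two_pow_self.le
  · exact factorial_le_two_pow n

lemma windowLength_le_two_pow {m p e : ℕ} (hm : 3 * (m + 1) ≤ e) (hp : p ≤ 2 ^ e) :
    windowLength m p ≤ 2 ^ (e + 3) := by
  have h5 : 5 ^ (m + 1) ≤ 2 ^ e :=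
    calc 5 ^ (m + 1) ≤ (2 ^ 3) ^ (m + 1) := Nat.pow_le_pow_left (by norm_num) _
      _ = 2 ^ (3 * (m + 1)) := (pow_mul ..).symm
      _ ≤ 2 ^ e := Nat.pow_le_pow_right two_pos hm
  have he : e < 2 ^ e := Nat.lt_two_pow_self
  rw [windowLength, pow_add 2 e]
  omega

lemma jumpBound_le_two_pow {m M p e : ℕ} (he : 8 ≤ e) (hM : 0 < M) (hMe : M ≤ 2 ^ e)
    (hD : cramerBound (m + 1) 2 ≤ 2 ^ e) (hw : windowLength m p ≤ 2 ^ e) :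
    jumpBound m M p ≤ 2 ^ 2 ^ (22 * e) := by
  have hcount : blockCount m M ≤ 2 ^ (5 * e) := by
    have hpos : 0 < M ^ 2 * cramerBound (m + 1) 2 ^ 2 :=
      Nat.mul_pos (pow_pos hM 2) (pow_pos (cramerBound_pos m.succ_pos one_le_two) 2)
    calc blockCount m M ≤ 2 ^ 8 * (M ^ 2 * cramerBound (m + 1) 2 ^ 2) := by
          rw [blockCount]
          linarith
      _ ≤ 2 ^ e * ((2 ^ e) ^ 2 * (2 ^ e) ^ 2) := by
          gcongr
          norm_num
      _ = 2 ^ (5 * e) := by ring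
  have hratio : blockRatio m M p ≤ 2 ^ (16 * e) :=
    calc blockRatio m M p ≤ 2 ^ e * (2 ^ (5 * e)) ^ 2 * (2 ^ e) ^ 2 * 2 ^ e * (2 ^ e) ^ 2 := by
          have h64 : 64 ≤ 2 ^ e := (by norm_num : 64 ≤ 2 ^ 8).trans
            (Nat.pow_le_pow_right two_pos he)
          rw [blockRatio]
          gcongr
      _ = 2 ^ (16 * e) := by ring
  calc jumpBound m M p ≤ (2 ^ (16 * e)) ^ 2 ^ (5 * e) * 2 ^ e := by
        rw [jumpBound]
        gcongr
        exact Nat.one_le_two_pow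
    _ = 2 ^ (16 * e * 2 ^ (5 * e) + e) := by rw [pow_add, pow_mul 2 (16 * e)]
    _ ≤ 2 ^ (2 ^ (17 * e) * 2 ^ (5 * e)) := by
        refine Nat.pow_le_pow_right two_pos ?_
        calc 16 * e * 2 ^ (5 * e) + e ≤ 17 * e * 2 ^ (5 * e) := by
              nlinarith [Nat.one_le_two_pow (n := 5 * e)]
          _ ≤ 2 ^ (17 * e) * 2 ^ (5 * e) := by
              gcongr
              exact Nat.lt_two_pow_self.le
    _ = 2 ^ 2 ^ (22 * e) := by
        rw [← pow_add]
        ring_nf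

lemma exp_natCast_le_two_pow (n : ℕ) : rexp n ≤ 2 ^ (2 * n) := by
  rw [← mul_one (n : ℝ), exp_nat_mul, pow_mul]
  gcongr
  linarith [exp_one_lt_d9]

lemma le_two_pow_of_le_mul_exp {N J s z Q : ℕ} (hQ : 1 ≤ Q) (hJ : J ≤ Q) (hs : s ≤ Q) (hz : z ≤ Q)
    (h : (N : ℝ) ≤ J * (2 * s * rexp ((12 * J + 1) * (z + J ^ 2)) + 1)) :
    N ≤ 2 ^ (2 ^ 6 * Q ^ 3) := by
  have hexponent : (12 * J + 1) * (z + J ^ 2) ≤ 26 * Q ^ 3 :=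
    calc (12 * J + 1) * (z + J ^ 2) ≤ (12 * Q + Q) * (Q * Q + Q ^ 2) := by
          gcongr
          exact hz.trans (Nat.le_mul_of_pos_left Q hQ)
      _ = 26 * Q ^ 3 := by ring
  have hexp : rexp ((12 * J + 1) * (z + J ^ 2)) ≤ 2 ^ (52 * Q ^ 3) :=
    calc rexp ((12 * J + 1) * (z + J ^ 2)) ≤ rexp (26 * Q ^ 3 : ℕ) :=
          exp_le_exp.2 (by exact_mod_cast hexponent)
      _ ≤ 2 ^ (2 * (26 * Q ^ 3)) := exp_natCast_le_two_pow _
      _ = 2 ^ (52 * Q ^ 3) := by ring_nf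
  have hN : N ≤ Q * (2 * Q * 2 ^ (52 * Q ^ 3) + 1) := by
    have hR : (N : ℝ) ≤ Q * (2 * Q * 2 ^ (52 * Q ^ 3) + 1) := h.trans (by gcongr)
    exact_mod_cast hR
  have hQ2 : Q ≤ 2 ^ Q := Nat.lt_two_pow_self.le
  calc N ≤ Q * (2 * Q * 2 ^ (52 * Q ^ 3) + 2 * Q * 2 ^ (52 * Q ^ 3)) :=
        hN.trans (by gcongr; exact Nat.mul_pos (by omega) (by positivity))
    _ ≤ 2 ^ Q * (2 * 2 ^ Q * 2 ^ (52 * Q ^ 3) + 2 * 2 ^ Q * 2 ^ (52 * Q ^ 3)) := by gcongr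
    _ = 2 ^ (2 * Q + 2 + 52 * Q ^ 3) := by ring
    _ ≤ 2 ^ (2 ^ 6 * Q ^ 3) := by
        have hQ3 : Q ≤ Q ^ 3 := Nat.le_self_pow three_ne_zero Q
        exact Nat.pow_le_pow_right two_pos (by omega)

lemma logb_logb_logb_le {N e : ℕ} (hN : 2 < N) (h : N ≤ 2 ^ 2 ^ 2 ^ e) :
    logb 2 (logb 2 (logb 2 N)) ≤ e := by
  have hlogb : ∀ {x : ℝ} {n : ℕ}, 0 < x → x ≤ 2 ^ n → logb 2 x ≤ n := fun hx hxn => by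
    rwa [logb_le_iff_le_rpow one_lt_two hx, rpow_natCast]
  have h₁ : 1 < logb 2 N := by
    rw [lt_logb_iff_rpow_lt one_lt_two (by positivity), rpow_one]
    exact_mod_cast hN
  refine hlogb (logb_pos one_lt_two h₁) ?_
  exact_mod_cast hlogb (zero_lt_one.trans h₁)
    (by exact_mod_cast hlogb (by positivity : (0 : ℝ) < N) (by exact_mod_cast h))

lemma rpow_one_div_four_le {x r : ℝ} (hx : 50 ^ 4 ≤ x) (hr : 0 ≤ r) (hxr : x ≤ 444 * (r + 1) ^ 2) :
    x ^ ((1 : ℝ) / 4) ≤ r := by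
  set y := x ^ ((1 : ℝ) / 4) with hy
  have hx0 : 0 ≤ x := hx.trans' (by norm_num)
  have hyx : y ^ 4 = x := by
    rw [hy, ← rpow_natCast, ← rpow_mul hx0]
    norm_num
  have hy50 : 50 ≤ y := le_of_pow_le_pow_left₀ four_ne_zero (by positivity) (hx.trans_eq hyx.symm)
  by_contra! hlt
  have hsq : (r + 1) ^ 2 ≤ (2 * y) ^ 2 := by
    gcongr
    linarith
  nlinarith [mul_self_nonneg y]

/-! ### The lower bound for the number of zeros -/

lemma exists_card_jumps_le {A : Finset ℕ} (hA : A.Nonempty) {Z : Finset ℝ}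
    (hZ : ∀ θ ∈ Set.Ioo 0 π, cosSum A θ = 0 → θ ∈ Z) :
    ∃ s, 0 < s ∧ s ≤ 2 ^ 2 ^ (440 * (#Z + 1) ^ 2) ∧
      #(jumps A (2 * s)) ≤ 2 ^ 2 ^ (440 * (#Z + 1) ^ 2) := by
  obtain ⟨T, hTZ, hT, hint⟩ := exists_signPoly_integral_abs_cosSum_mul_le hA hZ
  set k := #T
  set E := (#Z + 1) ^ 2 with hE
  obtain ⟨hE1, hkE, hkkE⟩ : 1 ≤ E ∧ k ≤ E ∧ k * k ≤ E := by
    rw [hE]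
    exact ⟨by nlinarith, by nlinarith, by nlinarith⟩
  have hs : (4 * k)! ≤ 2 ^ (16 * E) :=
    (factorial_le_two_pow _).trans (Nat.pow_le_pow_right two_pos (by linarith))
  have hpow : (4 ^ k : ℕ) ≤ 2 ^ (20 * E) := by
    rw [show 4 = 2 ^ 2 by rfl, ← pow_mul]
    exact Nat.pow_le_pow_right two_pos (by linarith)
  have hcramer : cramerBound (2 * k + 1) 2 ≤ 2 ^ (20 * E) :=
    (cramerBound_two_le _).trans (Nat.pow_le_pow_right two_pos (by linarith))
  have hwindow : windowLength (2 * k) (2 * (4 * k)!) ≤ 2 ^ (20 * E) := by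
    refine (windowLength_le_two_pow (e := 17 * E) (by linarith) ?_).trans
      (Nat.pow_le_pow_right two_pos (by linarith))
    calc 2 * (4 * k)! ≤ 2 ^ E * 2 ^ (16 * E) := by
          gcongr
          exact Nat.le_self_pow (by omega) 2
      _ = 2 ^ (17 * E) := by ring
  refine ⟨(4 * k)!, Nat.factorial_pos _, hs.trans (Nat.pow_le_pow_right two_pos ?_), ?_⟩
  · exact Nat.lt_two_pow_self.le.trans (Nat.pow_le_pow_right two_pos (by linarith))
  · have hjumps := card_jumps_le (A := A) (p := 2 * (4 * k)!) (M := 4 ^ k) (monic_signPoly T)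
      (by rw [natDegree_signPoly, ← mul_assoc]; exact dvd_mul_left _ _) (by positivity)
      (by exact_mod_cast sum_abs_signPoly_le hT) (by exact_mod_cast hint)
    rw [natDegree_signPoly] at hjumps
    refine hjumps.trans ((jumpBound_le_two_pow (by omega) (by positivity) hpow hcramer
      hwindow).trans_eq ?_)
    ring_nf

theorem card_le_two_pow_of_forall_zero_mem {A : Finset ℕ} (hA : A.Nonempty) {Z : Finset ℝ}
    (hZ : ∀ θ ∈ Set.Ioo 0 π, cosSum A θ = 0 → θ ∈ Z) :
    #A ≤ 2 ^ 2 ^ 2 ^ (444 * (#Z + 1) ^ 2) := by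
  obtain ⟨s, hs, hsQ, hjQ⟩ := exists_card_jumps_le hA hZ
  set E := (#Z + 1) ^ 2 with hE
  have hZQ : #Z ≤ 2 ^ 2 ^ (440 * E) := by
    have hZE : #Z ≤ 440 * E := by
      rw [hE]
      nlinarith
    exact hZE.trans (Nat.lt_two_pow_self.le.trans Nat.lt_two_pow_self.le)
  refine (le_two_pow_of_le_mul_exp Nat.one_le_two_pow hjQ hsQ hZQ
    (card_le_of_forall_zero_mem hZ hs)).trans (Nat.pow_le_pow_right two_pos ?_)
  have hpow : ∀ y : ℕ, 6 + 2 ^ y * 3 ≤ 2 ^ (y + 4) := fun y => by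
    linarith [pow_add 2 y 4, Nat.one_le_two_pow (n := y)]
  rw [← pow_mul, ← pow_add]
  exact Nat.pow_le_pow_right two_pos
    ((hpow _).trans (Nat.pow_le_pow_right two_pos (by nlinarith)))

theorem stmt18 : ∃ N₀ : ℕ, ∀ A : Finset ℕ, N₀ ≤ A.card →
    ∃ S : Finset ℝ,
      (Real.logb 2 (Real.logb 2 (Real.logb 2 (A.card : ℝ)))) ^ ((1 : ℝ) / 4) ≤ S.card ∧
      ∀ θ ∈ S, θ ∈ Set.Icc 0 (2 * Real.pi) ∧ ∑ a ∈ A, Real.cos (a * θ) = 0 := by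
  have hlog := tendsto_logb_atTop one_lt_two
  have hlim := hlog.comp (hlog.comp (hlog.comp tendsto_natCast_atTop_atTop))
  obtain ⟨N₀, hN₀⟩ := Filter.eventually_atTop.1
    ((hlim.eventually_ge_atTop (50 ^ 4)).and (Filter.eventually_gt_atTop 2))
  refine ⟨N₀, fun A hA => ?_⟩
  obtain ⟨hlarge, hcard⟩ := hN₀ _ hA
  have hne : A.Nonempty := card_pos.1 (by omega)
  set Z := (finite_setOf_cosSum_eq_zero hne).toFinset with hZ
  have hbound := card_le_two_pow_of_forall_zero_mem hne (Z := Z) fun θ hθ h0 => by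
    rw [hZ, Set.Finite.mem_toFinset]
    exact ⟨hθ, h0⟩
  refine ⟨Z, rpow_one_div_four_le hlarge (Nat.cast_nonneg _) ?_, fun θ hθ => ?_⟩
  · exact_mod_cast logb_logb_logb_le hcard hbound
  · obtain ⟨⟨h0, hπ⟩, hzero⟩ := (Set.Finite.mem_toFinset _).1 hθ
    exact ⟨⟨h0.le, by linarith⟩, hzero⟩
end
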